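/- Let n ≥ 2, 1 ≤ j ≤ n−1, 0 < D < 1 and r ≥ 1. Then, as p → ∞ along primes, the proportion of subgroups H ∈ H_{p,j}(n) for which #{x ∈ ℤⁿ : ‖x‖∞ ≤ D·p^{j/n} and (x mod p) ∈ H} = r tends to c_{n,r} = μ(Ω̃_{n,r}). -/

import Mathlib

open Matrix MeasureTheory

noncomputable section

/-- The subgroup `Γ = SL_n(ℤ)` inside `G = SL_n(ℝ)`, realized as the range of the map
induced by the ring homomorphism `ℤ → ℝ`. -/
def Gamma (n : ℕ) : Subgroup (Matrix.SpecialLinearGroup (Fin n) ℝ) :=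
  (Matrix.SpecialLinearGroup.map (Int.castRingHom ℝ)).range

/-- The homogeneous space `X = Γ\G = SL_n(ℤ)\SL_n(ℝ)` (right cosets `Γg`). -/
def XSpace (n : ℕ) : Type :=
  Quotient (QuotientGroup.rightRel (Gamma n))

/-- The topology on `SL_n(ℝ)` induced from the space of matrices. -/
instance (n : ℕ) : TopologicalSpace (Matrix.SpecialLinearGroup (Fin n) ℝ) :=
  TopologicalSpace.induced (fun g => (g : Matrix (Fin n) (Fin n) ℝ)) inferInstance

/-- The quotient topology on `X = Γ\G`. -/
instance (n : ℕ) : TopologicalSpace (XSpace n) :=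
  instTopologicalSpaceQuotient

/-- The Borel σ-algebra on `X`. -/
instance (n : ℕ) : MeasurableSpace (XSpace n) := borel _

instance (n : ℕ) : BorelSpace (XSpace n) := ⟨rfl⟩

/-- Right translation `Γx ↦ Γxg` of `G` on `X = Γ\G`. -/
def rightTranslate (n : ℕ) (g : Matrix.SpecialLinearGroup (Fin n) ℝ) :
    XSpace n → XSpace n :=
  Quotient.map' (fun x => x * g) (fun x y hxy => by
    simp only [QuotientGroup.rightRel_apply] at hxy ⊢
    simpa [mul_assoc] using hxy)

/-- `Ω̃_{n,r}` : the set of cosets `Γg ∈ X` such that the lattice `ℤⁿg` contains exactly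
`r` points `vg` (for `v ∈ ℤⁿ`) of sup-norm at most `D`. -/
def OmegaTilde (n : ℕ) (D : ℝ) (r : ℕ) : Set (XSpace n) :=
  {x | ∃ g : Matrix.SpecialLinearGroup (Fin n) ℝ,
    (Quotient.mk'' g : XSpace n) = x ∧
    Set.ncard {v : Fin n → ℤ |
      ‖Matrix.vecMul (fun i => (v i : ℝ)) (g : Matrix (Fin n) (Fin n) ℝ)‖ ≤ D} = r}


/-- `H_{N,j}(n)`: the set of subgroups of `(ℤ/Nℤ)ⁿ` that are solution sets of a system
`Ax ≡ 0 (mod N)` of `j` linear congruences in `n` variables whose associated map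
`(ℤ/Nℤ)ⁿ → (ℤ/Nℤ)ʲ` is surjective. -/
def congruenceSet (N n j : ℕ) : Set (AddSubgroup (Fin n → ZMod N)) :=
  {H | ∃ A : Matrix (Fin j) (Fin n) (ZMod N),
    (Function.Surjective fun x : Fin n → ZMod N => A.mulVec x) ∧
    (H : Set (Fin n → ZMod N)) = {x | A.mulVec x = 0}}

/-!
Rescaling by `p ^ (-j / n)` turns `{a ∈ ℤⁿ : a mod p ∈ H}` into a unimodular lattice, and this
identifies `H_{p,j}(n)` with the Hecke points `Γ\Γ d Γ` of `X`, where
`d = p ^ (-j / n) diag(p, …, p, 1, …, 1)` with `j` entries `p`. Short solutions become lattice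
vectors of norm at most `D`, so the theorem says that the Hecke points equidistribute, tested on
the set `Ω̃_{n,r}`.

Let `u(t)` be the group of unipotents supported in one column, and let `e` be integral. A continuous
length function on `SL_n(ℝ)` that vanishes on one elementary unipotent vanishes identically
(Mautner's phenomenon), so `u(e)` acts ergodically on `X`, and Birkhoff averages along `u(e)`
converge in `L¹(μ)` by the mean ergodic theorem. Such averages may be inserted into the integral of
a Hecke average over the torus `{Γu(t)}`, which is invariant under `u(e)`. To bound the result by an
`L¹(μ)` norm, the torus is compared with its translates by a small Bruhat box. By the adjointness of
Hecke operators this leaves the Hecke averages of the indicator of the box; they are dominated by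
those of a Siegel transform, which are computed by counting the `H` that contain a given nonzero
vector. Hence the Hecke averages equidistribute on average over the torus.

Each point `Γu(t)` is fixed by `u(e)`, so its Hecke average is also a Hecke average of Birkhoff
averages. These are close to the mean on most of the torus, in particular at some `t` near `0`, and
uniform continuity passes from there to `t = 0`, that is, to the Hecke points themselves.

The test functions are truncations of the `r`-th smallest norm of a lattice vector; the boundary
`{r-th norm = D}` is null because the Siegel transform of the indicator of a sphere has mean zero.
-/

open scoped MatrixGroups Topology

section SpecialLinearGroup

variable {n : ℕ}

instance : IsTopologicalGroup SL(n, ℝ) := SpecialLinearGroup.topologicalGroup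

lemma isClosedEmbedding_coe_SL :
    Topology.IsClosedEmbedding (fun g : SL(n, ℝ) ↦ (g : Matrix (Fin n) (Fin n) ℝ)) :=
  SpecialLinearGroup.isClosedEmbedding_val

instance : MeasurableSpace SL(n, ℝ) := borel _

instance : BorelSpace SL(n, ℝ) := ⟨rfl⟩

instance : PolishSpace SL(n, ℝ) :=
  haveI : PolishSpace (Matrix (Fin n) (Fin n) ℝ) :=
    inferInstanceAs (PolishSpace (Fin n → Fin n → ℝ))
  isClosedEmbedding_coe_SL.polishSpace

instance : LocallyCompactSpace SL(n, ℝ) :=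
  haveI : LocallyCompactSpace (Matrix (Fin n) (Fin n) ℝ) :=
    inferInstanceAs (LocallyCompactSpace (Fin n → Fin n → ℝ))
  isClosedEmbedding_coe_SL.locallyCompactSpace

lemma continuous_SL_entry (i j : Fin n) : Continuous fun g : SL(n, ℝ) ↦ g.1 i j :=
  (continuous_apply_apply i j).comp isClosedEmbedding_coe_SL.continuous

lemma continuous_SL_of_entries {α : Type*} [TopologicalSpace α] {f : α → SL(n, ℝ)}
    (h : ∀ i j, Continuous fun a ↦ (f a).1 i j) : Continuous f :=
  isClosedEmbedding_coe_SL.continuous_iff.2 (continuous_matrix h)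

lemma mem_Gamma_iff {g : SL(n, ℝ)} : g ∈ Gamma n ↔ ∀ i j, ∃ k : ℤ, (k : ℝ) = g.1 i j := by
  refine ⟨?_, fun h ↦ ?_⟩
  · rintro ⟨γ, rfl⟩ i j
    exact ⟨γ i j, rfl⟩
  choose f hf using h
  have hfg : (Matrix.of f).map (Int.castRingHom ℝ) = g.1 := by ext i j; exact hf i j
  have hdet : (Matrix.of f).det = 1 := by
    have hdet_cast := (Int.castRingHom ℝ).map_det (Matrix.of f)
    rw [RingHom.mapMatrix_apply, hfg, g.2, eq_intCast] at hdet_cast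
    exact_mod_cast hdet_cast
  exact ⟨⟨Matrix.of f, hdet⟩, Subtype.ext hfg⟩

lemma isClosed_Gamma : IsClosed (Gamma n : Set SL(n, ℝ)) := by
  have hGamma : (Gamma n : Set SL(n, ℝ)) =
      ⋂ i, ⋂ j, (fun g : SL(n, ℝ) ↦ g.1 i j) ⁻¹' Set.range ((↑) : ℤ → ℝ) := by
    ext g
    simp only [Set.mem_iInter, Set.mem_preimage, Set.mem_range, SetLike.mem_coe, mem_Gamma_iff]
  rw [hGamma]
  exact isClosed_iInter fun i ↦ isClosed_iInter fun j ↦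
    Int.isClosedEmbedding_coe_real.isClosed_range.preimage (continuous_SL_entry i j)

end SpecialLinearGroup

namespace XSpace

variable {n : ℕ}

/-- The projection `g ↦ Γg` of `SL_n(ℝ)` onto `X = Γ\SL_n(ℝ)`. -/
def mk (g : SL(n, ℝ)) : XSpace n := Quotient.mk'' g

lemma mk_surjective : Function.Surjective (mk : SL(n, ℝ) → XSpace n) := Quotient.mk''_surjective

lemma mk_eq_mk_iff {g h : SL(n, ℝ)} : mk g = mk h ↔ h * g⁻¹ ∈ Gamma n :=
  Quotient.eq''.trans QuotientGroup.rightRel_apply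

lemma mk_mul_of_mem {γ : SL(n, ℝ)} (hγ : γ ∈ Gamma n) (g : SL(n, ℝ)) : mk (γ * g) = mk g := by
  simpa [mk_eq_mk_iff] using (Gamma n).inv_mem hγ

lemma isOpenQuotientMap_mk : IsOpenQuotientMap (mk : SL(n, ℝ) → XSpace n) :=
  MulAction.isOpenQuotientMap_quotientMk (Γ := Gamma n)

lemma continuous_mk : Continuous (mk : SL(n, ℝ) → XSpace n) := isOpenQuotientMap_mk.continuous

lemma continuous_iff_comp_mk {β : Type*} [TopologicalSpace β] {f : XSpace n → β} :
    Continuous f ↔ Continuous fun g ↦ f (mk g) :=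
  isOpenQuotientMap_mk.isQuotientMap.continuous_iff

instance : SecondCountableTopology (XSpace n) :=
  isOpenQuotientMap_mk.isQuotientMap.secondCountableTopology isOpenQuotientMap_mk.isOpenMap

instance : T2Space (XSpace n) := by
  rw [t2Space_iff_of_isOpenQuotientMap isOpenQuotientMap_mk]
  have hrel : {q : SL(n, ℝ) × SL(n, ℝ) | mk q.1 = mk q.2} =
      (fun q : SL(n, ℝ) × SL(n, ℝ) ↦ q.2 * q.1⁻¹) ⁻¹' (Gamma n : Set SL(n, ℝ)) := by
    ext q
    simp [mk_eq_mk_iff]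
  rw [hrel]
  exact isClosed_Gamma.preimage (by fun_prop)

lemma measurable_iff_comp_mk {β : Type*} [MeasurableSpace β] {f : XSpace n → β} :
    Measurable f ↔ Measurable fun g ↦ f (mk g) :=
  ⟨fun h ↦ h.comp continuous_mk.measurable, fun h _ hs ↦
    (continuous_mk.measurable.measurableSet_preimage_iff_of_surjective mk_surjective).1 (h hs)⟩

end XSpace

section RightTranslate

variable {n : ℕ}

@[simp] lemma rightTranslate_mk (g h : SL(n, ℝ)) :
    rightTranslate n h (XSpace.mk g) = XSpace.mk (g * h) := rfl

@[simp] lemma rightTranslate_one (x : XSpace n) : rightTranslate n 1 x = x := by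
  obtain ⟨g, rfl⟩ := XSpace.mk_surjective x
  simp

lemma rightTranslate_mul (g h : SL(n, ℝ)) (x : XSpace n) :
    rightTranslate n (g * h) x = rightTranslate n h (rightTranslate n g x) := by
  obtain ⟨a, rfl⟩ := XSpace.mk_surjective x
  simp [mul_assoc]

lemma continuous_rightTranslate_uncurry :
    Continuous fun q : SL(n, ℝ) × XSpace n ↦ rightTranslate n q.1 q.2 := by
  have hquot : IsOpenQuotientMap (Prod.map id XSpace.mk : SL(n, ℝ) × SL(n, ℝ) → _ × XSpace n) :=
    IsOpenQuotientMap.id.prodMap XSpace.isOpenQuotientMap_mk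
  refine hquot.isQuotientMap.continuous_iff.2 (XSpace.continuous_mk.comp ?_)
  exact continuous_snd.mul continuous_fst

lemma continuous_rightTranslate (g : SL(n, ℝ)) : Continuous (rightTranslate n g) :=
  continuous_rightTranslate_uncurry.comp (.prodMk_right g)

lemma measurable_rightTranslate (g : SL(n, ℝ)) : Measurable (rightTranslate n g) :=
  (continuous_rightTranslate g).measurable

/-- Right translation, turned into a left action by inverting the group element. -/
instance : MulAction SL(n, ℝ) (XSpace n) where
  smul g x := rightTranslate n g⁻¹ x
  one_smul x := by simp [HSMul.hSMul]
  mul_smul g h x := by simp [HSMul.hSMul, rightTranslate_mul]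

lemma XSpace.smul_eq_rightTranslate (g : SL(n, ℝ)) (x : XSpace n) :
    g • x = rightTranslate n g⁻¹ x := rfl

instance : ContinuousSMul SL(n, ℝ) (XSpace n) :=
  ⟨continuous_rightTranslate_uncurry.comp (continuous_inv.prodMap continuous_id)⟩

lemma measurePreserving_rightTranslate (μ : Measure (XSpace n))
    [SMulInvariantMeasure SL(n, ℝ) (XSpace n) μ] (g : SL(n, ℝ)) :
    MeasurePreserving (rightTranslate n g) μ μ := by
  simpa [XSpace.smul_eq_rightTranslate] using measurePreserving_smul g⁻¹ μ

end RightTranslate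

section MeasureOnOrbit

variable {G Z β : Type*} [Group G] [MulAction G Z]
  [MeasurableSpace G] [MeasurableMul₂ G] [MeasurableInv G] [MeasurableSpace Z]
  [MeasurableSMul₂ G Z] [MeasurableSpace β]

/-- Fubini for `(g, z) ↦ f (g • z)`: for almost every `z` the function `f` is constant almost
everywhere along the orbit of `z`, and all these orbits coincide. -/
lemma ae_eq_const_of_ae_mem_orbit [MeasurableEq β] [MeasurableSingletonClass β]
    (κ : Measure G) [κ.IsMulLeftInvariant] [SFinite κ] [NeZero κ]
    {ν : Measure Z} [SFinite ν] {z₀ : Z} (hz₀ : ∀ᵐ z ∂ν, z ∈ MulAction.orbit G z₀)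
    {f : Z → β} (hf : Measurable f) (hinv : ∀ g : G, ∀ᵐ z ∂ν, f (g • z) = f z) :
    ∃ c, ∀ᵐ z ∂ν, f z = c := by
  rcases eq_zero_or_neZero ν with rfl | _
  · exact ⟨f z₀, by simp⟩
  have hsmul : Measurable fun q : G × Z ↦ f (q.1 • q.2) := hf.comp measurable_smul
  have hconst_on_orbit : ∀ᵐ z ∂ν, ∀ᵐ g ∂κ, f (g • z) = f z :=
    (Measure.ae_ae_comm (p := fun g z ↦ f (g • z) = f z)
      (measurableSet_eq_fun hsmul (hf.comp measurable_snd))).1 (.of_forall hinv)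
  obtain ⟨_, hz₁, g₁, rfl⟩ := (hconst_on_orbit.and hz₀).exists
  set c := f (g₁ • z₀)
  have hc : ∀ h : G, ∀ᵐ g ∂κ, f (g • h • z₀) = c := fun h ↦ by
    filter_upwards [(quasiMeasurePreserving_mul_right κ (h * g₁⁻¹)).ae hz₁] with g hg
    rwa [← mul_smul, mul_assoc, inv_mul_cancel_right, mul_smul] at hg
  have hc' : ∀ᵐ z ∂ν, ∀ᵐ g ∂κ, f (g • z) = c := by
    filter_upwards [hz₀] with z hz
    obtain ⟨h, rfl⟩ := hz
    exact hc h
  obtain ⟨g, hg⟩ := ((Measure.ae_ae_comm (p := fun g z ↦ f (g • z) = c)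
    (hsmul (measurableSet_singleton c))).2 hc').exists
  refine ⟨c, ?_⟩
  filter_upwards [hg, hinv g] with z hz hzg
  rw [← hzg, hz]

lemma measure_eq_of_ae_mem_orbit
    (κ : Measure G) [κ.IsMulLeftInvariant] [SFinite κ] [NeZero κ]
    (ν₁ ν₂ : Measure Z) [IsProbabilityMeasure ν₁] [IsProbabilityMeasure ν₂]
    [SMulInvariantMeasure G Z ν₁] [SMulInvariantMeasure G Z ν₂] {z₀ : Z}
    (h₁ : ∀ᵐ z ∂ν₁, z ∈ MulAction.orbit G z₀) (h₂ : ∀ᵐ z ∂ν₂, z ∈ MulAction.orbit G z₀) :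
    ν₁ = ν₂ := by
  have hac : ν₁ ≪ ν₁ + ν₂ := Measure.absolutelyContinuous_of_le (Measure.le_add_right le_rfl)
  obtain ⟨c, hc⟩ := ae_eq_const_of_ae_mem_orbit κ (ae_add_measure_iff.2 ⟨h₁, h₂⟩)
    (Measure.measurable_rnDeriv ν₁ (ν₁ + ν₂)) fun g ↦
      (measurePreserving_smul g ν₁).rnDeriv_comp_aeEq (measurePreserving_smul g (ν₁ + ν₂))
  have hν₁ : ν₁ = c • (ν₁ + ν₂) := by
    rw [← withDensity_const, ← withDensity_congr_ae hc, Measure.withDensity_rnDeriv_eq _ _ hac]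
  have hc2 : c * 2 = 1 := by
    have hmass := congrArg (· Set.univ) hν₁
    simpa [mul_two] using hmass.symm
  have htwo : ν₁ + ν₁ = ν₁ + ν₂ := by
    nth_rw 1 2 [hν₁]
    rw [← add_smul, ← mul_two, hc2, one_smul]
  ext A -
  exact (ENNReal.add_right_inj (measure_ne_top ν₁ A)).1 (congrArg (· A) htwo)

end MeasureOnOrbit

/-- A finite set of points of `X` of the form `Γ\Γ d Γ`. -/
structure HeckeSet (n : ℕ) where
  /-- The representative `d` of the double coset. -/
  base : SL(n, ℝ)
  /-- The cosets `Γ d γ` with `γ ∈ Γ`. -/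
  points : Finset (XSpace n)
  mem_points_iff : ∀ x, x ∈ points ↔ ∃ γ ∈ Gamma n, x = XSpace.mk (base * γ)

namespace HeckeSet

open ProbabilityTheory
open scoped ENNReal

variable {n : ℕ} (S : HeckeSet n)

lemma points_nonempty : S.points.Nonempty :=
  ⟨XSpace.mk S.base, (S.mem_points_iff _).2 ⟨1, one_mem _, by simp⟩⟩

lemma rightTranslate_mem_points {γ : SL(n, ℝ)} (hγ : γ ∈ Gamma n) {x : XSpace n}
    (hx : x ∈ S.points) : rightTranslate n γ x ∈ S.points := by
  obtain ⟨δ, hδ, rfl⟩ := (S.mem_points_iff _).1 hx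
  exact (S.mem_points_iff _).2 ⟨δ * γ, mul_mem hδ hγ, by simp [mul_assoc]⟩

lemma sum_rightTranslate_of_mem {M : Type*} [AddCommMonoid M] (F : XSpace n → M)
    {γ : SL(n, ℝ)} (hγ : γ ∈ Gamma n) :
    ∑ y ∈ S.points, F (rightTranslate n γ y) = ∑ y ∈ S.points, F y :=
  Finset.sum_bij' (fun y _ ↦ rightTranslate n γ y) (fun y _ ↦ rightTranslate n γ⁻¹ y)
    (fun _ hy ↦ S.rightTranslate_mem_points hγ hy)
    (fun _ hy ↦ S.rightTranslate_mem_points (inv_mem hγ) hy)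
    (fun y _ ↦ by simp [← rightTranslate_mul]) (fun y _ ↦ by simp [← rightTranslate_mul])
    (fun _ _ ↦ rfl)

/-- The sum of `F` over the Hecke translates `Γ d γ g` of `x = Γg`. -/
def translateSum {M : Type*} [AddCommMonoid M] (F : XSpace n → M) (x : XSpace n) : M :=
  Quotient.liftOn' x (fun g ↦ ∑ y ∈ S.points, F (rightTranslate n g y)) fun g h hgh ↦ by
    rw [← S.sum_rightTranslate_of_mem (fun y ↦ F (rightTranslate n g y))
      (QuotientGroup.rightRel_apply.1 hgh)]
    simp [← rightTranslate_mul]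

lemma translateSum_mk {M : Type*} [AddCommMonoid M] (F : XSpace n → M) (g : SL(n, ℝ)) :
    S.translateSum F (XSpace.mk g) = ∑ y ∈ S.points, F (rightTranslate n g y) := rfl

lemma measurable_translateSum_dirac : Measurable (S.translateSum Measure.dirac) := by
  refine XSpace.measurable_iff_comp_mk.2 ?_
  simp only [translateSum_mk]
  refine Finset.measurable_fun_sum _ fun y _ ↦ Measure.measurable_dirac.comp ?_
  exact (continuous_rightTranslate_uncurry.comp (.prodMk_left y)).measurable

/-- The Hecke operator attached to a Hecke set, as a Markov kernel: `S.kernel (Γg)` is the uniform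
distribution on the Hecke translates `Γ d γ g` of `Γg`. -/
def kernel : Kernel (XSpace n) (XSpace n) where
  toFun x := (S.points.card : ℝ≥0∞)⁻¹ • S.translateSum Measure.dirac x
  measurable' := Measure.measurable_of_measurable_coe _ fun _ hA ↦
    (Measure.measurable_coe hA |>.comp S.measurable_translateSum_dirac).const_mul _

lemma kernel_mk (g : SL(n, ℝ)) : S.kernel (XSpace.mk g) =
    (S.points.card : ℝ≥0∞)⁻¹ • ∑ y ∈ S.points, Measure.dirac (rightTranslate n g y) := rfl

lemma lintegral_kernel_mk (η : XSpace n → ℝ≥0∞) (g : SL(n, ℝ)) :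
    ∫⁻ y, η y ∂S.kernel (XSpace.mk g) =
      (S.points.card : ℝ≥0∞)⁻¹ * ∑ y ∈ S.points, η (rightTranslate n g y) := by
  simp [kernel_mk, lintegral_finsetSum_measure]

lemma integral_kernel_mk (η : XSpace n → ℝ) (g : SL(n, ℝ)) :
    ∫ y, η y ∂S.kernel (XSpace.mk g) =
      (S.points.card : ℝ)⁻¹ * ∑ y ∈ S.points, η (rightTranslate n g y) := by
  rw [kernel_mk, integral_smul_measure,
    integral_finsetSum_measure fun _ _ ↦ integrable_dirac enorm_lt_top]
  simp [integral_dirac]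

lemma measureReal_kernel_mk_one {A : Set (XSpace n)} (hA : MeasurableSet A) :
    (S.kernel (XSpace.mk 1)).real A = ({x ∈ (S.points : Set (XSpace n)) | x ∈ A}.ncard : ℝ) /
      (S.points : Set (XSpace n)).ncard := by
  classical
  have hfilter : {x ∈ (S.points : Set (XSpace n)) | x ∈ A} = S.points.filter (· ∈ A) := by
    ext
    simp
  rw [← integral_indicator_one hA, integral_kernel_mk, hfilter, Set.ncard_coe_finset,
    Set.ncard_coe_finset, inv_mul_eq_div]
  simp [Set.indicator_apply]

lemma integrable_kernel (η : XSpace n → ℝ) (x : XSpace n) : Integrable η (S.kernel x) := by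
  obtain ⟨g, rfl⟩ := XSpace.mk_surjective x
  exact (integrable_finsetSum_measure.2 fun _ _ ↦ integrable_dirac enorm_lt_top).smul_measure
    (by simp [S.points_nonempty.ne_empty])

instance : IsMarkovKernel S.kernel := ⟨fun x ↦ ⟨by
  obtain ⟨g, rfl⟩ := XSpace.mk_surjective x
  rw [← lintegral_one, lintegral_kernel_mk]
  simp [ENNReal.inv_mul_cancel, S.points_nonempty.ne_empty]⟩⟩

lemma kernel_rightTranslate (g : SL(n, ℝ)) (x : XSpace n) :
    S.kernel (rightTranslate n g x) = (S.kernel x).map (rightTranslate n g) := by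
  obtain ⟨h, rfl⟩ := XSpace.mk_surjective x
  simp [kernel_mk, rightTranslate_mul, Measure.map_smul, Measure.map_dirac,
    Measure.map_finset_sum (measurable_rightTranslate g).aemeasurable]

lemma integral_kernel_rightTranslate (η : XSpace n → ℝ) (g : SL(n, ℝ)) (x : XSpace n) :
    ∫ y, η y ∂S.kernel (rightTranslate n g x) = ∫ y, η (rightTranslate n g y) ∂S.kernel x := by
  obtain ⟨h, rfl⟩ := XSpace.mk_surjective x
  simp only [rightTranslate_mk, integral_kernel_mk, rightTranslate_mul]

lemma lintegral_kernel_rightTranslate (η : XSpace n → ℝ≥0∞) (g : SL(n, ℝ)) (x : XSpace n) :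
    ∫⁻ y, η y ∂S.kernel (rightTranslate n g x) = ∫⁻ y, η (rightTranslate n g y) ∂S.kernel x := by
  obtain ⟨h, rfl⟩ := XSpace.mk_surjective x
  simp only [rightTranslate_mk, lintegral_kernel_mk, rightTranslate_mul]

lemma continuous_integral_kernel {η : XSpace n → ℝ} (hη : Continuous η) :
    Continuous fun x ↦ ∫ y, η y ∂S.kernel x := by
  refine XSpace.continuous_iff_comp_mk.2 ?_
  simp only [integral_kernel_mk]
  exact continuous_const.mul <| continuous_finsetSum _ fun y _ ↦
    hη.comp (continuous_rightTranslate_uncurry.comp (.prodMk_left y))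

lemma mk_mem_orbit_base_iff {g : SL(n, ℝ)} {y : XSpace n} :
    (XSpace.mk g, y) ∈ MulAction.orbit SL(n, ℝ) (XSpace.mk (1 : SL(n, ℝ)), XSpace.mk S.base) ↔
      ∃ c ∈ S.points, y = rightTranslate n g c := by
  simp only [MulAction.mem_orbit_iff, Prod.smul_mk, XSpace.smul_eq_rightTranslate,
    rightTranslate_mk, one_mul, Prod.mk.injEq]
  constructor
  · rintro ⟨h, hg, rfl⟩
    exact ⟨XSpace.mk (S.base * (h⁻¹ * g⁻¹)),
      (S.mem_points_iff _).2 ⟨_, XSpace.mk_eq_mk_iff.1 hg.symm, rfl⟩, by simp [mul_assoc]⟩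
  · rintro ⟨c, hc, rfl⟩
    obtain ⟨γ, hγ, rfl⟩ := (S.mem_points_iff _).1 hc
    exact ⟨(γ * g)⁻¹, by simp [XSpace.mk_mul_of_mem hγ], by simp [mul_assoc]⟩

lemma isClosed_orbit_base :
    IsClosed (MulAction.orbit SL(n, ℝ) (XSpace.mk (1 : SL(n, ℝ)), XSpace.mk S.base)) := by
  have hquot : IsOpenQuotientMap (Prod.map XSpace.mk id : SL(n, ℝ) × XSpace n → _ × XSpace n) :=
    XSpace.isOpenQuotientMap_mk.prodMap IsOpenQuotientMap.id
  rw [← hquot.isQuotientMap.isClosed_preimage]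
  have hpre : Prod.map XSpace.mk id ⁻¹'
      MulAction.orbit SL(n, ℝ) (XSpace.mk (1 : SL(n, ℝ)), XSpace.mk S.base) =
      ⋃ c ∈ S.points, {q : SL(n, ℝ) × XSpace n | q.2 = rightTranslate n q.1 c} := by
    ext ⟨g, y⟩
    simp [mk_mem_orbit_base_iff]
  rw [hpre]
  exact S.points.finite_toSet.isClosed_biUnion fun c _ ↦ isClosed_eq continuous_snd
    (continuous_rightTranslate_uncurry.comp (continuous_fst.prodMk continuous_const))

variable (μ : Measure (XSpace n)) [IsProbabilityMeasure μ]

lemma ae_compProd_kernel_mem_orbit :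
    ∀ᵐ z ∂(μ ⊗ₘ S.kernel),
      z ∈ MulAction.orbit SL(n, ℝ) (XSpace.mk (1 : SL(n, ℝ)), XSpace.mk S.base) := by
  refine (Measure.ae_compProd_iff S.isClosed_orbit_base.measurableSet).2 (.of_forall fun x ↦ ?_)
  obtain ⟨g, rfl⟩ := XSpace.mk_surjective x
  refine Measure.ae_smul_measure (ae_finsetSum_measure_iff.2 fun c hc ↦ ?_) _
  rw [ae_dirac_eq]
  exact S.mk_mem_orbit_base_iff.2 ⟨c, hc, rfl⟩

variable [SMulInvariantMeasure SL(n, ℝ) (XSpace n) μ]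

instance : SMulInvariantMeasure SL(n, ℝ) (XSpace n × XSpace n) (μ ⊗ₘ S.kernel) where
  measure_preimage_smul g A hA := by
    have hgA : MeasurableSet ((fun z ↦ g • z) ⁻¹' A) := measurable_const_smul g hA
    rw [Measure.compProd_apply hgA, Measure.compProd_apply hA,
      ← (measurePreserving_smul g μ).lintegral_comp (Kernel.measurable_kernel_prodMk_left hA)]
    refine lintegral_congr fun x ↦ ?_
    rw [XSpace.smul_eq_rightTranslate, kernel_rightTranslate,
      Measure.map_apply (measurable_rightTranslate _) (measurable_prodMk_left hA)]
    rfl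

variable {S} {S' : HeckeSet n}

lemma compProd_kernel_eq_map_swap (hS' : S'.base = S.base⁻¹) :
    μ ⊗ₘ S.kernel = (μ ⊗ₘ S'.kernel).map Prod.swap := by
  have hprob : IsProbabilityMeasure ((μ ⊗ₘ S'.kernel).map Prod.swap) :=
    Measure.isProbabilityMeasure_map measurable_swap.aemeasurable
  have hinv := smulInvariantMeasure_map (M := SL(n, ℝ)) (μ ⊗ₘ S'.kernel) Prod.swap
    (fun _ _ ↦ rfl) measurable_swap
  refine measure_eq_of_ae_mem_orbit (Measure.haar : Measure SL(n, ℝ)) _ _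
    (S.ae_compProd_kernel_mem_orbit μ)
    ((ae_map_iff measurable_swap.aemeasurable S.isClosed_orbit_base.measurableSet).2 ?_)
  filter_upwards [S'.ae_compProd_kernel_mem_orbit μ] with z hz
  obtain ⟨g, rfl⟩ := hz
  refine ⟨g * S.base, ?_⟩
  simp [hS', XSpace.smul_eq_rightTranslate]

theorem lintegral_mul_kernel (hS' : S'.base = S.base⁻¹) {F K : XSpace n → ℝ≥0∞}
    (hF : Measurable F) (hK : Measurable K) :
    ∫⁻ x, F x * ∫⁻ y, K y ∂S.kernel x ∂μ = ∫⁻ x, (∫⁻ y, F y ∂S'.kernel x) * K x ∂μ := by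
  have hFK : Measurable fun z : XSpace n × XSpace n ↦ F z.1 * K z.2 := by fun_prop
  calc ∫⁻ x, F x * ∫⁻ y, K y ∂S.kernel x ∂μ
      = ∫⁻ z, F z.1 * K z.2 ∂(μ ⊗ₘ S.kernel) := by
        simp only [Measure.lintegral_compProd hFK, lintegral_const_mul _ hK]
    _ = ∫⁻ z, F z.2 * K z.1 ∂(μ ⊗ₘ S'.kernel) := by
        rw [compProd_kernel_eq_map_swap μ hS', lintegral_map hFK measurable_swap]
        rfl
    _ = ∫⁻ x, (∫⁻ y, F y ∂S'.kernel x) * K x ∂μ := by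
        rw [Measure.lintegral_compProd (by fun_prop)]
        simp only [lintegral_mul_const _ hF]

theorem lintegral_kernel (hS' : S'.base = S.base⁻¹) {K : XSpace n → ℝ≥0∞} (hK : Measurable K) :
    ∫⁻ x, ∫⁻ y, K y ∂S.kernel x ∂μ = ∫⁻ x, K x ∂μ := by
  simpa using lintegral_mul_kernel μ hS' measurable_one hK

end HeckeSet

section Transvections

variable {ι F : Type*} [DecidableEq ι] [Fintype ι] [Field F]

open Matrix.SpecialLinearGroup

lemma diag2n_eq_mul_transvections {i j : ι} (hij : i ≠ j) {a b : F} (ha : a ≠ 0) (hb : b ≠ 0) :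
    diag2n hij a ha = transvection hij.symm (b / a) * transvection hij ((1 - a) / b) *
      transvection hij.symm (-b) * transvection hij (-((1 - a) / (a * b))) := by
  have hdiag : (diag2n hij a ha : Matrix ι ι F) =
      1 + single i i (a - 1) + single j j (a⁻¹ - 1) := by
    ext k l
    rw [diag2n_coe]
    simp only [diagonal_apply, Matrix.add_apply, Matrix.one_apply, single_apply]
    grind
  apply Subtype.ext
  simp only [Matrix.SpecialLinearGroup.coe_mul, transvection_coe, hdiag, mul_add, add_mul,
    mul_one, one_mul, single_mul_single_same, single_mul_single_of_ne _ _ _ _ hij,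
    single_mul_single_of_ne _ _ _ _ hij.symm, add_zero]
  ext k l
  simp only [Matrix.add_apply, Matrix.one_apply, single_apply]
  grind

lemma mem_of_transvection_mem [Nontrivial ι] (H : Submonoid (SpecialLinearGroup ι F))
    (hH : ∀ (i j : ι) (hij : i ≠ j) (a : F), transvection hij a ∈ H)
    (g : SpecialLinearGroup ι F) : g ∈ H := by
  refine diagonal_transvection_induction' (· ∈ H) g (fun i j hij a ha ↦ ?_) hH
    fun _ _ ↦ H.mul_mem
  rw [diag2n_eq_mul_transvections hij ha one_ne_zero]
  exact H.mul_mem (H.mul_mem (H.mul_mem (hH _ _ _ _) (hH _ _ _ _)) (hH _ _ _ _)) (hH _ _ _ _)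

/-- The `k`-th diagonal entry of `diag2n hij a`. -/
def diag2nEntry (i j : ι) (a : F) (k : ι) : F := if k = i then a else if k = j then a⁻¹ else 1

lemma diag2n_mul_transvection_mul_inv {i j k l : ι} (hij : i ≠ j) (hkl : k ≠ l) {a : F}
    (ha : a ≠ 0) (t : F) :
    diag2n hij a ha * transvection hkl t * (diag2n hij a ha)⁻¹ =
      transvection hkl (diag2nEntry i j a k / diag2nEntry i j a l * t) := by
  have hentry : diag2nEntry i j a l ≠ 0 := by unfold diag2nEntry; split_ifs <;> simp [ha]
  have hdiag : (diag2n hij a ha : Matrix ι ι F) = diagonal (diag2nEntry i j a) :=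
    diag2n_coe hij a ha
  rw [mul_inv_eq_iff_eq_mul]
  apply Subtype.ext
  ext r s
  simp only [Matrix.SpecialLinearGroup.coe_mul, transvection_coe, hdiag,
    diagonal_mul, mul_diagonal, Matrix.add_apply, Matrix.one_apply, single_apply]
  split_ifs <;> grind

lemma transvection_eq_commutator {i k j : ι} (hik : i ≠ k) (hkj : k ≠ j) (hij : i ≠ j) (t : F) :
    transvection hij t = transvection hik t * transvection hkj 1 * (transvection hik t)⁻¹ *
      (transvection hkj 1)⁻¹ := by
  rw [eq_mul_inv_iff_mul_eq, eq_mul_inv_iff_mul_eq]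
  apply Subtype.ext
  simp only [Matrix.SpecialLinearGroup.coe_mul, transvection_coe, mul_add, add_mul,
    mul_one, one_mul, single_mul_single_same, single_mul_single_of_ne _ _ _ _ hij.symm,
    single_mul_single_of_ne _ _ _ _ hkj.symm, add_zero]
  abel

end Transvections

section Mautner

open Filter Matrix.SpecialLinearGroup

/-- The subgroup of elements of length zero for a length function `N` on a group. -/
def seminormKer {G : Type*} [Group G] (N : GroupSeminorm G) : Subgroup G where
  carrier := {g | N g = 0}
  one_mem' := map_one_eq_zero N
  mul_mem' {a b} ha hb := le_antisymm
    ((map_mul_le_add N a b).trans_eq (by rw [show N a = 0 from ha, show N b = 0 from hb, add_zero]))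
    (apply_nonneg N _)
  inv_mem' {a} ha := (map_inv_eq_map N a).trans ha

section

variable {G : Type*} [Group G] {N : GroupSeminorm G}

lemma mem_seminormKer_iff {g : G} : g ∈ seminormKer N ↔ N g = 0 := Iff.rfl

lemma seminorm_mul_of_mem_ker {z : G} (hz : z ∈ seminormKer N) (g : G) : N (z * g) = N g := by
  refine le_antisymm ((map_mul_le_add N z g).trans_eq (by rw [hz, zero_add])) ?_
  calc N g = N (z⁻¹ * (z * g)) := by rw [inv_mul_cancel_left]
    _ ≤ N z⁻¹ + N (z * g) := map_mul_le_add N _ _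
    _ = N (z * g) := by rw [map_inv_eq_map, hz, zero_add]

lemma seminorm_mul_of_mem_ker_right {z : G} (hz : z ∈ seminormKer N) (g : G) :
    N (g * z) = N g := by
  rw [← map_inv_eq_map N, _root_.mul_inv_rev, seminorm_mul_of_mem_ker (inv_mem hz), map_inv_eq_map]

end

variable {n : ℕ}

lemma continuous_transvection {i j : Fin n} (hij : i ≠ j) :
    Continuous fun t : ℝ ↦ (transvection hij t : SL(n, ℝ)) := by
  refine continuous_SL_of_entries fun k l ↦ ?_
  simp only [transvection_coe, Matrix.add_apply, single_apply]
  refine continuous_const.add ?_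
  split_ifs <;> fun_prop

variable {N : GroupSeminorm SL(n, ℝ)}

lemma tendsto_seminorm_transvection (hN : ContinuousAt N 1) {α : Type*} {l : Filter α}
    {i j : Fin n} (hij : i ≠ j) {u : α → ℝ} (hu : Tendsto u l (𝓝 0)) :
    Tendsto (fun k ↦ N (transvection hij (u k))) l (𝓝 0) := by
  have hone : Tendsto (fun k ↦ transvection hij (u k)) l (𝓝 (1 : SL(n, ℝ))) := by
    rw [← transvection_coeff_zero hij]
    exact (continuous_transvection hij).continuousAt.tendsto.comp hu
  exact map_one_eq_zero N ▸ hN.tendsto.comp hone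

lemma transvection_mem_ker_of_scaling (hN : ContinuousAt N 1) {i j : Fin n} (hij : i ≠ j) {r : ℝ}
    (hr₀ : 0 < r) (hr₁ : r < 1)
    (hscale : ∀ t, N (transvection hij (r * t)) = N (transvection hij t)) (t : ℝ) :
    transvection hij t ∈ seminormKer N := by
  have hpow (k : ℕ) : N (transvection hij (r ^ k * t)) = N (transvection hij t) := by
    induction k with
    | zero => simp
    | succ k ih => rw [pow_succ', mul_assoc, hscale, ih]
  refine tendsto_nhds_unique (l := atTop) (tendsto_const_nhds.congr fun k ↦ (hpow k).symm)
    (tendsto_seminorm_transvection hN hij ?_)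
  simpa using (tendsto_pow_atTop_nhds_zero_of_lt_one hr₀.le hr₁).mul_const t

/-- Modulo the powers of the unipotent, `diag2n hij 2⁻¹` is a product of arbitrarily small
transvections. -/
lemma diag2n_mem_ker (hN : ContinuousAt N 1) {i j : Fin n} (hij : i ≠ j)
    (hu : transvection hij.symm 1 ∈ seminormKer N) :
    diag2n hij (2⁻¹ : ℝ) (by norm_num) ∈ seminormKer N := by
  have hint (k : ℤ) : transvection hij.symm (k : ℝ) ∈ seminormKer N := by
    induction k with
    | zero => simp
    | succ k ih =>
      rw [Int.cast_add, Int.cast_one, transvection_add]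
      exact mul_mem ih hu
    | pred k ih =>
      rw [Int.cast_sub, Int.cast_one, sub_eq_add_neg, transvection_add, ← transvection_inv]
      exact mul_mem ih (inv_mem hu)
  have hbound (k : ℕ) : N (diag2n hij (2⁻¹ : ℝ) (by norm_num)) ≤
      N (transvection hij (2⁻¹ * (1 / ((k : ℝ) + 1)))) +
        N (transvection hij (-(1 / ((k : ℝ) + 1)))) := by
    have hk : (k : ℝ) + 1 ≠ 0 := by positivity
    rw [diag2n_eq_mul_transvections hij _ hk]
    have h₁ := hint (2 * (k + 1))
    have h₂ := hint (-(k + 1))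
    push_cast at h₁ h₂
    rw [show ((k : ℝ) + 1) / 2⁻¹ = 2 * (k + 1) by field_simp,
      show (1 - 2⁻¹) / ((k : ℝ) + 1) = 2⁻¹ * (1 / (k + 1)) by field_simp; norm_num,
      show (1 - 2⁻¹) / (2⁻¹ * ((k : ℝ) + 1)) = 1 / (k + 1) by field_simp; norm_num]
    refine (map_mul_le_add N _ _).trans_eq ?_
    rw [seminorm_mul_of_mem_ker_right h₂, seminorm_mul_of_mem_ker h₁]
  refine le_antisymm (ge_of_tendsto' (x := atTop) ?_ hbound) (apply_nonneg N _)
  have hzero : Tendsto (fun k : ℕ ↦ 1 / ((k : ℝ) + 1)) atTop (𝓝 0) :=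
    tendsto_one_div_add_atTop_nhds_zero_nat
  have hhalf := hzero.const_mul 2⁻¹
  have hneg := hzero.neg
  rw [mul_zero] at hhalf
  rw [neg_zero] at hneg
  simpa using (tendsto_seminorm_transvection hN hij hhalf).add
    (tendsto_seminorm_transvection hN hij hneg)

lemma transvection_mem_ker_of_diag2n_mem (hN : ContinuousAt N 1) {i j k l : Fin n} (hij : i ≠ j)
    (hdiag : diag2n hij (2⁻¹ : ℝ) (by norm_num) ∈ seminormKer N) (hkl : k ≠ l)
    (hmeet : k = i ∨ k = j ∨ l = i ∨ l = j) (t : ℝ) :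
    transvection hkl t ∈ seminormKer N := by
  set r : ℝ := diag2nEntry i j 2⁻¹ k / diag2nEntry i j 2⁻¹ l with hr
  have hscale (t : ℝ) : N (transvection hkl (r * t)) = N (transvection hkl t) := by
    rw [hr, ← diag2n_mul_transvection_mul_inv hij hkl (by norm_num),
      seminorm_mul_of_mem_ker_right (inv_mem hdiag), seminorm_mul_of_mem_ker hdiag]
  have hr₀ : 0 < r := by
    simp only [hr, diag2nEntry]
    split_ifs <;> norm_num
  have hr₁ : r ≠ 1 := by
    simp only [hr, diag2nEntry]
    split_ifs <;> first | (norm_num; done) | (exfalso; grind)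
  rcases hr₁.lt_or_gt with hlt | hgt
  · exact transvection_mem_ker_of_scaling hN hkl hr₀ hlt hscale t
  · refine transvection_mem_ker_of_scaling hN hkl (inv_pos.2 hr₀) (inv_lt_one_of_one_lt₀ hgt)
      (fun t ↦ ?_) t
    rw [← hscale, mul_inv_cancel_left₀ hr₀.ne']

theorem mautner_seminormKer_eq_top (hN : ContinuousAt N 1) {i j : Fin n} (hij : i ≠ j)
    (hu : transvection hij.symm 1 ∈ seminormKer N) : seminormKer N = ⊤ := by
  have : Nontrivial (Fin n) := ⟨i, j, hij⟩
  have hmeet {k l : Fin n} (hkl : k ≠ l) :=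
    transvection_mem_ker_of_diag2n_mem hN hij (diag2n_mem_ker hN hij hu) hkl
  refine (Subgroup.eq_top_iff' _).2 fun g ↦
    mem_of_transvection_mem (seminormKer N).toSubmonoid (fun k l hkl t ↦ ?_) g
  by_cases h : k = i ∨ k = j ∨ l = i ∨ l = j
  · exact hmeet hkl h t
  · push Not at h
    rw [Subgroup.mem_toSubmonoid, transvection_eq_commutator h.1 h.2.2.1.symm]
    have h₁ := hmeet h.1 (by simp) t
    have h₂ := hmeet h.2.2.1.symm (by simp) 1
    exact mul_mem (mul_mem (mul_mem h₁ h₂) (inv_mem h₁)) (inv_mem h₂)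

end Mautner

section Ergodicity

open Filter Matrix.SpecialLinearGroup
open scoped symmDiff

/-- The length function `g ↦ μ (g⁻¹ • s ∆ s)` measuring how far `g` is from preserving `s`. -/
def symmDiffSeminorm (G : Type*) {X : Type*} [Group G] [MulAction G X] [MeasurableSpace X]
    (μ : Measure X) [IsFiniteMeasure μ] [SMulInvariantMeasure G X μ] [MeasurableConstSMul G X]
    (s : Set X) : GroupSeminorm G where
  toFun g := μ.real (((g • ·) ⁻¹' s) ∆ s)
  map_one' := by simp
  mul_le' g h := by
    have hpre : (((g * h) • · : X → X) ⁻¹' s) ∆ ((h • ·) ⁻¹' s) =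
        (h • ·) ⁻¹' (((g • ·) ⁻¹' s) ∆ s) := by
      ext x
      simp [Set.mem_symmDiff, mul_smul]
    calc μ.real ((((g * h) • ·) ⁻¹' s) ∆ s)
        ≤ μ.real ((((g * h) • ·) ⁻¹' s) ∆ ((h • ·) ⁻¹' s)) + μ.real (((h • ·) ⁻¹' s) ∆ s) :=
          (measureReal_mono (symmDiff_triangle _ _ _)).trans (measureReal_union_le _ _)
      _ = μ.real (((g • ·) ⁻¹' s) ∆ s) + μ.real (((h • ·) ⁻¹' s) ∆ s) := by
          rw [hpre, measureReal_def, measure_preimage_smul, ← measureReal_def]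
  inv' g := by
    have hpre : ((g⁻¹ • ·) ⁻¹' s) ∆ s = (g⁻¹ • ·) ⁻¹' (((g • ·) ⁻¹' s) ∆ s) := by
      ext x
      simp [Set.mem_symmDiff, and_comm, or_comm]
    rw [hpre, measureReal_def, measure_preimage_smul, ← measureReal_def]

variable {G X : Type*} [Group G] [TopologicalSpace G] [TopologicalSpace X] [MulAction G X]
  [ContinuousSMul G X]

lemma continuousAt_symmDiffSeminorm [R1Space X] [MeasurableSpace X] [BorelSpace X]
    (μ : Measure X) [IsFiniteMeasure μ] [μ.InnerRegularCompactLTTop]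
    [SMulInvariantMeasure G X μ] {s : Set X} (hs : MeasurableSet s) :
    ContinuousAt (symmDiffSeminorm G μ s) 1 := by
  let act : C(G, C(X, X)) := (ContinuousMap.mk (fun q : G × X ↦ q.1 • q.2) continuous_smul).curry
  have hzero := tendsto_measure_symmDiff_preimage_nhds_zero (act.continuous.tendsto 1)
    (.of_forall fun g ↦ measurePreserving_smul g μ) (measurePreserving_smul (1 : G) μ)
    hs.nullMeasurableSet (measure_ne_top μ s)
  have hone : (act 1 : X → X) ⁻¹' s = s := by
    ext x
    simp [act]
  rw [ContinuousAt, map_one_eq_zero, ← ENNReal.toReal_zero]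
  simp only [hone] at hzero
  exact (ENNReal.tendsto_toReal ENNReal.zero_ne_top).comp hzero

variable {n : ℕ}

instance : LocallyCompactSpace (XSpace n) :=
  have := (XSpace.isOpenQuotientMap_mk (n := n)).weaklyLocallyCompactSpace
  inferInstance

theorem ergodic_rightTranslate_transvection (μ : Measure (XSpace n)) [IsProbabilityMeasure μ]
    [SMulInvariantMeasure SL(n, ℝ) (XSpace n) μ] {i j : Fin n} (hij : i ≠ j) :
    Ergodic (rightTranslate n (transvection hij 1)) μ where
  toMeasurePreserving := measurePreserving_rightTranslate μ _
  aeconst_set s hs hinv := by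
    have hker : seminormKer (symmDiffSeminorm SL(n, ℝ) μ s) = ⊤ := by
      refine mautner_seminormKer_eq_top (continuousAt_symmDiffSeminorm μ hs) hij.symm ?_
      rw [← inv_mem_iff, mem_seminormKer_iff]
      change μ.real (((rightTranslate n _⁻¹⁻¹) ⁻¹' s) ∆ s) = 0
      simp [hinv]
    have hmem (g : SL(n, ℝ)) : ∀ᵐ x ∂μ, (g • x ∈ s) = (x ∈ s) := by
      have hg : g ∈ seminormKer (symmDiffSeminorm SL(n, ℝ) μ s) := hker ▸ Subgroup.mem_top g
      filter_upwards [measure_symmDiff_eq_zero_iff.1 ((measureReal_eq_zero_iff).1 hg)] with x hx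
      exact hx
    have horbit : ∀ᵐ x ∂μ, x ∈ MulAction.orbit SL(n, ℝ) (XSpace.mk 1) := .of_forall fun x ↦ by
      obtain ⟨g, rfl⟩ := XSpace.mk_surjective x
      exact ⟨g⁻¹, by simp [XSpace.smul_eq_rightTranslate]⟩
    obtain ⟨c, hc⟩ := ae_eq_const_of_ae_mem_orbit (Measure.haar : Measure SL(n, ℝ)) horbit
      (measurable_mem.2 hs) hmem
    exact eventuallyConst_iff_exists_eventuallyEq.2 ⟨c, hc⟩

end Ergodicity

section MeanErgodic

open Filter

variable {X : Type*} [MeasurableSpace X] {μ : Measure X} {T : X → X} {η : X → ℝ}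

lemma coeFn_iterate_compMeasurePreserving {p : ENNReal} (hT : MeasurePreserving T μ μ)
    (hη : MemLp η p μ) (k : ℕ) :
    (Lp.compMeasurePreserving T hT)^[k] (hη.toLp η) =ᵐ[μ] η ∘ T^[k] := by
  induction k with
  | zero => exact hη.coeFn_toLp
  | succ k ih =>
    rw [Function.iterate_succ_apply', Function.iterate_succ, ← Function.comp_assoc]
    exact (Lp.coeFn_compMeasurePreserving _ hT).trans
      (hT.quasiMeasurePreserving.ae_eq_comp ih)

lemma coeFn_birkhoffAverage_compMeasurePreserving {p : ENNReal} (hT : MeasurePreserving T μ μ)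
    (hη : MemLp η p μ) (K : ℕ) :
    (birkhoffAverage ℝ (Lp.compMeasurePreserving T hT) id K (hη.toLp η) : Lp ℝ p μ) =ᵐ[μ]
      birkhoffAverage ℝ T η K := by
  have hsum : (birkhoffSum (Lp.compMeasurePreserving T hT) id K (hη.toLp η) : Lp ℝ p μ) =ᵐ[μ]
      birkhoffSum T η K := by
    induction K with
    | zero => simpa using Lp.coeFn_zero ℝ p μ
    | succ K ih =>
      rw [birkhoffSum_succ]
      filter_upwards [Lp.coeFn_add (birkhoffSum (Lp.compMeasurePreserving T hT) id K (hη.toLp η))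
        (id ((Lp.compMeasurePreserving T hT)^[K] (hη.toLp η))), ih,
        coeFn_iterate_compMeasurePreserving hT hη K] with x hadd hsum hiter
      rw [hadd, birkhoffSum_succ, Pi.add_apply, hsum, id, hiter, Function.comp_apply]
  filter_upwards [Lp.coeFn_smul (K : ℝ)⁻¹ (birkhoffSum (Lp.compMeasurePreserving T hT) id K
    (hη.toLp η)), hsum] with x hsmul hsum
  rw [birkhoffAverage, hsmul, Pi.smul_apply, hsum, birkhoffAverage]

lemma integral_norm_le_norm_Lp_two [IsProbabilityMeasure μ] {E : Type*} [NormedAddCommGroup E]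
    (φ : Lp E 2 μ) :
    ∫ x, ‖φ x‖ ∂μ ≤ ‖φ‖ := by
  have hφ := Lp.memLp φ
  rw [integral_norm_eq_lintegral_enorm hφ.1, ← eLpNorm_one_eq_lintegral_enorm, Lp.norm_def]
  exact ENNReal.toReal_mono hφ.2.ne (eLpNorm_le_eLpNorm_of_exponent_le (by norm_num) hφ.1)

lemma integrable_birkhoffAverage (hT : MeasurePreserving T μ μ) (hη : Integrable η μ) (K : ℕ) :
    Integrable (birkhoffAverage ℝ T η K) μ := by
  refine Integrable.smul (K : ℝ)⁻¹ (integrable_finsetSum _ fun k _ ↦ ?_)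
  exact (hT.iterate k).integrable_comp_of_integrable hη

lemma integral_birkhoffAverage (hT : MeasurePreserving T μ μ) (hη : Integrable η μ)
    {K : ℕ} (hK : K ≠ 0) : ∫ x, birkhoffAverage ℝ T η K x ∂μ = ∫ x, η x ∂μ := by
  have hiter (k : ℕ) : Integrable (fun x ↦ η (T^[k] x)) μ :=
    (hT.iterate k).integrable_comp_of_integrable hη
  have hint (k : ℕ) : ∫ x, η (T^[k] x) ∂μ = ∫ x, η x ∂μ := by
    have hmap := integral_map (hT.iterate k).aemeasurable
      ((hT.iterate k).map_eq.symm ▸ hη.aestronglyMeasurable)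
    rw [(hT.iterate k).map_eq] at hmap
    exact hmap.symm
  simp only [birkhoffAverage, birkhoffSum, integral_smul]
  rw [integral_finsetSum _ fun k _ ↦ hiter k]
  simp [hint, hK]

variable [IsProbabilityMeasure μ]

lemma exists_tendsto_integral_abs_birkhoffAverage_sub (hT : Ergodic T μ) (hη : MemLp η 2 μ) :
    ∃ c, Tendsto (fun K ↦ ∫ x, |birkhoffAverage ℝ T η K x - c| ∂μ) atTop (𝓝 0) := by
  have hmp := hT.toMeasurePreserving
  let f : Lp ℝ 2 μ →L[ℝ] Lp ℝ 2 μ :=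
    (Lp.compMeasurePreservingₗᵢ ℝ T hmp).toContinuousLinearMap
  set φ := (f.eqLocus (1 : Lp ℝ 2 μ →L[ℝ] Lp ℝ 2 μ)).orthogonalProjectionOnto (hη.toLp η)
  obtain ⟨c, hc⟩ : ∃ c, (φ : Lp ℝ 2 μ) =ᵐ[μ] Function.const X c := by
    refine hT.quasiErgodic.ae_eq_const_of_ae_eq_comp_ae (Lp.aestronglyMeasurable _) ?_
    have hfix : Lp.compMeasurePreserving T hmp (φ : Lp ℝ 2 μ) = (φ : Lp ℝ 2 μ) := φ.2
    simpa only [hfix] using (Lp.coeFn_compMeasurePreserving (φ : Lp ℝ 2 μ) hmp).symm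
  refine ⟨c, squeeze_zero (fun K ↦ integral_nonneg fun x ↦ abs_nonneg _) (fun K ↦ ?_)
    (tendsto_iff_norm_sub_tendsto_zero.1 (f.tendsto_birkhoffAverage_orthogonalProjection
      (LinearIsometry.norm_toContinuousLinearMap_le _) (hη.toLp η)))⟩
  refine (integral_congr_ae ?_).trans_le (integral_norm_le_norm_Lp_two _)
  filter_upwards [Lp.coeFn_sub (birkhoffAverage ℝ f id K (hη.toLp η)) φ, hc,
    coeFn_birkhoffAverage_compMeasurePreserving hmp hη K] with x hsub hφ havg
  rw [hsub, Pi.sub_apply, hφ, Real.norm_eq_abs]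
  exact congrArg (|· - c|) havg.symm

theorem tendsto_integral_abs_birkhoffAverage_sub_integral (hT : Ergodic T μ)
    (hη : MemLp η 2 μ) :
    Tendsto (fun K ↦ ∫ x, |birkhoffAverage ℝ T η K x - ∫ y, η y ∂μ| ∂μ) atTop (𝓝 0) := by
  obtain ⟨c, hc⟩ := exists_tendsto_integral_abs_birkhoffAverage_sub hT hη
  have hint : Integrable η μ := hη.integrable (by norm_num)
  have hle : ∀ᶠ K in atTop,
      |∫ y, η y ∂μ - c| ≤ ∫ x, |birkhoffAverage ℝ T η K x - c| ∂μ := by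
    filter_upwards [eventually_ne_atTop 0] with K hK
    rw [← integral_birkhoffAverage hT.toMeasurePreserving hint hK]
    calc |∫ x, birkhoffAverage ℝ T η K x ∂μ - c|
        = |∫ x, birkhoffAverage ℝ T η K x - c ∂μ| := by
          rw [integral_sub (integrable_birkhoffAverage hT.toMeasurePreserving hint K)
            (integrable_const c)]; simp
      _ ≤ _ := abs_integral_le_integral_abs
  rwa [← sub_eq_zero.1 (abs_nonpos_iff.1 (ge_of_tendsto hc hle))] at hc

end MeanErgodic

section LinearAlgebra

variable {ι F R : Type*} [Field F] [CommRing R]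

lemma intCast_pi_injective [CharZero R] :
    Function.Injective fun (v : ι → ℤ) (i : ι) ↦ (v i : R) :=
  fun _ _ h ↦ funext fun i ↦ Int.cast_injective (congrFun h i)

lemma intCast_zmod_pi_surjective (N : ℕ) :
    Function.Surjective fun (v : ι → ℤ) (i : ι) ↦ (v i : ZMod N) := fun b ↦ by
  choose a ha using fun i ↦ ZMod.intCast_surjective (b i)
  exact ⟨a, funext ha⟩

lemma exists_basis_extending [Finite ι] {S : Finset ι} {w : S → ι → F}
    (hw : LinearIndependent F w) :
    ∃ b : Module.Basis ι F (ι → F), ∀ s : S, b s = w s := by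
  classical
  have := Fintype.ofFinite ι
  have hwinl (s : S) : Module.Basis.sumExtend hw (Sum.inl s) = w s := by
    simp [Module.Basis.sumExtend]
    rfl
  have : Finite (S ⊕ Module.Basis.sumExtendIndex hw) :=
    Module.Finite.finite_basis (Module.Basis.sumExtend hw)
  have : Finite (Module.Basis.sumExtendIndex hw) := Finite.sum_right S
  have := Fintype.ofFinite (Module.Basis.sumExtendIndex hw)
  have hcard : Fintype.card {i // i ∉ S} = Fintype.card (Module.Basis.sumExtendIndex hw) := by
    have := Module.finrank_eq_card_basis (Module.Basis.sumExtend hw)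
    simp only [Module.finrank_fintype_fun_eq_card, Fintype.card_sum, Fintype.card_coe] at this
    simp only [Fintype.card_subtype_compl, Fintype.card_coe]
    omega
  let e : S ⊕ Module.Basis.sumExtendIndex hw ≃ ι :=
    (Equiv.sumCongr (Equiv.refl _) (Fintype.equivOfCardEq hcard).symm).trans
      (Equiv.sumCompl (· ∈ S))
  refine ⟨(Module.Basis.sumExtend hw).reindex e, fun s ↦ ?_⟩
  have hs : e.symm s = Sum.inl s := by rw [Equiv.symm_apply_eq]; simp [e]
  rw [Module.Basis.reindex_apply, hs, hwinl]

variable [Fintype ι] [DecidableEq ι]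

lemma vecMul_mul_inv (v : ι → R) (γ : SpecialLinearGroup ι R) : v ᵥ* γ.1 ᵥ* (γ⁻¹).1 = v := by
  rw [vecMul_vecMul, ← Matrix.SpecialLinearGroup.coe_mul, mul_inv_cancel]
  simp

lemma vecMul_inv_mul (v : ι → R) (γ : SpecialLinearGroup ι R) : v ᵥ* (γ⁻¹).1 ᵥ* γ.1 = v := by
  simpa using vecMul_mul_inv v γ⁻¹

lemma vecMul_eq_iff_eq_vecMul_inv {v w : ι → R} {γ : SpecialLinearGroup ι R} :
    v ᵥ* γ.1 = w ↔ v = w ᵥ* (γ⁻¹).1 :=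
  ⟨by rintro rfl; rw [vecMul_mul_inv], by rintro rfl; rw [vecMul_inv_mul]⟩

lemma vecMul_SL_injective (γ : SpecialLinearGroup ι R) :
    Function.Injective fun v : ι → R ↦ v ᵥ* γ.1 := fun _ _ h ↦ by
  rw [vecMul_eq_iff_eq_vecMul_inv.1 h, vecMul_mul_inv]

lemma intCast_vecMul (v : ι → ℤ) (γ : SpecialLinearGroup ι ℤ) :
    (fun i ↦ ((v ᵥ* γ.1) i : R)) =
      (fun i ↦ (v i : R)) ᵥ* (SpecialLinearGroup.map (Int.castRingHom R) γ).1 :=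
  funext (RingHom.map_vecMul (Int.castRingHom R) γ.1 v)

lemma exists_SL_with_cols {S : Finset ι} {k : ι} (hk : k ∉ S) {w : S → ι → F}
    (hw : LinearIndependent F w) :
    ∃ N : SpecialLinearGroup ι F, ∀ (s : S) (i : ι), N.1 i s = w s i := by
  obtain ⟨b, hb⟩ := exists_basis_extending hw
  let B : Matrix ι ι F := .of fun i j ↦ b j i
  have hdet : B.det ≠ 0 := by
    have hcol : LinearIndependent F B.col := b.linearIndependent
    rw [linearIndependent_cols_iff_isUnit, isUnit_iff_isUnit_det] at hcol
    exact hcol.ne_zero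
  refine ⟨⟨B.updateCol k (B.det⁻¹ • B.col k), ?_⟩, fun s i ↦ ?_⟩
  · rw [det_updateCol_smul, show B.updateCol k (B.col k) = B from updateCol_eq_self _ _,
      inv_mul_cancel₀ hdet]
  · have hsk : (s : ι) ≠ k := fun h ↦ hk (h ▸ s.2)
    simp [hsk, B, hb]

lemma exists_SL_single_vecMul_eq [Nontrivial ι] (k : ι) {a : ι → F} (ha : a ≠ 0) :
    ∃ N : SpecialLinearGroup ι F, Pi.single k 1 ᵥ* N.1 = a := by
  obtain ⟨l, hl⟩ := exists_ne k
  obtain ⟨N, hN⟩ := exists_SL_with_cols (S := {k}) (k := l) (by simpa using hl) (w := fun _ ↦ a)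
    (LinearIndependent.of_subsingleton ⟨k, by simp⟩ ha)
  refine ⟨N.transpose, funext fun i ↦ ?_⟩
  simpa [transpose_apply] using hN ⟨k, by simp⟩ i

lemma exists_SL_vecMul_eq [Nontrivial ι] {a b : ι → F} (ha : a ≠ 0) (hb : b ≠ 0) :
    ∃ M : SpecialLinearGroup ι F, a ᵥ* M.1 = b := by
  obtain ⟨k, _⟩ := exists_pair_ne ι
  obtain ⟨N, rfl⟩ := exists_SL_single_vecMul_eq k ha
  obtain ⟨M, rfl⟩ := exists_SL_single_vecMul_eq k hb
  exact ⟨N⁻¹ * M, by rw [Matrix.SpecialLinearGroup.coe_mul, ← vecMul_vecMul, vecMul_mul_inv]⟩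

lemma surjective_SL_map_zmod [Nontrivial ι] (p : ℕ) [Fact p.Prime] :
    Function.Surjective
      (SpecialLinearGroup.map (n := ι) (Int.castRingHom (ZMod p))) := fun M ↦ by
  refine mem_of_transvection_mem (MonoidHom.mrange (SpecialLinearGroup.map _)) ?_ M
  intro i j hij a
  obtain ⟨b, rfl⟩ := ZMod.intCast_surjective a
  refine ⟨SpecialLinearGroup.transvection hij b, Matrix.SpecialLinearGroup.ext _ _ fun k l ↦ ?_⟩
  change ((transvection i j b k l : ℤ) : ZMod p) = transvection i j (b : ZMod p) k l
  simp [transvection, one_apply, single_apply]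

end LinearAlgebra

section Lattice

variable {n : ℕ}

/-- The homomorphism `ℤⁿ → ℝⁿ`, `v ↦ v g`. -/
def intVecMul (g : SL(n, ℝ)) : (Fin n → ℤ) →+ (Fin n → ℝ) where
  toFun v := (fun i ↦ (v i : ℝ)) ᵥ* g.1
  map_zero' := by simp [← Pi.zero_def]
  map_add' v w := by
    rw [← add_vecMul]
    congr 1
    ext i
    simp

lemma intVecMul_apply (g : SL(n, ℝ)) (v : Fin n → ℤ) :
    intVecMul g v = (fun i ↦ (v i : ℝ)) ᵥ* g.1 := rfl

lemma intVecMul_injective (g : SL(n, ℝ)) : Function.Injective (intVecMul g) :=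
  (vecMul_SL_injective g).comp intCast_pi_injective

lemma intVecMul_mul (g h : SL(n, ℝ)) (v : Fin n → ℤ) :
    intVecMul (g * h) v = intVecMul g v ᵥ* h.1 := by
  simp only [intVecMul_apply, vecMul_vecMul, Matrix.SpecialLinearGroup.coe_mul]

lemma intVecMul_map_mul (γ : SL(n, ℤ)) (g : SL(n, ℝ)) (v : Fin n → ℤ) :
    intVecMul (SpecialLinearGroup.map (Int.castRingHom ℝ) γ * g) v = intVecMul g (v ᵥ* γ.1) := by
  rw [intVecMul_mul, intVecMul_apply, intVecMul_apply, intCast_vecMul]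

lemma range_intVecMul_le_iff {g h : SL(n, ℝ)} :
    (intVecMul h).range ≤ (intVecMul g).range ↔ h * g⁻¹ ∈ Gamma n := by
  constructor
  · intro hle
    refine mem_Gamma_iff.2 fun i j ↦ ?_
    obtain ⟨w, hw⟩ := hle ⟨Pi.single i 1, rfl⟩
    rw [intVecMul_apply, vecMul_eq_iff_eq_vecMul_inv, ← intVecMul_mul] at hw
    refine ⟨w j, (congrFun hw j).trans ?_⟩
    have hcast : (fun k ↦ ((Pi.single i 1 : Fin n → ℤ) k : ℝ)) = Pi.single i 1 := by
      ext k; simp [Pi.single_apply]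
    rw [intVecMul_apply, hcast, single_one_vecMul]
    rfl
  · rintro ⟨γ, hγ⟩ _ ⟨v, rfl⟩
    rw [← inv_mul_cancel_right h g, ← hγ]
    exact ⟨v ᵥ* γ.1, (intVecMul_map_mul γ g v).symm⟩

namespace XSpace

/-- The unimodular lattice `ℤⁿ g` attached to a point `Γg` of `X`. -/
def lattice (x : XSpace n) : AddSubgroup (Fin n → ℝ) :=
  Quotient.liftOn' x (fun g ↦ (intVecMul g).range) fun g h hgh ↦ by
    have hmem : h * g⁻¹ ∈ Gamma n := QuotientGroup.rightRel_apply.1 hgh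
    refine le_antisymm (range_intVecMul_le_iff.2 ?_) (range_intVecMul_le_iff.2 hmem)
    simpa using inv_mem hmem

lemma lattice_mk (g : SL(n, ℝ)) : (mk g).lattice = (intVecMul g).range := rfl

lemma lattice_injective : Function.Injective (lattice : XSpace n → _) := fun x y hxy ↦ by
  obtain ⟨g, rfl⟩ := mk_surjective x
  obtain ⟨h, rfl⟩ := mk_surjective y
  exact mk_eq_mk_iff.2 (range_intVecMul_le_iff.1 hxy.ge)

lemma vecMul_mem_lattice_rightTranslate {x : XSpace n} {g : SL(n, ℝ)} {w : Fin n → ℝ} :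
    w ᵥ* g.1 ∈ (rightTranslate n g x).lattice ↔ w ∈ x.lattice := by
  obtain ⟨h, rfl⟩ := mk_surjective x
  simp only [rightTranslate_mk, lattice_mk, AddMonoidHom.mem_range, intVecMul_mul,
    (vecMul_SL_injective g).eq_iff]

end XSpace

end Lattice

section VanishingSubgroup

variable {n : ℕ} {R : Type*} [CommRing R]

/-- The vectors whose coordinates in the basis of `Rⁿ` formed by the rows of `M` vanish on `S`. -/
def vanishingSubgroup (S : Finset (Fin n)) (M : SL(n, R)) : AddSubgroup (Fin n → R) where
  carrier := {x | ∀ s ∈ S, (x ᵥ* (M⁻¹).1) s = 0}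
  zero_mem' := by simp
  add_mem' ha hb s hs := by rw [add_vecMul, Pi.add_apply, ha s hs, hb s hs, add_zero]
  neg_mem' ha s hs := by rw [neg_vecMul, Pi.neg_apply, ha s hs, neg_zero]

lemma mem_vanishingSubgroup_iff {S : Finset (Fin n)} {M : SL(n, R)} {x : Fin n → R} :
    x ∈ vanishingSubgroup S M ↔ ∀ s ∈ S, (x ᵥ* (M⁻¹).1) s = 0 := Iff.rfl

lemma mem_vanishingSubgroup_inv_iff {S : Finset (Fin n)} {M : SL(n, R)} {x : Fin n → R} :
    x ∈ vanishingSubgroup S M⁻¹ ↔ ∀ s ∈ S, (x ᵥ* M.1) s = 0 := by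
  rw [mem_vanishingSubgroup_iff, inv_inv]

lemma card_vanishingSubgroup [Fintype R] (S : Finset (Fin n)) (M : SL(n, R)) :
    Nat.card (vanishingSubgroup S M) = Fintype.card R ^ (n - S.card) := by
  classical
  let coordEquiv : vanishingSubgroup S M ≃ ({i // i ∉ S} → R) :=
    { toFun x i := (x.1 ᵥ* (M⁻¹).1) i
      invFun y := ⟨(fun i ↦ if hi : i ∈ S then 0 else y ⟨i, hi⟩) ᵥ* M.1, fun s hs ↦ by
        rw [vecMul_mul_inv, dif_pos hs]⟩
      left_inv x := Subtype.ext <| by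
        refine vecMul_eq_iff_eq_vecMul_inv.2 (funext fun i ↦ ?_)
        split_ifs with hi
        exacts [(x.2 i hi).symm, rfl]
      right_inv y := funext fun i ↦ (congrFun (vecMul_mul_inv _ M) i).trans (dif_neg i.2) }
  rw [Nat.card_congr coordEquiv, Nat.card_eq_fintype_card, Fintype.card_fun,
    Fintype.card_subtype_compl, Fintype.card_coe, Fintype.card_fin]

lemma linearIndependent_row_of_surjective_mulVec {m : ℕ} {A : Matrix (Fin m) (Fin n) R}
    (hA : Function.Surjective fun x ↦ A *ᵥ x) : LinearIndependent R A.row := by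
  rw [← vecMul_injective_iff]
  refine fun c c' hc ↦ funext fun i ↦ ?_
  obtain ⟨x, hx : A *ᵥ x = Pi.single i 1⟩ := hA (Pi.single i 1)
  have hdot : c ⬝ᵥ A *ᵥ x = c' ⬝ᵥ A *ᵥ x := by
    rw [dotProduct_mulVec, dotProduct_mulVec]
    exact congrArg (· ⬝ᵥ x) hc
  simpa [hx] using hdot

lemma surjective_submatrix_transpose_mulVec {m : ℕ} {S : Finset (Fin n)} (e : S ≃ Fin m)
    (M : SL(n, R)) :
    Function.Surjective fun x ↦ (M.1ᵀ.submatrix (fun i ↦ (e.symm i : Fin n)) id) *ᵥ x := by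
  intro y
  let z : Fin n → R := fun i ↦ if h : i ∈ S then y (e ⟨i, h⟩) else 0
  refine ⟨z ᵥ* (M⁻¹).1, funext fun i ↦ ?_⟩
  have hz : (M.1ᵀ *ᵥ (z ᵥ* (M⁻¹).1)) (e.symm i) = z (e.symm i) := by
    rw [mulVec_transpose, vecMul_inv_mul]
  exact hz.trans (by simp [z])

lemma mem_congruenceSet_iff_exists_vanishingSubgroup {p : ℕ} [Fact p.Prime] {S : Finset (Fin n)}
    (hS : Sᶜ.Nonempty) {H : AddSubgroup (Fin n → ZMod p)} :
    H ∈ congruenceSet p n S.card ↔ ∃ M : SL(n, ZMod p), vanishingSubgroup S M = H := by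
  obtain ⟨k, hk⟩ := hS
  have e : S ≃ Fin S.card := S.equivFin
  constructor
  · rintro ⟨A, hA, hH⟩
    obtain ⟨N, hN⟩ := exists_SL_with_cols (Finset.mem_compl.1 hk)
      ((linearIndependent_row_of_surjective_mulVec hA).comp e e.injective)
    have hcoord (x : Fin n → ZMod p) (s : S) : (x ᵥ* N.1) s = (A *ᵥ x) (e s) := by
      simp only [vecMul, mulVec, dotProduct, hN, Function.comp_apply, row_apply, mul_comm]
    refine ⟨N⁻¹, SetLike.coe_injective (hH ▸ Set.ext fun x ↦ ?_)⟩
    rw [SetLike.mem_coe, mem_vanishingSubgroup_inv_iff, Set.mem_ofPred_eq, funext_iff,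
      ← e.forall_congr_right]
    simp only [← hcoord, Subtype.forall, Pi.zero_apply]
  · rintro ⟨M, rfl⟩
    refine ⟨_, surjective_submatrix_transpose_mulVec e M⁻¹, Set.ext fun x ↦ ?_⟩
    have hcoord (s : S) : (((M⁻¹).1ᵀ.submatrix (fun i ↦ (e.symm i : Fin n)) id) *ᵥ x) (e s) =
        (x ᵥ* (M⁻¹).1) s := by
      simp [vecMul, mulVec, dotProduct, mul_comm]
    rw [SetLike.mem_coe, mem_vanishingSubgroup_iff, Set.mem_ofPred_eq, funext_iff,
      ← e.forall_congr_right]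
    simp only [hcoord, Subtype.forall, Pi.zero_apply]

end VanishingSubgroup

section ConstructionA

variable {n : ℕ}

/-- Reduction `ℤⁿ → (ℤ/Nℤ)ⁿ`. -/
def intReduction (N : ℕ) : (Fin n → ℤ) →+ (Fin n → ZMod N) :=
  (Int.castAddHom (ZMod N)).compLeft (Fin n)

/-- The homomorphism `ℤⁿ → ℝⁿ`, `a ↦ c a`. -/
def scaledCast (c : ℝ) : (Fin n → ℤ) →+ (Fin n → ℝ) :=
  ((AddMonoidHom.mulLeft c).comp (Int.castAddHom ℝ)).compLeft (Fin n)

lemma intReduction_apply (N : ℕ) (a : Fin n → ℤ) :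
    intReduction N a = fun i ↦ (a i : ZMod N) := rfl

lemma scaledCast_apply (c : ℝ) (a : Fin n → ℤ) : scaledCast c a = c • fun i ↦ (a i : ℝ) := rfl

lemma intReduction_surjective (N : ℕ) : Function.Surjective (intReduction (n := n) N) :=
  intCast_zmod_pi_surjective N

lemma scaledCast_injective {c : ℝ} (hc : c ≠ 0) : Function.Injective (scaledCast (n := n) c) :=
  (smul_right_injective _ hc).comp intCast_pi_injective

/-- The lattice `c • {a ∈ ℤⁿ : a mod N ∈ H}`; for a code `H` this is Construction A. -/
def constructionA {N : ℕ} (c : ℝ) (H : AddSubgroup (Fin n → ZMod N)) : AddSubgroup (Fin n → ℝ) :=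
  (H.comap (intReduction N)).map (scaledCast c)

/-- The subgroup of residues modulo `N` of the integer vectors in `c⁻¹ L`. -/
def residueSubgroup (N : ℕ) (c : ℝ) (L : AddSubgroup (Fin n → ℝ)) :
    AddSubgroup (Fin n → ZMod N) :=
  (L.comap (scaledCast c)).map (intReduction N)

lemma residueSubgroup_constructionA {N : ℕ} {c : ℝ} (hc : c ≠ 0)
    (H : AddSubgroup (Fin n → ZMod N)) : residueSubgroup N c (constructionA c H) = H := by
  rw [residueSubgroup, constructionA,
    AddSubgroup.comap_map_eq_self_of_injective (scaledCast_injective hc),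
    AddSubgroup.map_comap_eq_self_of_surjective (intReduction_surjective N)]

lemma scaledCast_mem_constructionA_iff {N : ℕ} {c : ℝ} (hc : c ≠ 0)
    {H : AddSubgroup (Fin n → ZMod N)} {a : Fin n → ℤ} :
    scaledCast c a ∈ constructionA c H ↔ intReduction N a ∈ H :=
  AddSubgroup.mem_map_iff_mem (scaledCast_injective hc)

lemma intReduction_mem_vanishingSubgroup_iff {N : ℕ} {S : Finset (Fin n)} {γ : SL(n, ℤ)}
    {a : Fin n → ℤ} :
    intReduction N a ∈
        vanishingSubgroup S (SpecialLinearGroup.map (Int.castRingHom (ZMod N)) γ) ↔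
      ∃ v : Fin n → ℤ, (fun i ↦ v i * if i ∈ S then (N : ℤ) else 1) ᵥ* γ.1 = a := by
  simp only [vecMul_eq_iff_eq_vecMul_inv, mem_vanishingSubgroup_iff, ← map_inv,
    intReduction_apply, ← intCast_vecMul, ZMod.intCast_zmod_eq_zero_iff_dvd]
  constructor
  · intro hdvd
    refine ⟨fun i ↦ if i ∈ S then (a ᵥ* (γ⁻¹).1) i / N else (a ᵥ* (γ⁻¹).1) i, funext fun i ↦ ?_⟩
    by_cases hi : i ∈ S
    · simp only [hi, if_true, Int.ediv_mul_cancel (hdvd i hi)]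
    · simp only [hi, if_false, mul_one]
  · rintro ⟨v, hv⟩ s hs
    simp only [← hv, if_pos hs, dvd_mul_left]

end ConstructionA

section PrimeHeckeSet

variable {n : ℕ} (p : ℕ) [hp : Fact p.Prime] (S : Finset (Fin n))

/-- The factor `p ^ (-|S|/n)` that makes an index-`p ^ |S|` sublattice of `ℤⁿ` unimodular. -/
def heckeScale : ℝ := (p : ℝ) ^ (-((S.card : ℝ) / n))

lemma heckeScale_pos : 0 < heckeScale p S := Real.rpow_pos_of_pos (mod_cast hp.out.pos) _

lemma heckeScale_pow_mul : heckeScale p S ^ n * (p : ℝ) ^ S.card = 1 := by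
  have hp0 : (0 : ℝ) < p := mod_cast hp.out.pos
  rcases eq_or_ne n 0 with rfl | hn
  · simp [Subsingleton.elim S ∅]
  rw [heckeScale, ← Real.rpow_natCast, ← Real.rpow_mul hp0.le, ← Real.rpow_natCast,
    ← Real.rpow_add hp0, neg_mul, div_mul_cancel₀ _ (mod_cast hn), neg_add_cancel, Real.rpow_zero]

lemma heckeScale_mul_compl [Nonempty (Fin n)] : heckeScale p S * heckeScale p Sᶜ * p = 1 := by
  have hp0 : (0 : ℝ) < p := mod_cast hp.out.pos
  have hn : (n : ℝ) ≠ 0 := mod_cast (Fin.pos_iff_nonempty.2 ‹_›).ne'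
  have hcard : (S.card : ℝ) + Sᶜ.card = n := by
    rw [← Nat.cast_add, Finset.card_add_card_compl, Fintype.card_fin]
  have hexp : -((S.card : ℝ) / n) + -((Sᶜ.card : ℝ) / n) + 1 = 0 := by field_simp; linarith
  rw [heckeScale, heckeScale, ← Real.rpow_add hp0, ← Real.rpow_add_one hp0.ne', hexp,
    Real.rpow_zero]

/-- The matrix `p ^ (-|S|/n) diag(d)` with `d i = p` for `i ∈ S` and `d i = 1` otherwise. -/
def heckeDiag : SL(n, ℝ) :=
  ⟨diagonal fun i ↦ heckeScale p S * if i ∈ S then (p : ℝ) else 1, by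
    rw [det_diagonal, Finset.prod_mul_distrib, Finset.prod_const, Finset.card_univ,
      Fintype.card_fin, Finset.prod_ite_mem, Finset.univ_inter, Finset.prod_const,
      heckeScale_pow_mul]⟩

lemma heckeDiag_compl [Nonempty (Fin n)] : heckeDiag p Sᶜ = (heckeDiag p S)⁻¹ := by
  rw [eq_inv_iff_mul_eq_one]
  apply Subtype.ext
  rw [Matrix.SpecialLinearGroup.coe_mul, heckeDiag, heckeDiag, diagonal_mul_diagonal,
    Matrix.SpecialLinearGroup.coe_one, diagonal_eq_one]
  ext i
  have := heckeScale_mul_compl p S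
  by_cases hi : i ∈ S <;> simp only [hi, Finset.mem_compl, not_true_eq_false, not_false_eq_true,
    if_true, if_false, Pi.one_apply] <;> linarith

lemma intVecMul_heckeDiag_mul (γ : SL(n, ℤ)) (v : Fin n → ℤ) :
    intVecMul (heckeDiag p S * SpecialLinearGroup.map (Int.castRingHom ℝ) γ) v =
      scaledCast (heckeScale p S) ((fun i ↦ v i * if i ∈ S then (p : ℤ) else 1) ᵥ* γ.1) := by
  rw [intVecMul_mul, intVecMul_apply, scaledCast_apply, intCast_vecMul, ← smul_vecMul]
  congr 1
  ext i
  rw [heckeDiag, vecMul_diagonal, Pi.smul_apply, smul_eq_mul]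
  push_cast
  ring

lemma lattice_mk_heckeDiag_mul (γ : SL(n, ℤ)) :
    (XSpace.mk (heckeDiag p S * SpecialLinearGroup.map (Int.castRingHom ℝ) γ)).lattice =
      constructionA (heckeScale p S)
        (vanishingSubgroup S (SpecialLinearGroup.map (Int.castRingHom (ZMod p)) γ)) := by
  ext w
  simp only [XSpace.lattice_mk, AddMonoidHom.mem_range, intVecMul_heckeDiag_mul, constructionA,
    AddSubgroup.mem_map, AddSubgroup.mem_comap, intReduction_mem_vanishingSubgroup_iff,
    exists_exists_eq_and]

lemma finite_setOf_mk_heckeDiag_mul :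
    {x | ∃ γ ∈ Gamma n, x = XSpace.mk (heckeDiag p S * γ)}.Finite := by
  refine ((Set.finite_range (constructionA (N := p) (heckeScale p S))).preimage
    XSpace.lattice_injective.injOn).subset ?_
  rintro _ ⟨_, ⟨γ, rfl⟩, rfl⟩
  exact ⟨_, (lattice_mk_heckeDiag_mul p S γ).symm⟩

/-- The Hecke set of the sublattices of `ℤⁿ` with quotient `(ℤ/pℤ) ^ |S|`, rescaled to be
unimodular. -/
def primeHeckeSet : HeckeSet n where
  base := heckeDiag p S
  points := (finite_setOf_mk_heckeDiag_mul p S).toFinset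
  mem_points_iff x := by simp

variable {p S}

lemma exists_lattice_eq_of_mem_primeHeckeSet {x : XSpace n} (hx : x ∈ (primeHeckeSet p S).points) :
    ∃ M : SL(n, ZMod p), x.lattice = constructionA (heckeScale p S) (vanishingSubgroup S M) := by
  obtain ⟨_, ⟨γ, rfl⟩, rfl⟩ := ((primeHeckeSet p S).mem_points_iff x).1 hx
  exact ⟨_, lattice_mk_heckeDiag_mul p S γ⟩

lemma exists_mem_primeHeckeSet_lattice_eq [Nontrivial (Fin n)] (M : SL(n, ZMod p)) :
    ∃ x ∈ (primeHeckeSet p S).points,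
      x.lattice = constructionA (heckeScale p S) (vanishingSubgroup S M) := by
  obtain ⟨γ, rfl⟩ := surjective_SL_map_zmod p M
  exact ⟨_, ((primeHeckeSet p S).mem_points_iff _).2 ⟨_, ⟨γ, rfl⟩, rfl⟩,
    lattice_mk_heckeDiag_mul p S γ⟩

variable (p S) in
/-- The subgroup `H` of `(ℤ/pℤ)ⁿ` such that a point `x` of `primeHeckeSet p S` has lattice
`constructionA (heckeScale p S) H`. -/
def congruenceSubgroup (x : XSpace n) : AddSubgroup (Fin n → ZMod p) :=
  residueSubgroup p (heckeScale p S) x.lattice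

lemma congruenceSubgroup_eq_of_lattice_eq {x : XSpace n} {H : AddSubgroup (Fin n → ZMod p)}
    (hx : x.lattice = constructionA (heckeScale p S) H) : congruenceSubgroup p S x = H := by
  rw [congruenceSubgroup, hx, residueSubgroup_constructionA (heckeScale_pos p S).ne']

lemma lattice_eq_constructionA {x : XSpace n} (hx : x ∈ (primeHeckeSet p S).points) :
    x.lattice = constructionA (heckeScale p S) (congruenceSubgroup p S x) := by
  obtain ⟨M, hM⟩ := exists_lattice_eq_of_mem_primeHeckeSet hx
  rw [congruenceSubgroup_eq_of_lattice_eq hM, hM]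

lemma bijOn_congruenceSubgroup [Nontrivial (Fin n)] (hS : Sᶜ.Nonempty) :
    Set.BijOn (congruenceSubgroup p S) (primeHeckeSet p S).points
      (congruenceSet p n S.card) := by
  refine ⟨fun x hx ↦ ?_, fun x hx y hy hxy ↦ ?_, fun H hH ↦ ?_⟩
  · obtain ⟨M, hM⟩ := exists_lattice_eq_of_mem_primeHeckeSet hx
    exact (mem_congruenceSet_iff_exists_vanishingSubgroup hS).2
      ⟨M, (congruenceSubgroup_eq_of_lattice_eq hM).symm⟩
  · apply XSpace.lattice_injective
    rw [lattice_eq_constructionA hx, lattice_eq_constructionA hy, hxy]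
  · obtain ⟨M, rfl⟩ := (mem_congruenceSet_iff_exists_vanishingSubgroup hS).1 hH
    obtain ⟨x, hx, hxM⟩ := exists_mem_primeHeckeSet_lattice_eq (S := S) M
    exact ⟨x, hx, congruenceSubgroup_eq_of_lattice_eq hxM⟩

lemma vecMul_mem_congruenceSubgroup_rightTranslate_iff {x : XSpace n}
    (hx : x ∈ (primeHeckeSet p S).points) (γ : SL(n, ℤ)) (b : Fin n → ZMod p) :
    b ᵥ* (SpecialLinearGroup.map (Int.castRingHom (ZMod p)) γ).1 ∈ congruenceSubgroup p S
        (rightTranslate n (SpecialLinearGroup.map (Int.castRingHom ℝ) γ) x) ↔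
      b ∈ congruenceSubgroup p S x := by
  have hc := (heckeScale_pos p S).ne'
  have hγx := (primeHeckeSet p S).rightTranslate_mem_points ⟨γ, rfl⟩ hx
  obtain ⟨a, rfl⟩ := intReduction_surjective p b
  rw [intReduction_apply, ← intCast_vecMul, ← intReduction_apply, ← intReduction_apply,
    ← scaledCast_mem_constructionA_iff hc, ← scaledCast_mem_constructionA_iff hc,
    ← lattice_eq_constructionA hx, ← lattice_eq_constructionA hγx, scaledCast_apply,
    intCast_vecMul, ← smul_vecMul, ← scaledCast_apply, XSpace.vecMul_mem_lattice_rightTranslate]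

lemma card_congruenceSubgroup {x : XSpace n} (hx : x ∈ (primeHeckeSet p S).points) :
    Nat.card (congruenceSubgroup p S x) = p ^ (n - S.card) := by
  obtain ⟨M, hM⟩ := exists_lattice_eq_of_mem_primeHeckeSet hx
  rw [congruenceSubgroup_eq_of_lattice_eq hM, card_vanishingSubgroup, ZMod.card]

variable (p S) in
open Classical in
/-- The number of points of `primeHeckeSet p S` whose congruence subgroup contains `b`. -/
def incidenceCount (b : Fin n → ZMod p) : ℕ :=
  ((primeHeckeSet p S).points.filter fun x ↦ b ∈ congruenceSubgroup p S x).card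

lemma incidenceCount_eq_of_ne_zero [Nontrivial (Fin n)] {a b : Fin n → ZMod p} (ha : a ≠ 0)
    (hb : b ≠ 0) : incidenceCount p S a = incidenceCount p S b := by
  classical
  obtain ⟨M, rfl⟩ := exists_SL_vecMul_eq ha hb
  obtain ⟨γ, rfl⟩ := surjective_SL_map_zmod p M
  rw [incidenceCount, incidenceCount, Finset.card_filter, Finset.card_filter,
    ← (primeHeckeSet p S).sum_rightTranslate_of_mem
      (fun x ↦ if a ᵥ* _ ∈ congruenceSubgroup p S x then (1 : ℕ) else 0) ⟨γ, rfl⟩]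
  refine Finset.sum_congr rfl fun x hx ↦ ?_
  simp only [vecMul_mem_congruenceSubgroup_rightTranslate_iff hx]

/-- Double counting of the pairs `(b, x)` with `0 ≠ b ∈ congruenceSubgroup p S x`. -/
lemma incidenceCount_mul [Nontrivial (Fin n)] {b : Fin n → ZMod p} (hb : b ≠ 0) :
    incidenceCount p S b * (p ^ n - 1) =
      (primeHeckeSet p S).points.card * (p ^ (n - S.card) - 1) := by
  classical
  calc incidenceCount p S b * (p ^ n - 1)
      = ∑ a ∈ Finset.univ.erase (0 : Fin n → ZMod p), incidenceCount p S a := by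
        rw [Finset.sum_congr rfl fun a ha ↦
            incidenceCount_eq_of_ne_zero (Finset.ne_of_mem_erase ha) hb,
          Finset.sum_const, Finset.card_erase_of_mem (Finset.mem_univ _), Finset.card_univ,
          Fintype.card_fun, ZMod.card, Fintype.card_fin, smul_eq_mul, mul_comm]
    _ = ∑ x ∈ (primeHeckeSet p S).points, ((Finset.univ.erase (0 : Fin n → ZMod p)).filter
          (· ∈ congruenceSubgroup p S x)).card := by
        simp only [incidenceCount, Finset.card_filter]
        exact Finset.sum_comm
    _ = _ := by
        rw [Finset.sum_congr rfl fun x hx ↦ ?_, Finset.sum_const, smul_eq_mul]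
        rw [Finset.filter_erase, Finset.card_erase_of_mem (by simp [zero_mem]),
          ← card_congruenceSubgroup hx, Nat.card_eq_fintype_card, Fintype.card_subtype]

end PrimeHeckeSet

section RiemannSums

open Filter
open scoped ENNReal

variable {n : ℕ}

/-- The coordinatewise floor `ℝⁿ → ℤⁿ`. -/
def vecFloor (x : Fin n → ℝ) : Fin n → ℤ := fun i ↦ ⌊x i⌋

lemma measurable_vecFloor : Measurable (vecFloor (n := n)) :=
  measurable_pi_lambda _ fun i ↦ Int.measurable_floor.comp (measurable_pi_apply i)

lemma lintegral_comp_vecFloor (k : (Fin n → ℤ) → ℝ≥0∞) :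
    ∫⁻ x : Fin n → ℝ, k (vecFloor x) = ∑' a, k a := by
  rw [← lintegral_map (measurable_of_countable k) measurable_vecFloor, lintegral_countable']
  refine tsum_congr fun a ↦ ?_
  have hcell : vecFloor ⁻¹' {a} = Set.univ.pi fun i ↦ Set.Ico (a i : ℝ) (a i + 1) := by
    ext x
    simp only [Set.mem_preimage, Set.mem_singleton_iff, Set.mem_pi, Set.mem_univ, true_imp_iff,
      Set.mem_Ico, funext_iff, vecFloor, Int.floor_eq_iff]
  rw [Measure.map_apply measurable_vecFloor (measurableSet_singleton a), hcell,
    Real.volume_pi_Ico]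
  simp

lemma lintegral_comp_vecFloor_smul {c : ℝ} (hc : 0 < c) (k : (Fin n → ℤ) → ℝ≥0∞) :
    ∫⁻ x : Fin n → ℝ, k (vecFloor (c⁻¹ • x)) = ENNReal.ofReal (c ^ n) * ∑' a, k a := by
  have hk : Measurable fun x ↦ k (vecFloor x) :=
    (measurable_of_countable k).comp measurable_vecFloor
  rw [← lintegral_map hk (measurable_const_smul c⁻¹),
    Measure.map_addHaar_smul volume (inv_ne_zero hc.ne'), lintegral_smul_measure,
    lintegral_comp_vecFloor, Module.finrank_fin_fun, smul_eq_mul, inv_pow, inv_inv,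
    abs_of_pos (pow_pos hc n)]

lemma norm_scaledCast_vecFloor_sub_le {c : ℝ} (hc : 0 < c) (x : Fin n → ℝ) :
    ‖scaledCast c (vecFloor (c⁻¹ • x)) - x‖ ≤ c := by
  refine (pi_norm_le_iff_of_nonneg hc.le).2 fun i ↦ ?_
  have hlower := Int.floor_le (c⁻¹ * x i)
  have hupper := Int.lt_floor_add_one (c⁻¹ * x i)
  have hcancel : c * (c⁻¹ * x i) = x i := mul_inv_cancel_left₀ hc.ne' _
  change |c * (⌊c⁻¹ * x i⌋ : ℝ) - x i| ≤ c
  rw [abs_le]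
  constructor <;> nlinarith

/-- Bounded measurable functions of bounded support that are continuous almost everywhere; their
integrals are limits of Riemann sums. -/
structure IsRiemannIntegrand (f : (Fin n → ℝ) → ℝ≥0∞) : Prop where
  measurable : Measurable f
  exists_le : ∃ B : NNReal, ∀ w, f w ≤ B
  isBounded_support : Bornology.IsBounded (Function.support f)
  ae_continuousAt : ∀ᵐ w, ContinuousAt f w

namespace IsRiemannIntegrand

variable {f : (Fin n → ℝ) → ℝ≥0∞}

lemma exists_radius (hf : IsRiemannIntegrand f) : ∃ R : ℝ, ∀ w, R < ‖w‖ → f w = 0 := by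
  obtain ⟨R, hR⟩ := hf.isBounded_support.exists_norm_le
  exact ⟨R, fun w hw ↦ by_contra fun hfw ↦ hw.not_ge (hR w hfw)⟩

lemma lintegral_ne_top (hf : IsRiemannIntegrand f) : ∫⁻ w, f w ≠ ∞ := by
  rw [← setLIntegral_eq_of_support_subset subset_rfl]
  exact (setLIntegral_lt_top_of_le_nnreal hf.isBounded_support.measure_lt_top.ne
    (hf.exists_le.imp fun _ hfB w _ ↦ hfB w)).ne

theorem tendsto_riemannSum (hf : IsRiemannIntegrand f) {ι : Type*} {l : Filter ι}
    [l.IsCountablyGenerated] {c : ι → ℝ} (hc0 : ∀ i, 0 < c i) (hc : Tendsto c l (𝓝 0)) :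
    Tendsto (fun i ↦ ENNReal.ofReal (c i ^ n) * ∑' a : Fin n → ℤ, f (scaledCast (c i) a)) l
      (𝓝 (∫⁻ w, f w)) := by
  obtain ⟨B, hfB⟩ := hf.exists_le
  obtain ⟨R, hR⟩ := hf.exists_radius
  simp only [← fun i ↦ lintegral_comp_vecFloor_smul (hc0 i) fun a ↦ f (scaledCast (c i) a)]
  refine tendsto_lintegral_filter_of_dominated_convergence
    ((Metric.closedBall (0 : Fin n → ℝ) (R + 1)).indicator fun _ ↦ (B : ℝ≥0∞))
    (.of_forall fun i ↦ (measurable_of_countable fun a ↦ f (scaledCast (c i) a)).comp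
      (measurable_vecFloor.comp (measurable_const_smul _))) ?_ ?_ ?_
  · filter_upwards [hc.eventually_lt_const one_pos] with i hi
    refine .of_forall fun x ↦ ?_
    by_cases hx : x ∈ Metric.closedBall (0 : Fin n → ℝ) (R + 1)
    · rw [Set.indicator_of_mem hx]
      exact hfB _
    · rw [Set.indicator_of_notMem hx, nonpos_iff_eq_zero]
      apply hR
      rw [mem_closedBall_zero_iff, not_le] at hx
      have hclose := norm_scaledCast_vecFloor_sub_le (hc0 i) x
      have htri := norm_sub_norm_le x (scaledCast (c i) (vecFloor ((c i)⁻¹ • x)))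
      rw [norm_sub_rev] at hclose
      linarith
  · rw [lintegral_indicator_const Metric.isClosed_closedBall.measurableSet]
    exact ENNReal.mul_ne_top ENNReal.coe_ne_top measure_closedBall_lt_top.ne
  · filter_upwards [hf.ae_continuousAt] with x hx
    refine hx.tendsto.comp (tendsto_iff_norm_sub_tendsto_zero.2 ?_)
    exact squeeze_zero (fun _ ↦ norm_nonneg _)
      (fun i ↦ norm_scaledCast_vecFloor_sub_le (hc0 i) x) hc

end IsRiemannIntegrand

lemma measurePreserving_vecMul (g : SL(n, ℝ)) :
    MeasurePreserving (fun w : Fin n → ℝ ↦ w ᵥ* g.1) volume volume := by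
  have hdet : g.1ᵀ.det = 1 := g.1.det_transpose.trans g.2
  have hmap := Real.map_matrix_volume_pi_eq_smul_volume_pi (hdet.trans_ne one_ne_zero)
  have hfun : ⇑(Matrix.toLin' g.1ᵀ) = fun w : Fin n → ℝ ↦ w ᵥ* g.1 := by
    funext w
    rw [Matrix.toLin'_apply, Matrix.mulVec_transpose]
  refine ⟨by fun_prop, ?_⟩
  rwa [hfun, hdet, inv_one, abs_one, ENNReal.ofReal_one, one_smul] at hmap

lemma IsRiemannIntegrand.comp_vecMul {f : (Fin n → ℝ) → ℝ≥0∞} (hf : IsRiemannIntegrand f)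
    (g : SL(n, ℝ)) : IsRiemannIntegrand fun w ↦ f (w ᵥ* g.1) where
  measurable := hf.measurable.comp (measurePreserving_vecMul g).measurable
  exists_le := hf.exists_le.imp fun _ hfB _ ↦ hfB _
  isBounded_support := by
    let L : (Fin n → ℝ) →L[ℝ] (Fin n → ℝ) := (Matrix.vecMulLinear (g⁻¹).1).toContinuousLinearMap
    refine (L.lipschitz.isBounded_image hf.isBounded_support).subset fun w hw ↦
      ⟨w ᵥ* g.1, hw, vecMul_mul_inv w g⟩
  ae_continuousAt := by
    filter_upwards [(measurePreserving_vecMul g).quasiMeasurePreserving.ae hf.ae_continuousAt]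
      with w hw
    exact ContinuousAt.comp (f := fun w : Fin n → ℝ ↦ w ᵥ* g.1) hw (by fun_prop)

end RiemannSums

section SiegelTransform

open Filter
open scoped ENNReal

variable {n : ℕ}

/-- The Siegel transform of `f`, the sum of the values of `f` on the lattice attached to a point
of `X`. -/
def siegelTransform (f : (Fin n → ℝ) → ℝ≥0∞) (x : XSpace n) : ℝ≥0∞ := ∑' w : x.lattice, f w

lemma siegelTransform_mk (f : (Fin n → ℝ) → ℝ≥0∞) (g : SL(n, ℝ)) :
    siegelTransform f (XSpace.mk g) = ∑' v : Fin n → ℤ, f (intVecMul g v) :=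
  tsum_range f (intVecMul_injective g)

lemma siegelTransform_rightTranslate (f : (Fin n → ℝ) → ℝ≥0∞) (g : SL(n, ℝ)) (x : XSpace n) :
    siegelTransform f (rightTranslate n g x) = siegelTransform (fun w ↦ f (w ᵥ* g.1)) x := by
  obtain ⟨h, rfl⟩ := XSpace.mk_surjective x
  simp only [rightTranslate_mk, siegelTransform_mk, intVecMul_mul]

lemma continuous_intVecMul (v : Fin n → ℤ) : Continuous fun g : SL(n, ℝ) ↦ intVecMul g v := by
  simp only [intVecMul_apply]
  exact continuous_const.matrix_vecMul continuous_subtype_val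

lemma measurable_siegelTransform {f : (Fin n → ℝ) → ℝ≥0∞} (hf : Measurable f) :
    Measurable (siegelTransform f) := by
  rw [XSpace.measurable_iff_comp_mk]
  simp only [siegelTransform_mk]
  exact Measurable.tsum fun v ↦ hf.comp (continuous_intVecMul v).measurable

variable {p : ℕ} [Fact p.Prime] {S : Finset (Fin n)}

open Classical in
lemma siegelTransform_of_mem_primeHeckeSet (f : (Fin n → ℝ) → ℝ≥0∞) {x : XSpace n}
    (hx : x ∈ (primeHeckeSet p S).points) :
    siegelTransform f x = ∑' a : Fin n → ℤ,
      if intReduction p a ∈ congruenceSubgroup p S x then f (scaledCast (heckeScale p S) a)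
      else 0 := by
  have hinj := scaledCast_injective (n := n) (heckeScale_pos p S).ne'
  rw [siegelTransform, lattice_eq_constructionA hx]
  refine (tsum_image f hinj.injOn).trans
    ((tsum_subtype _ fun a ↦ f (scaledCast (heckeScale p S) a)).trans (tsum_congr fun a ↦ ?_))
  rw [Set.indicator_apply]
  rfl

lemma lintegral_siegelTransform_kernel_mk (f : (Fin n → ℝ) → ℝ≥0∞) (g : SL(n, ℝ)) :
    ∫⁻ y, siegelTransform f y ∂(primeHeckeSet p S).kernel (XSpace.mk g) =
      ∑' a : Fin n → ℤ, ((primeHeckeSet p S).points.card : ℝ≥0∞)⁻¹ *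
        incidenceCount p S (intReduction p a) * f (scaledCast (heckeScale p S) a ᵥ* g.1) := by
  classical
  rw [HeckeSet.lintegral_kernel_mk, Finset.sum_congr rfl fun x hx ↦
      (siegelTransform_rightTranslate f g x).trans (siegelTransform_of_mem_primeHeckeSet _ hx),
    ← Summable.tsum_finsetSum fun _ _ ↦ ENNReal.summable, ← ENNReal.tsum_mul_left]
  refine tsum_congr fun a ↦ ?_
  rw [mul_assoc, incidenceCount, Finset.card_filter, Nat.cast_sum, Finset.sum_mul]
  simp only [Nat.cast_ite, Nat.cast_one, Nat.cast_zero, ite_mul, one_mul, zero_mul]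

end SiegelTransform

section LIntegralLimits

open Filter
open scoped ENNReal

lemma lintegral_le_of_forall_lintegral_min_le {α : Type*} [MeasurableSpace α] {μ : Measure α}
    {F : α → ℝ≥0∞} (hF : Measurable F) {I : ℝ≥0∞}
    (hmin : ∀ R : ℕ, ∫⁻ x, min (F x) R ∂μ ≤ I) : ∫⁻ x, F x ∂μ ≤ I := by
  refine le_of_tendsto' (lintegral_tendsto_of_tendsto_of_monotone
    (fun R : ℕ ↦ (hF.min measurable_const).aemeasurable)
    (.of_forall fun x R R' hR ↦ min_le_min_left _ (mod_cast hR)) (.of_forall fun x ↦ ?_)) hmin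
  simpa using tendsto_const_nhds.min ENNReal.tendsto_nat_nhds_top

lemma tendsto_lintegral_sub_const_zero {α ι : Type*} [MeasurableSpace α] {ν : Measure α}
    [IsProbabilityMeasure ν] {l : Filter ι} [l.IsCountablyGenerated] {F : ι → α → ℝ≥0∞}
    (hF : ∀ i, Measurable (F i)) {I : ℝ≥0∞} (hI : I ≠ ∞) (hle : ∀ i, ∫⁻ x, F i x ∂ν ≤ I)
    (hlim : ∀ x, Tendsto (fun i ↦ F i x) l (𝓝 I)) :
    Tendsto (fun i ↦ ∫⁻ x, (F i x - I) ∂ν) l (𝓝 0) := by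
  have hbelow : Tendsto (fun i ↦ ∫⁻ x, (I - F i x) ∂ν) l (𝓝 0) := by
    have hdiff (x : α) : Tendsto (fun i ↦ I - F i x) l (𝓝 (I - I)) :=
      ENNReal.Tendsto.sub tendsto_const_nhds (hlim x) (.inl hI)
    simpa using tendsto_lintegral_filter_of_dominated_convergence (fun _ ↦ I)
      (.of_forall fun i ↦ measurable_const.sub (hF i))
      (.of_forall fun i ↦ .of_forall fun x ↦ tsub_le_self) (by simpa using hI)
      (.of_forall hdiff : ∀ᵐ x ∂ν, _)
  refine tendsto_of_tendsto_of_tendsto_of_le_of_le tendsto_const_nhds hbelow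
    (fun _ ↦ zero_le) fun i ↦ (ENNReal.add_le_add_iff_right hI).1 ?_
  calc ∫⁻ x, (F i x - I) ∂ν + I
      = ∫⁻ x, (F i x - I + I) ∂ν := by rw [lintegral_add_right _ measurable_const]; simp
    _ = ∫⁻ x, (I - F i x + F i x) ∂ν := by simp only [tsub_add_eq_max, max_comm]
    _ = ∫⁻ x, (I - F i x) ∂ν + ∫⁻ x, F i x ∂ν := lintegral_add_right _ (hF i)
    _ ≤ ∫⁻ x, (I - F i x) ∂ν + I := by gcongr; exact hle i

end LIntegralLimits

section PrimeLimits

open Filter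
open scoped ENNReal

/-- The filter of primes tending to infinity. -/
def primesAtTop : Filter Nat.Primes := comap (fun p : Nat.Primes ↦ (p : ℕ)) atTop

instance : primesAtTop.IsCountablyGenerated := comap.isCountablyGenerated _ _

instance : primesAtTop.NeBot :=
  comap_neBot_iff_frequently.2 <|
    (Nat.frequently_atTop_iff_infinite.2 Nat.infinite_setOfPred_prime).mono
      fun p hp ↦ ⟨⟨p, hp⟩, rfl⟩

instance (p : Nat.Primes) : Fact (p : ℕ).Prime := ⟨p.2⟩

lemma tendsto_natCast_primesAtTop :
    Tendsto (fun p : Nat.Primes ↦ ((p : ℕ) : ℝ)) primesAtTop atTop :=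
  tendsto_natCast_atTop_atTop.comp tendsto_comap

variable {n : ℕ} {S : Finset (Fin n)}

lemma tendsto_heckeScale_zero (hS : S.Nonempty) :
    Tendsto (fun p : Nat.Primes ↦ heckeScale (p : ℕ) S) primesAtTop (𝓝 0) := by
  have hexp : (0 : ℝ) < S.card / n :=
    div_pos (mod_cast hS.card_pos) (mod_cast hS.choose.pos)
  exact (tendsto_rpow_neg_atTop hexp).comp tendsto_natCast_primesAtTop

lemma tendsto_heckeScale_mul_atTop (hS : Sᶜ.Nonempty) :
    Tendsto (fun p : Nat.Primes ↦ heckeScale (p : ℕ) S * (p : ℕ)) primesAtTop atTop := by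
  have : Nonempty (Fin n) := ⟨hS.choose⟩
  have hinv (p : Nat.Primes) : (heckeScale (p : ℕ) Sᶜ)⁻¹ = heckeScale (p : ℕ) S * (p : ℕ) :=
    (eq_inv_of_mul_eq_one_left (by rw [← heckeScale_mul_compl (p : ℕ) S]; ring)).symm
  refine Tendsto.congr hinv (tendsto_inv_nhdsGT_zero.comp ?_)
  exact tendsto_nhdsWithin_iff.2
    ⟨tendsto_heckeScale_zero hS, .of_forall fun p ↦ heckeScale_pos (p : ℕ) Sᶜ⟩

lemma tendsto_pow_sub_one_div_mul_pow {i : ℕ} (hi : i < n) :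
    Tendsto (fun x : ℝ ↦ (x ^ (n - i) - 1) / (x ^ n - 1) * x ^ i) atTop (𝓝 1) := by
  have hinv {k : ℕ} (hk : k ≠ 0) : Tendsto (fun x : ℝ ↦ (x ^ k)⁻¹) atTop (𝓝 0) :=
    tendsto_inv_atTop_zero.comp (tendsto_pow_atTop hk)
  have hlim : Tendsto (fun x : ℝ ↦ (1 - (x ^ (n - i))⁻¹) / (1 - (x ^ n)⁻¹)) atTop (𝓝 1) := by
    have hdiv := ((hinv (k := n - i) (by omega)).const_sub 1).div
      ((hinv (k := n) (by omega)).const_sub 1) (by norm_num)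
    rwa [sub_zero, div_one] at hdiv
  refine hlim.congr' ?_
  filter_upwards [eventually_gt_atTop 1] with x hx
  have hxn : x ^ n - 1 ≠ 0 := (sub_pos.2 (one_lt_pow₀ hx (by omega))).ne'
  have hsplit : x ^ n = x ^ (n - i) * x ^ i := by rw [← pow_add, Nat.sub_add_cancel hi.le]
  have hden : 1 - (x ^ n)⁻¹ = (x ^ n - 1) / x ^ n := by field_simp
  rw [hden, hsplit] at *
  field_simp

end PrimeLimits

section SiegelMeanValue

open Filter
open scoped ENNReal

variable {n : ℕ}

lemma mul_le_norm_scaledCast {N : ℕ} {c : ℝ} (hc : 0 ≤ c) {a : Fin n → ℤ} (ha : a ≠ 0)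
    (hred : intReduction N a = 0) : c * N ≤ ‖scaledCast c a‖ := by
  obtain ⟨i, hi⟩ := Function.ne_iff.1 ha
  have hdvd : (N : ℤ) ∣ a i := (ZMod.intCast_zmod_eq_zero_iff_dvd _ _).1 (congrFun hred i)
  have hle : (N : ℝ) ≤ |(a i : ℝ)| :=
    mod_cast Int.le_of_dvd (abs_pos.2 hi) ((dvd_abs _ _).2 hdvd)
  calc c * N ≤ c * |(a i : ℝ)| := by gcongr
    _ = ‖scaledCast c a i‖ := by
        rw [scaledCast_apply, Pi.smul_apply, norm_smul, Real.norm_of_nonneg hc, Real.norm_eq_abs]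
    _ ≤ ‖scaledCast c a‖ := norm_le_pi_norm _ i

variable [Nontrivial (Fin n)] {p : ℕ} [hp : Fact p.Prime] {S : Finset (Fin n)}

lemma inv_card_mul_incidenceCount {b : Fin n → ZMod p} (hb : b ≠ 0) :
    ((primeHeckeSet p S).points.card : ℝ≥0∞)⁻¹ * incidenceCount p S b =
      ENNReal.ofReal (((p : ℝ) ^ (n - S.card) - 1) / ((p : ℝ) ^ n - 1)) := by
  have hn : n ≠ 0 := (Classical.arbitrary (Fin n)).pos.ne'
  have hpn : (0 : ℝ) < (p : ℝ) ^ n - 1 :=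
    sub_pos.2 (one_lt_pow₀ (mod_cast hp.out.one_lt) hn)
  have hcard : (0 : ℝ) < (primeHeckeSet p S).points.card :=
    mod_cast (primeHeckeSet p S).points_nonempty.card_pos
  have hcount : (incidenceCount p S b : ℝ) * ((p : ℝ) ^ n - 1) =
      (primeHeckeSet p S).points.card * ((p : ℝ) ^ (n - S.card) - 1) := by
    have hcast := congrArg (Nat.cast : ℕ → ℝ) (incidenceCount_mul (S := S) hb)
    push_cast [Nat.cast_sub (Nat.one_le_pow _ _ hp.out.pos)] at hcast
    exact hcast
  have hratio : ((p : ℝ) ^ (n - S.card) - 1) / ((p : ℝ) ^ n - 1) =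
      ((primeHeckeSet p S).points.card : ℝ)⁻¹ * incidenceCount p S b := by
    rw [div_eq_iff hpn.ne', mul_assoc, hcount, inv_mul_cancel_left₀ hcard.ne']
  rw [hratio, ENNReal.ofReal_mul (by positivity), ENNReal.ofReal_inv_of_pos hcard,
    ENNReal.ofReal_natCast, ENNReal.ofReal_natCast]

lemma lintegral_siegelTransform_kernel_mk_eq_riemannSum {f : (Fin n → ℝ) → ℝ≥0∞} (hf0 : f 0 = 0)
    {g : SL(n, ℝ)} (hf : ∀ w, heckeScale p S * p ≤ ‖w‖ → f (w ᵥ* g.1) = 0) :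
    ∫⁻ y, siegelTransform f y ∂(primeHeckeSet p S).kernel (XSpace.mk g) =
      ENNReal.ofReal (((p : ℝ) ^ (n - S.card) - 1) / ((p : ℝ) ^ n - 1) * (p : ℝ) ^ S.card) *
        (ENNReal.ofReal (heckeScale p S ^ n) *
          ∑' a : Fin n → ℤ, f (scaledCast (heckeScale p S) a ᵥ* g.1)) := by
  have hscale : ENNReal.ofReal ((p : ℝ) ^ S.card) * ENNReal.ofReal (heckeScale p S ^ n) = 1 := by
    rw [← ENNReal.ofReal_mul (by positivity), mul_comm, heckeScale_pow_mul, ENNReal.ofReal_one]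
  rw [lintegral_siegelTransform_kernel_mk, ENNReal.ofReal_mul' (by positivity), mul_assoc,
    ← mul_assoc (ENNReal.ofReal (_ ^ _)), hscale, one_mul, ← ENNReal.tsum_mul_left]
  refine tsum_congr fun a ↦ ?_
  by_cases hred : intReduction p a = 0
  · have hzero : f (scaledCast (heckeScale p S) a ᵥ* g.1) = 0 := by
      rcases eq_or_ne a 0 with rfl | ha
      · rw [map_zero, zero_vecMul, hf0]
      · exact hf _ (mul_le_norm_scaledCast (heckeScale_pos p S).le ha hred)
    rw [hzero, mul_zero, mul_zero]
  · rw [inv_card_mul_incidenceCount hred]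

variable {f : (Fin n → ℝ) → ℝ≥0∞}

theorem tendsto_lintegral_siegelTransform_kernel (hf : IsRiemannIntegrand f) (hf0 : f 0 = 0)
    (hS : S.Nonempty) (hSc : Sᶜ.Nonempty) (x : XSpace n) :
    Tendsto (fun p : Nat.Primes ↦ ∫⁻ y, siegelTransform f y ∂(primeHeckeSet (p : ℕ) S).kernel x)
      primesAtTop (𝓝 (∫⁻ w, f w)) := by
  obtain ⟨g, rfl⟩ := XSpace.mk_surjective x
  obtain ⟨R, hR⟩ := (hf.comp_vecMul g).exists_radius
  have hcard : S.card < n := by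
    simpa using Finset.card_lt_univ_of_notMem (Finset.mem_compl.1 hSc.choose_spec)
  have hdensity := ENNReal.tendsto_ofReal
    ((tendsto_pow_sub_one_div_mul_pow hcard).comp tendsto_natCast_primesAtTop)
  have hriemann := (hf.comp_vecMul g).tendsto_riemannSum
    (fun p : Nat.Primes ↦ heckeScale_pos (p : ℕ) S) (tendsto_heckeScale_zero hS)
  rw [(measurePreserving_vecMul g).lintegral_comp hf.measurable] at hriemann
  have hmul := ENNReal.Tendsto.mul hdensity (.inl (by simp)) hriemann (.inr (by simp))
  rw [ENNReal.ofReal_one, one_mul] at hmul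
  refine hmul.congr' ?_
  filter_upwards [(tendsto_heckeScale_mul_atTop hSc).eventually_gt_atTop R] with p hp
  exact (lintegral_siegelTransform_kernel_mk_eq_riemannSum hf0
    fun w hw ↦ hR w (hp.trans_le hw)).symm

variable (μ : Measure (XSpace n)) [IsProbabilityMeasure μ]
  [SMulInvariantMeasure SL(n, ℝ) (XSpace n) μ]

lemma primeHeckeSet_compl_base (p : ℕ) [Fact p.Prime] (S : Finset (Fin n)) :
    (primeHeckeSet p Sᶜ).base = (primeHeckeSet p S).base⁻¹ :=
  heckeDiag_compl p S

lemma lintegral_min_le_lintegral_min_kernel {F : XSpace n → ℝ≥0∞} (hF : Measurable F)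
    (R : ℝ≥0∞) :
    ∫⁻ x, min (F x) R ∂μ ≤ ∫⁻ x, min (∫⁻ y, F y ∂(primeHeckeSet p S).kernel x) R ∂μ := by
  rw [← HeckeSet.lintegral_kernel μ (S := primeHeckeSet p S) (primeHeckeSet_compl_base p S)
    (hF.min measurable_const)]
  refine lintegral_mono fun x ↦ le_min (lintegral_mono fun y ↦ min_le_left _ _) ?_
  exact (lintegral_mono fun y ↦ min_le_right _ _).trans_eq (by simp)

theorem lintegral_siegelTransform_le (hf : IsRiemannIntegrand f) (hf0 : f 0 = 0) :
    ∫⁻ x, siegelTransform f x ∂μ ≤ ∫⁻ w, f w := by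
  have hmeas := measurable_siegelTransform hf.measurable
  obtain ⟨i, j, hij⟩ := exists_pair_ne (Fin n)
  refine lintegral_le_of_forall_lintegral_min_le hmeas fun R ↦ ?_
  have hlim : Tendsto (fun p : Nat.Primes ↦ ∫⁻ x,
      min (∫⁻ y, siegelTransform f y ∂(primeHeckeSet (p : ℕ) {i}).kernel x) R ∂μ) primesAtTop
      (𝓝 (∫⁻ _, min (∫⁻ w, f w) R ∂μ)) := by
    refine tendsto_lintegral_filter_of_dominated_convergence (fun _ ↦ (R : ℝ≥0∞))
      (.of_forall fun p ↦ hmeas.lintegral_kernel.min measurable_const)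
      (.of_forall fun p ↦ .of_forall fun x ↦ min_le_right _ _) (by simp) (.of_forall fun x ↦ ?_)
    exact (tendsto_lintegral_siegelTransform_kernel hf hf0 (Finset.singleton_nonempty i)
      ⟨j, by simpa using hij.symm⟩ x).min tendsto_const_nhds
  refine (ge_of_tendsto hlim
    (.of_forall fun p ↦ lintegral_min_le_lintegral_min_kernel μ hmeas R)).trans ?_
  rw [lintegral_const, measure_univ, mul_one]
  exact min_le_left _ _

theorem tendsto_lintegral_siegelTransform_kernel_sub (hf : IsRiemannIntegrand f) (hf0 : f 0 = 0)
    (hS : S.Nonempty) (hSc : Sᶜ.Nonempty) :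
    Tendsto (fun p : Nat.Primes ↦ ∫⁻ x,
      (∫⁻ y, siegelTransform f y ∂(primeHeckeSet (p : ℕ) S).kernel x - ∫⁻ w, f w) ∂μ)
      primesAtTop (𝓝 0) := by
  have hmeas := measurable_siegelTransform hf.measurable
  refine tendsto_lintegral_sub_const_zero (fun p ↦ hmeas.lintegral_kernel) hf.lintegral_ne_top
    (fun p ↦ ?_) (tendsto_lintegral_siegelTransform_kernel hf hf0 hS hSc)
  rw [HeckeSet.lintegral_kernel μ (primeHeckeSet_compl_base (p : ℕ) S) hmeas]
  exact lintegral_siegelTransform_le μ hf hf0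

end SiegelMeanValue

section Unipotent

variable {n : ℕ} (i : Fin n)

/-- The unipotent matrix agreeing with the identity except in column `i`, whose entries off the
diagonal are those of `t`; the entry `t i` is ignored, which lets `t` range over a space of
dimension `n` with its standard lattice. -/
def colUnipotent (t : Fin n → ℝ) : SL(n, ℝ) :=
  ⟨1 + vecMulVec (Function.update t i 0) (Pi.single i 1), by
    rw [vecMulVec_eq Unit, det_one_add_replicateCol_mul_replicateRow]
    simp⟩

/-- The transpose of `colUnipotent i q`, a unipotent matrix agreeing with the identity outside
row `i`. -/
def rowUnipotent (q : Fin n → ℝ) : SL(n, ℝ) := (colUnipotent i q).transpose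

lemma coe_colUnipotent (t : Fin n → ℝ) : (colUnipotent i t).1 =
    1 + vecMulVec (Function.update t i 0) (Pi.single i 1) := rfl

lemma coe_rowUnipotent (q : Fin n → ℝ) : (rowUnipotent i q).1 =
    1 + vecMulVec (Pi.single i 1) (Function.update q i 0) := by
  change (colUnipotent i q).1ᵀ = _
  rw [coe_colUnipotent, transpose_add, transpose_one, transpose_vecMulVec]

lemma colUnipotent_zero : colUnipotent i 0 = 1 := by
  apply Subtype.ext
  simp [coe_colUnipotent]

lemma colUnipotent_add (s t : Fin n → ℝ) :
    colUnipotent i (s + t) = colUnipotent i s * colUnipotent i t := by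
  apply Subtype.ext
  have horth : (Pi.single i (1 : ℝ) : Fin n → ℝ) ⬝ᵥ Function.update t i 0 = 0 := by simp
  have hupdate := Function.update_add s t i (0 : ℝ) 0
  rw [add_zero] at hupdate
  rw [Matrix.SpecialLinearGroup.coe_mul]
  simp only [coe_colUnipotent, hupdate, add_vecMulVec, mul_add, add_mul, vecMulVec_mul_vecMulVec,
    horth, zero_smul, vecMulVec_zero, mul_one, one_mul, add_zero, add_assoc]

lemma rowUnipotent_zero : rowUnipotent i 0 = 1 := by
  apply Subtype.ext
  simp [coe_rowUnipotent]

lemma rowUnipotent_add (s t : Fin n → ℝ) :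
    rowUnipotent i (s + t) = rowUnipotent i s * rowUnipotent i t := by
  apply Subtype.ext
  change (colUnipotent i (s + t)).1ᵀ = (colUnipotent i s).1ᵀ * (colUnipotent i t).1ᵀ
  rw [add_comm, colUnipotent_add, Matrix.SpecialLinearGroup.coe_mul, transpose_mul]

lemma rowUnipotent_neg (q : Fin n → ℝ) : rowUnipotent i (-q) = (rowUnipotent i q)⁻¹ := by
  rw [eq_inv_iff_mul_eq_one, ← rowUnipotent_add, neg_add_cancel, rowUnipotent_zero]

lemma continuous_colUnipotent : Continuous (colUnipotent i) := by
  refine continuous_SL_of_entries fun a b ↦ ?_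
  simp only [coe_colUnipotent, Matrix.add_apply, vecMulVec_apply, Function.update_apply]
  split_ifs <;> fun_prop

lemma continuous_rowUnipotent : Continuous (rowUnipotent i) :=
  continuous_SL_of_entries fun a b ↦ (continuous_SL_entry b a).comp (continuous_colUnipotent i)

lemma colUnipotent_intCast_mem_Gamma (k : Fin n → ℤ) :
    colUnipotent i (fun l ↦ (k l : ℝ)) ∈ Gamma n := by
  refine mem_Gamma_iff.2 fun a b ↦
    ⟨(1 + vecMulVec (Function.update k i 0) (Pi.single i 1) : Matrix _ _ ℤ) a b, ?_⟩
  simp only [coe_colUnipotent, Matrix.add_apply, one_apply, vecMulVec_apply,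
    Function.update_apply, Pi.single_apply]
  push_cast
  rfl

lemma colUnipotent_single {j : Fin n} (hij : i ≠ j) :
    colUnipotent i (Pi.single j 1) = SpecialLinearGroup.transvection hij.symm 1 := by
  apply Subtype.ext
  ext k l
  simp only [coe_colUnipotent, SpecialLinearGroup.transvection_coe, Matrix.add_apply,
    vecMulVec_apply, single_apply, Function.update_apply, Pi.single_apply]
  grind

lemma colUnipotent_single_mem_Gamma (j : Fin n) : colUnipotent i (Pi.single j 1) ∈ Gamma n := by
  convert colUnipotent_intCast_mem_Gamma i (Pi.single j 1) using 2
  ext l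
  simp [Pi.single_apply]

lemma mul_rowUnipotent_apply (g : SL(n, ℝ)) (q : Fin n → ℝ) (k l : Fin n) :
    (g * rowUnipotent i q).1 k l = g.1 k l + g.1 k i * Function.update q i 0 l := by
  rw [Matrix.SpecialLinearGroup.coe_mul, coe_rowUnipotent, mul_add, mul_one, mul_vecMulVec,
    Matrix.add_apply, vecMulVec_apply]
  simp

/-- The elements of the identity component of the maximal parabolic subgroup normalising
`colUnipotent i`: those whose row `i` vanishes off the (positive) diagonal entry. -/
structure IsRowParabolic (g : SL(n, ℝ)) : Prop where
  diag_pos : 0 < g.1 i i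
  row_eq_zero : ∀ l, l ≠ i → g.1 i l = 0

/-- The linear action of a parabolic element `g` on the parameter of `colUnipotent i` by
conjugation, extended by the identity on the ignored coordinate `i`. -/
def conjMatrix (g : SL(n, ℝ)) : Matrix (Fin n) (Fin n) ℝ :=
  ((g.1 i i)⁻¹ • g.1).updateCol i (Pi.single i 1)

lemma update_conjMatrix_mulVec {g : SL(n, ℝ)} (hg : IsRowParabolic i g) (s : Fin n → ℝ) :
    g.1 i i • Function.update (conjMatrix i g *ᵥ s) i 0 = g.1 *ᵥ Function.update s i 0 := by
  ext k
  have hi := hg.diag_pos.ne'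
  simp only [Pi.smul_apply, smul_eq_mul, mulVec, dotProduct, Function.update_apply, conjMatrix,
    updateCol_apply, Matrix.smul_apply, Pi.single_apply, mul_ite, mul_zero, Finset.mul_sum]
  split_ifs with hk
  · subst hk
    refine (Finset.sum_eq_zero fun l _ ↦ ?_).symm
    split_ifs with hl
    · rfl
    · rw [hg.row_eq_zero l hl, zero_mul]
  · refine Finset.sum_congr rfl fun l _ ↦ ?_
    split_ifs with hl
    · simp
    · field_simp

lemma mul_colUnipotent {g : SL(n, ℝ)} (hg : IsRowParabolic i g) (s : Fin n → ℝ) :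
    g * colUnipotent i s = colUnipotent i (conjMatrix i g *ᵥ s) * g := by
  apply Subtype.ext
  have hrow : g.1.row i = g.1 i i • Pi.single i 1 := by
    ext l
    by_cases hl : l = i
    · simp [hl]
    · simp [hl, hg.row_eq_zero l hl]
  rw [Matrix.SpecialLinearGroup.coe_mul, Matrix.SpecialLinearGroup.coe_mul, coe_colUnipotent,
    coe_colUnipotent, mul_add, add_mul, mul_one, one_mul, mul_vecMulVec, vecMulVec_mul,
    single_one_vecMul, hrow, vecMulVec_smul, ← smul_vecMulVec, update_conjMatrix_mulVec i hg]

lemma tendsto_conjMatrix : Filter.Tendsto (conjMatrix i) (𝓝 1) (𝓝 1) := by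
  have hentry (k l : Fin n) : Filter.Tendsto (fun g : SL(n, ℝ) ↦ g.1 k l) (𝓝 1)
      (𝓝 ((1 : Matrix (Fin n) (Fin n) ℝ) k l)) := (continuous_SL_entry k l).tendsto 1
  refine tendsto_pi_nhds.2 fun k ↦ tendsto_pi_nhds.2 fun l ↦ ?_
  by_cases hl : l = i
  · subst hl
    simp [conjMatrix, one_apply, Pi.single_apply]
  · simpa [conjMatrix, hl] using ((hentry i i).inv₀ (by simp)).mul (hentry k l)

open scoped Matrix.Norms.Operator in
lemma eventually_norm_le_two_mul_norm_mulVec :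
    ∀ᶠ A in 𝓝 (1 : Matrix (Fin n) (Fin n) ℝ), ∀ s, ‖s‖ ≤ 2 * ‖A *ᵥ s‖ := by
  filter_upwards [Metric.closedBall_mem_nhds (1 : Matrix (Fin n) (Fin n) ℝ) one_half_pos]
    with A hA s
  rw [mem_closedBall_iff_norm] at hA
  have hdiff : ‖(A - 1) *ᵥ s‖ ≤ 1 / 2 * ‖s‖ :=
    (linfty_opNorm_mulVec _ _).trans (by gcongr)
  have htri : ‖s‖ - ‖A *ᵥ s‖ ≤ ‖(A - 1) *ᵥ s‖ := by
    rw [sub_mulVec, one_mulVec, norm_sub_rev]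
    exact norm_sub_norm_le _ _
  linarith

end Unipotent

section UnitCube

variable {n : ℕ}

/-- The half-open unit cube `[0, 1)ⁿ`, a fundamental domain for `ℤⁿ`. -/
def unitCube (n : ℕ) : Set (Fin n → ℝ) := Set.univ.pi fun _ ↦ Set.Ico 0 1

lemma measurableSet_unitCube : MeasurableSet (unitCube n) :=
  .univ_pi fun _ ↦ measurableSet_Ico

instance : IsProbabilityMeasure (volume.restrict (unitCube n)) :=
  ⟨by simp [unitCube, Real.volume_pi_Ico]⟩

lemma norm_le_one_of_mem_unitCube {t : Fin n → ℝ} (ht : t ∈ unitCube n) : ‖t‖ ≤ 1 := by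
  refine (pi_norm_le_iff_of_nonneg zero_le_one).2 fun i ↦ ?_
  have hi := ht i (Set.mem_univ i)
  rw [Real.norm_of_nonneg hi.1]
  exact hi.2.le

lemma setIntegral_unitCube_add_right {F : (Fin n → ℝ) → ℝ}
    (hF : ∀ (k : Fin n → ℤ) t, F ((fun i ↦ (k i : ℝ)) + t) = F t) (b : Fin n → ℝ) :
    ∫ t in unitCube n, F (t + b) = ∫ t in unitCube n, F t := by
  let basis := Pi.basisFun ℝ (Fin n)
  have hdomain : unitCube n = ZSpan.fundamentalDomain basis :=
    ZSpan.fundamentalDomain_pi_basisFun.symm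
  have hdom := ZSpan.isAddFundamentalDomain basis volume
  have hperiodic (v : Submodule.span ℤ (Set.range basis)) (t : Fin n → ℝ) : F (v +ᵥ t) = F t := by
    choose k hk using (basis.mem_span_iff_repr_mem ℤ (v : Fin n → ℝ)).1 v.2
    have hv : (v : Fin n → ℝ) = fun i ↦ (k i : ℝ) := by
      ext i
      simpa [basis] using (hk i).symm
    change F ((v : Fin n → ℝ) + t) = F t
    rw [hv, hF]
  have : VAddInvariantMeasure (Submodule.span ℤ (Set.range basis)) (Fin n → ℝ) volume :=
    ⟨fun v _ _ ↦ measure_preimage_add volume (v : Fin n → ℝ) _⟩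
  rw [hdomain, hdom.setIntegral_eq (hdom.vadd_of_comm b) hperiodic]
  have himage := (measurePreserving_vadd b volume).setIntegral_image_emb
    (measurableEmbedding_const_vadd b) F (ZSpan.fundamentalDomain basis)
  simp_rw [add_comm _ b]
  exact himage.symm

end UnitCube

section RightUniform

variable {n : ℕ} {η : XSpace n → ℝ}

/-- Uniform continuity of `η` along the right translation action: translating by `g` moves `η`
uniformly little as `g → 1`. -/
def RightUniformContinuous (η : XSpace n → ℝ) : Prop :=
  TendstoUniformly (fun (g : SL(n, ℝ)) x ↦ η (rightTranslate n g x)) η (𝓝 1)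

namespace RightUniformContinuous

lemma eventually_abs_sub_le (hη : RightUniformContinuous η) {ε : ℝ} (hε : 0 < ε) :
    ∀ᶠ g in 𝓝 (1 : SL(n, ℝ)), ∀ x, |η (rightTranslate n g x) - η x| ≤ ε := by
  filter_upwards [Metric.tendstoUniformly_iff.1 hη ε hε] with g hg x
  rw [← Real.dist_eq, dist_comm]
  exact (hg x).le

protected lemma continuous (hη : RightUniformContinuous η) : Continuous η := by
  refine XSpace.continuous_iff_comp_mk.2 (continuous_iff_continuousAt.2 fun g ↦ ?_)
  have hshift : Filter.Tendsto (fun a : SL(n, ℝ) ↦ g⁻¹ * a) (𝓝 g) (𝓝 1) := by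
    simpa using (continuous_const_mul g⁻¹).tendsto g
  simpa [ContinuousAt, Function.comp_def] using (hη.tendsto_at (XSpace.mk g)).comp hshift

lemma comp_uniformContinuous (hη : RightUniformContinuous η) {φ : ℝ → ℝ}
    (hφ : UniformContinuous φ) : RightUniformContinuous fun x ↦ φ (η x) :=
  hφ.comp_tendstoUniformly hη

lemma comp_rightTranslate (hη : RightUniformContinuous η) (u : SL(n, ℝ)) :
    RightUniformContinuous fun x ↦ η (rightTranslate n u x) := by
  have hconj : Filter.Tendsto (fun g : SL(n, ℝ) ↦ u⁻¹ * g * u) (𝓝 1) (𝓝 1) := by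
    have : Continuous fun g : SL(n, ℝ) ↦ u⁻¹ * g * u := by fun_prop
    simpa using this.tendsto 1
  intro s hs
  filter_upwards [hconj.eventually (hη s hs)] with g hg x
  simpa [← rightTranslate_mul, mul_assoc] using hg (rightTranslate n u x)

lemma birkhoffSum (hη : RightUniformContinuous η) (u : SL(n, ℝ)) (K : ℕ) :
    RightUniformContinuous (birkhoffSum (rightTranslate n u) η K) := by
  induction K with
  | zero =>
    intro s hs
    exact .of_forall fun g x ↦ by simpa using refl_mem_uniformity hs
  | succ K ih =>
    have hiterate : RightUniformContinuous fun x ↦ η ((rightTranslate n u)^[K] x) := by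
      clear ih
      induction K with
      | zero => exact hη
      | succ K ih => exact ih.comp_rightTranslate u
    have hsucc : _root_.birkhoffSum (rightTranslate n u) η (K + 1) =
        _root_.birkhoffSum (rightTranslate n u) η K + fun x ↦ η ((rightTranslate n u)^[K] x) :=
      funext fun x ↦ birkhoffSum_succ _ _ K x
    rw [hsucc]
    exact TendstoUniformly.add ih hiterate

lemma birkhoffAverage (hη : RightUniformContinuous η) (u : SL(n, ℝ)) (K : ℕ) :
    RightUniformContinuous (birkhoffAverage ℝ (rightTranslate n u) η K) :=
  (hη.birkhoffSum u K).comp_uniformContinuous (uniformContinuous_const_smul (K : ℝ)⁻¹)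

end RightUniformContinuous

end RightUniform

section Averages

lemma abs_integral_sub_integral_le {α : Type*} [MeasurableSpace α] {μ : Measure α}
    [IsProbabilityMeasure μ] {f g : α → ℝ} {ε : ℝ} (hf : Integrable f μ) (hg : Integrable g μ)
    (h : ∀ x, |f x - g x| ≤ ε) : |∫ x, f x ∂μ - ∫ x, g x ∂μ| ≤ ε := by
  rw [← integral_sub hf hg]
  simpa using norm_integral_le_of_norm_le_const (μ := μ) (f := fun x ↦ f x - g x) (.of_forall h)

lemma norm_birkhoffAverage_le {α : Type*} {f : α → α} {η : α → ℝ} {B : ℝ}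
    (hB : ∀ x, |η x| ≤ B) (K : ℕ) (x : α) : ‖birkhoffAverage ℝ f η K x‖ ≤ B := by
  rcases K.eq_zero_or_pos with rfl | hK
  · simpa using (abs_nonneg _).trans (hB x)
  calc ‖birkhoffAverage ℝ f η K x‖ = (K : ℝ)⁻¹ * ‖birkhoffSum f η K x‖ := by
        simp [birkhoffAverage]
    _ ≤ (K : ℝ)⁻¹ * (K * B) := by
        gcongr
        exact (norm_sum_le_of_le _ fun k _ ↦ hB _).trans_eq (by simp)
    _ = B := by field_simp

lemma continuous_birkhoffAverage {α : Type*} [TopologicalSpace α] {f : α → α} {η : α → ℝ}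
    (hf : Continuous f) (hη : Continuous η) (K : ℕ) : Continuous (birkhoffAverage ℝ f η K) := by
  have hsum : Continuous (birkhoffSum f η K) :=
    continuous_finsetSum _ fun k _ ↦ hη.comp (hf.iterate k)
  exact hsum.const_smul (K : ℝ)⁻¹

lemma HeckeSet.integral_kernel_birkhoffAverage {n : ℕ} (S : HeckeSet n) (u : SL(n, ℝ)) (K : ℕ)
    (η : XSpace n → ℝ) (x : XSpace n) :
    ∫ y, birkhoffAverage ℝ (rightTranslate n u) η K y ∂S.kernel x =
      birkhoffAverage ℝ (rightTranslate n u) (fun x ↦ ∫ y, η y ∂S.kernel x) K x := by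
  have hiterate (k : ℕ) : ∀ x, ∫ y, η ((rightTranslate n u)^[k] y) ∂S.kernel x =
      ∫ y, η y ∂S.kernel ((rightTranslate n u)^[k] x) := by
    induction k with
    | zero => simp
    | succ k ih =>
      intro x
      rw [Function.iterate_succ_apply, ← ih]
      exact (S.integral_kernel_rightTranslate (fun y ↦ η ((rightTranslate n u)^[k] y)) u x).symm
  simp only [birkhoffAverage, birkhoffSum, integral_smul, ← hiterate]
  rw [integral_finsetSum _ fun k _ ↦ S.integrable_kernel _ x]

lemma HeckeSet.abs_integral_kernel_rightTranslate_sub_le {n : ℕ} (S : HeckeSet n)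
    {η : XSpace n → ℝ} {g : SL(n, ℝ)} {ε : ℝ}
    (h : ∀ x, |η (rightTranslate n g x) - η x| ≤ ε) (x : XSpace n) :
    |∫ y, η y ∂S.kernel (rightTranslate n g x) - ∫ y, η y ∂S.kernel x| ≤ ε := by
  rw [S.integral_kernel_rightTranslate]
  exact abs_integral_sub_integral_le (S.integrable_kernel _ x) (S.integrable_kernel _ x) h

end Averages

section Unfolding

variable {n : ℕ} {i : Fin n} {g : SL(n, ℝ)} {Φ : XSpace n → ℝ}

lemma integrableOn_unitCube_of_continuous {F : (Fin n → ℝ) → ℝ} (hF : Continuous F) :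
    IntegrableOn F (unitCube n) := by
  have hsub : unitCube n ⊆ Set.Icc 0 1 := fun t ht ↦
    ⟨fun l ↦ (ht l trivial).1, fun l ↦ (ht l trivial).2.le⟩
  exact (hF.continuousOn.integrableOn_compact isCompact_Icc).mono_set hsub

lemma continuous_mk_colUnipotent_mul (i : Fin n) (g : SL(n, ℝ)) :
    Continuous fun t ↦ XSpace.mk (colUnipotent i t * g) :=
  XSpace.continuous_mk.comp ((continuous_colUnipotent i).mul continuous_const)

lemma integral_unitCube_rightTranslate (hg : IsRowParabolic i g) (Φ : XSpace n → ℝ)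
    (e : Fin n → ℝ) :
    ∫ t in unitCube n, Φ (rightTranslate n (colUnipotent i e) (XSpace.mk (colUnipotent i t * g))) =
      ∫ t in unitCube n, Φ (XSpace.mk (colUnipotent i t * g)) := by
  have hperiodic (k : Fin n → ℤ) (t : Fin n → ℝ) :
      Φ (XSpace.mk (colUnipotent i ((fun l ↦ (k l : ℝ)) + t) * g)) =
        Φ (XSpace.mk (colUnipotent i t * g)) := by
    rw [colUnipotent_add, mul_assoc, XSpace.mk_mul_of_mem (colUnipotent_intCast_mem_Gamma i k)]
  refine Eq.trans ?_ (setIntegral_unitCube_add_right hperiodic (conjMatrix i g *ᵥ e))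
  simp only [rightTranslate_mk, mul_assoc, colUnipotent_add, mul_colUnipotent i hg]

lemma integral_unitCube_birkhoffAverage (hg : IsRowParabolic i g) (hΦ : Continuous Φ)
    (e : Fin n → ℝ) {K : ℕ} (hK : K ≠ 0) :
    ∫ t in unitCube n, birkhoffAverage ℝ (rightTranslate n (colUnipotent i e)) Φ K
        (XSpace.mk (colUnipotent i t * g)) =
      ∫ t in unitCube n, Φ (XSpace.mk (colUnipotent i t * g)) := by
  have hiterate (k : ℕ) : ∫ t in unitCube n, Φ ((rightTranslate n (colUnipotent i e))^[k]
      (XSpace.mk (colUnipotent i t * g))) =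
        ∫ t in unitCube n, Φ (XSpace.mk (colUnipotent i t * g)) := by
    induction k with
    | zero => rfl
    | succ k ih =>
      rw [← ih, ← integral_unitCube_rightTranslate hg
        (fun x ↦ Φ ((rightTranslate n (colUnipotent i e))^[k] x)) e]
      rfl
  simp only [birkhoffAverage, birkhoffSum, integral_smul]
  have hint (k : ℕ) : IntegrableOn (fun t ↦ Φ ((rightTranslate n (colUnipotent i e))^[k]
      (XSpace.mk (colUnipotent i t * g)))) (unitCube n) := integrableOn_unitCube_of_continuous
    ((hΦ.comp ((continuous_rightTranslate _).iterate k)).comp (continuous_mk_colUnipotent_mul i g))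
  rw [integral_finsetSum _ fun k _ ↦ hint k]
  simp [hiterate, hK]

lemma setLIntegral_unitCube_le {A : Matrix (Fin n) (Fin n) ℝ} (hdet : |A.det| ≤ 2)
    (hA : ∀ s, ‖s‖ ≤ 2 * ‖A *ᵥ s‖) {F : (Fin n → ℝ) → ENNReal} (hF : Measurable F) :
    ∫⁻ t in unitCube n, F t ≤ 2 * ∫⁻ s in Metric.closedBall 0 2, F (A *ᵥ s) := by
  have hdet0 : A.det ≠ 0 := fun h ↦ by
    obtain ⟨s, hs0, hs⟩ := exists_mulVec_eq_zero_iff.2 h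
    have := hA s
    rw [hs, norm_zero, mul_zero] at this
    exact hs0 (norm_le_zero_iff.1 this)
  have hmeas : Measurable fun s ↦ A *ᵥ s :=
    (LinearMap.continuous_of_finiteDimensional (toLin' A)).measurable
  have hvol : volume = ENNReal.ofReal |A.det| • volume.map fun s ↦ A *ᵥ s := by
    change _ = _ • volume.map (toLin' A)
    rw [Real.map_matrix_volume_pi_eq_smul_volume_pi hdet0, smul_smul,
      ← ENNReal.ofReal_mul (abs_nonneg _), ← abs_mul, mul_inv_cancel₀ hdet0]
    simp
  have hsub : (fun s ↦ A *ᵥ s) ⁻¹' unitCube n ⊆ Metric.closedBall 0 2 := fun s hs ↦ by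
    have := norm_le_one_of_mem_unitCube hs
    rw [mem_closedBall_zero_iff]
    linarith [hA s]
  calc ∫⁻ t in unitCube n, F t
      = ENNReal.ofReal |A.det| * ∫⁻ s in (fun s ↦ A *ᵥ s) ⁻¹' unitCube n, F (A *ᵥ s) := by
        conv_lhs => rw [hvol]
        rw [Measure.restrict_smul, lintegral_smul_measure, smul_eq_mul,
          setLIntegral_map measurableSet_unitCube hF hmeas]
    _ ≤ 2 * ∫⁻ s in Metric.closedBall 0 2, F (A *ᵥ s) :=
        mul_le_mul' (ENNReal.ofReal_le_of_le_toReal hdet) (lintegral_mono_set hsub)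

-- Conjugating by `g` rewrites the torus orbit `t ↦ Γu(t)g` as a piece of `s ↦ Γgu(s)`, so the
-- ergodic average along `u(e)` may be inserted for free.
lemma enorm_integral_unitCube_le (hg : IsRowParabolic i g) (hdet : |(conjMatrix i g).det| ≤ 2)
    (hnorm : ∀ s, ‖s‖ ≤ 2 * ‖conjMatrix i g *ᵥ s‖) (hΦ : Continuous Φ) (e : Fin n → ℝ) {K : ℕ}
    (hK : K ≠ 0) :
    ‖∫ t in unitCube n, Φ (XSpace.mk (colUnipotent i t * g))‖ₑ ≤
      2 * ∫⁻ s in Metric.closedBall 0 2, ‖birkhoffAverage ℝ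
        (rightTranslate n (colUnipotent i e)) Φ K (XSpace.mk (g * colUnipotent i s))‖ₑ := by
  rw [← integral_unitCube_birkhoffAverage hg hΦ e hK]
  simp only [mul_colUnipotent i hg]
  have havg := continuous_birkhoffAverage (continuous_rightTranslate (colUnipotent i e)) hΦ K
  exact (enorm_integral_le_lintegral_enorm _).trans (setLIntegral_unitCube_le hdet hnorm
    (havg.comp (continuous_mk_colUnipotent_mul i g)).enorm.measurable)

end Unfolding

section BruhatBox

variable {n : ℕ}

instance : MulAction.IsPretransitive SL(n, ℝ) (XSpace n) where
  exists_smul_eq x y := by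
    obtain ⟨g, rfl⟩ := XSpace.mk_surjective x
    obtain ⟨h, rfl⟩ := XSpace.mk_surjective y
    exact ⟨h⁻¹ * g, by simp [XSpace.smul_eq_rightTranslate]⟩

lemma isRiemannIntegrand_indicator_one {B : Set (Fin n → ℝ)} (hB : MeasurableSet B)
    (hbdd : Bornology.IsBounded B) (hfrontier : volume (frontier B) = 0) :
    IsRiemannIntegrand (B.indicator 1) where
  measurable := measurable_one.indicator hB
  exists_le := ⟨1, fun w ↦ Set.indicator_le_self' (fun _ _ ↦ zero_le) w⟩
  isBounded_support := hbdd.subset Set.support_indicator_subset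
  ae_continuousAt := by
    filter_upwards [measure_eq_zero_iff_ae_notMem.1 hfrontier] with w hw
    exact continuous_one.continuousOn.continuousAt_indicator hw

variable (i : Fin n)

/-- The entries of row `i` divided by the diagonal one, with `0` in position `i`; it is the
parameter of the factor of `g` in `rowUnipotent i`. -/
def rowRatio (g : SL(n, ℝ)) : Fin n → ℝ := Function.update ((g.1 i i)⁻¹ • g.1 i) i 0

/-- The factor `a` in the decomposition `g = a * rowUnipotent i (rowRatio i g)`. -/
def parabolicPart (g : SL(n, ℝ)) : SL(n, ℝ) := g * rowUnipotent i (-rowRatio i g)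

lemma parabolicPart_mul_rowUnipotent (g : SL(n, ℝ)) :
    parabolicPart i g * rowUnipotent i (rowRatio i g) = g := by
  rw [parabolicPart, rowUnipotent_neg, inv_mul_cancel_right]

lemma mul_rowUnipotent_apply_self (g : SL(n, ℝ)) (q : Fin n → ℝ) :
    (g * rowUnipotent i q).1 i i = g.1 i i := by
  simp [mul_rowUnipotent_apply]

lemma isRowParabolic_parabolicPart {g : SL(n, ℝ)} (hg : 0 < g.1 i i) :
    IsRowParabolic i (parabolicPart i g) where
  diag_pos := by rwa [parabolicPart, mul_rowUnipotent_apply_self]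
  row_eq_zero l hl := by
    simp [parabolicPart, mul_rowUnipotent_apply, rowRatio, hl, hg.ne']

lemma rowRatio_mul_rowUnipotent {g : SL(n, ℝ)} (hg : g.1 i i ≠ 0) {q : Fin n → ℝ} (hq : q i = 0) :
    rowRatio i (g * rowUnipotent i q) = rowRatio i g + q := by
  ext l
  by_cases hl : l = i
  · simp [rowRatio, hl, hq]
  · simp only [rowRatio, Function.update_of_ne hl, Pi.smul_apply, smul_eq_mul, Pi.add_apply,
      mul_rowUnipotent_apply_self, mul_rowUnipotent_apply, mul_add, inv_mul_cancel_left₀ hg]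

lemma parabolicPart_mul {g : SL(n, ℝ)} (hg : g.1 i i ≠ 0) {q : Fin n → ℝ} (hq : q i = 0) :
    parabolicPart i (g * rowUnipotent i q) = parabolicPart i g := by
  rw [parabolicPart, rowRatio_mul_rowUnipotent i hg hq, mul_assoc, ← rowUnipotent_add,
    neg_add_rev, add_neg_cancel_left, parabolicPart]

/-- The elements `a * rowUnipotent i q` with `a ∈ V` parabolic and `‖q‖ < δ`. -/
def bruhatBox (V : Set SL(n, ℝ)) (δ : ℝ) : Set SL(n, ℝ) :=
  {g | 0 < g.1 i i ∧ ‖rowRatio i g‖ < δ ∧ parabolicPart i g ∈ V}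

variable {i} {V : Set SL(n, ℝ)}

lemma continuousAt_rowRatio {g : SL(n, ℝ)} (hg : g.1 i i ≠ 0) : ContinuousAt (rowRatio i) g := by
  have hrow : Continuous fun g : SL(n, ℝ) ↦ g.1 i := continuous_pi (continuous_SL_entry i)
  exact (((continuous_SL_entry i i).continuousAt.inv₀ hg).smul hrow.continuousAt).update i
    continuousAt_const

lemma isOpen_bruhatBox (hV : IsOpen V) (δ : ℝ) : IsOpen (bruhatBox i V δ) := by
  refine isOpen_iff_mem_nhds.2 fun g ⟨hg, hδ, hgV⟩ ↦ ?_
  have hratio := continuousAt_rowRatio hg.ne'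
  have hpart : ContinuousAt (parabolicPart i) g :=
    continuousAt_id.mul ((continuous_rowUnipotent i).continuousAt.comp hratio.neg)
  filter_upwards [(continuous_SL_entry i i).continuousAt.eventually (lt_mem_nhds hg),
    hratio.norm.eventually (gt_mem_nhds hδ), hpart.eventually (hV.mem_nhds hgV)]
    with a ha haδ haV
  exact ⟨ha, haδ, haV⟩

lemma one_mem_bruhatBox (hV : 1 ∈ V) {δ : ℝ} (hδ : 0 < δ) : 1 ∈ bruhatBox i V δ := by
  have hratio : rowRatio i 1 = 0 := by
    ext l
    by_cases hl : l = i
    · simp [rowRatio, hl]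
    · simp [rowRatio, hl, one_apply_ne' hl]
  refine ⟨by simp, by simpa [hratio], ?_⟩
  simpa [parabolicPart, hratio, rowUnipotent_zero] using hV

variable (i) in
/-- Integer points indexing a subdivision into pieces of side `1 / N` of the cube
`{q | q i = 0, ‖q‖ < 1}`. -/
def gridPoints (N : ℕ) : Finset (Fin n → ℤ) :=
  Fintype.piFinset fun l ↦ if l = i then {0} else Finset.Ico (-N) N

lemma card_gridPoints (N : ℕ) :
    (gridPoints i N).card = ∏ l, if l = i then 1 else 2 * N := by
  rw [gridPoints, Fintype.card_piFinset]
  refine Finset.prod_congr rfl fun l _ ↦ ?_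
  split_ifs
  · simp
  · simp only [Int.card_Ico]
    omega

lemma exists_gridPoints_mul_mem_bruhatBox {N : ℕ} (hN : 0 < N) {g : SL(n, ℝ)}
    (hg : g ∈ bruhatBox i V 1) :
    ∃ m ∈ gridPoints i N,
      g * rowUnipotent i (-scaledCast (N : ℝ)⁻¹ m) ∈ bruhatBox i V (N : ℝ)⁻¹ := by
  obtain ⟨hpos, hnorm, hgV⟩ := hg
  have hN' : (0 : ℝ) < N := Nat.cast_pos.2 hN
  have hratio_self : rowRatio i g i = 0 := by simp [rowRatio]
  have hfloor_self : vecFloor ((N : ℝ) • rowRatio i g) i = 0 := by simp [vecFloor, hratio_self]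
  have hscaled_self : (-scaledCast (N : ℝ)⁻¹ (vecFloor ((N : ℝ) • rowRatio i g))) i = 0 := by
    simp [scaledCast_apply, hfloor_self]
  refine ⟨vecFloor ((N : ℝ) • rowRatio i g), Fintype.mem_piFinset.2 fun l ↦ ?_, ?_, ?_, ?_⟩
  · split_ifs with hl
    · simp [hl, hfloor_self]
    · have hl' := abs_lt.1 ((norm_le_pi_norm (rowRatio i g) l).trans_lt hnorm)
      simp only [Finset.mem_Ico, vecFloor, Int.le_floor, Int.floor_lt, Pi.smul_apply, smul_eq_mul]
      push_cast
      constructor <;> nlinarith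
  · rwa [mul_rowUnipotent_apply_self]
  · rw [rowRatio_mul_rowUnipotent i hpos.ne' hscaled_self, pi_norm_lt_iff (by positivity)]
    intro l
    have hfract : (rowRatio i g + -scaledCast (N : ℝ)⁻¹ (vecFloor ((N : ℝ) • rowRatio i g))) l =
        (N : ℝ)⁻¹ * Int.fract (N * rowRatio i g l) := by
      simp only [Pi.add_apply, Pi.neg_apply, scaledCast_apply, vecFloor, Pi.smul_apply,
        smul_eq_mul, Int.fract]
      field_simp
      ring
    rw [hfract, Real.norm_of_nonneg (by positivity [Int.fract_nonneg (N * rowRatio i g l)])]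
    exact mul_lt_of_lt_one_right (by positivity) (Int.fract_lt_one _)
  · rwa [parabolicPart_mul i hpos.ne' hscaled_self]

variable (i) in
/-- A box containing row `i` of every element of `bruhatBox i V (1 / N)`, as soon as the diagonal
entry `(i, i)` of the elements of `V` lies in `[1/2, 2]`. -/
def rowBox (N : ℕ) : Set (Fin n → ℝ) :=
  Set.Icc (fun l ↦ if l = i then 1 / 2 else -(2 * (N : ℝ)⁻¹))
    (fun l ↦ if l = i then 2 else 2 * (N : ℝ)⁻¹)

lemma volume_rowBox_mul_card_gridPoints {N : ℕ} (hN : 0 < N) :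
    volume (rowBox i N) * (gridPoints i N).card =
      ∏ l, if l = i then ENNReal.ofReal (3 / 2) else ENNReal.ofReal 8 := by
  have : (0 : ℝ) < N := Nat.cast_pos.2 hN
  rw [rowBox, Real.volume_Icc_pi, card_gridPoints, Nat.cast_prod, ← Finset.prod_mul_distrib]
  refine Finset.prod_congr rfl fun l _ ↦ ?_
  split_ifs
  · norm_num
  · rw [← ENNReal.ofReal_natCast, ← ENNReal.ofReal_mul' (Nat.cast_nonneg _)]
    congr 1
    push_cast
    field_simp
    norm_num

lemma isRiemannIntegrand_indicator_rowBox (N : ℕ) :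
    IsRiemannIntegrand ((rowBox i N).indicator 1) :=
  isRiemannIntegrand_indicator_one measurableSet_Icc (Metric.isBounded_Icc _ _)
    ((convex_Icc _ _).addHaar_frontier _)

lemma zero_notMem_rowBox (N : ℕ) : 0 ∉ rowBox i N := fun h ↦ by
  have hi : (1 / 2 : ℝ) ≤ 0 := by simpa using h.1 i
  norm_num at hi

lemma row_mem_rowBox (hV : ∀ a ∈ V, a.1 i i ∈ Set.Icc (1 / 2) 2) {N : ℕ} {g : SL(n, ℝ)}
    (hg : g ∈ bruhatBox i V (N : ℝ)⁻¹) : g.1 i ∈ rowBox i N := by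
  obtain ⟨hpos, hnorm, hgV⟩ := hg
  have hdiag := hV _ hgV
  rw [parabolicPart, mul_rowUnipotent_apply_self] at hdiag
  have hoff (l : Fin n) (hl : l ≠ i) : |g.1 i l| ≤ 2 * (N : ℝ)⁻¹ := by
    have hratio := (norm_le_pi_norm (rowRatio i g) l).trans hnorm.le
    rw [rowRatio, Function.update_of_ne hl, Pi.smul_apply, norm_smul, norm_inv,
      Real.norm_of_nonneg hpos.le, Real.norm_eq_abs, inv_mul_le_iff₀ hpos] at hratio
    exact hratio.trans (by gcongr; exact hdiag.2)
  refine ⟨fun l ↦ ?_, fun l ↦ ?_⟩ <;> dsimp only <;> split_ifs with hl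
  · exact hl ▸ hdiag.1
  · exact (abs_le.1 (hoff l hl)).1
  · exact hl ▸ hdiag.2
  · exact (abs_le.1 (hoff l hl)).2

lemma one_le_siegelTransform_rowBox (hV : ∀ a ∈ V, a.1 i i ∈ Set.Icc (1 / 2) 2) {N : ℕ}
    {g : SL(n, ℝ)} (hg : g ∈ bruhatBox i V (N : ℝ)⁻¹) :
    1 ≤ siegelTransform ((rowBox i N).indicator 1) (XSpace.mk g) := by
  have hrow : intVecMul g (Pi.single i 1) = g.1 i := by
    ext l
    simp [intVecMul_apply, Matrix.vecMul, dotProduct, Pi.single_apply]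
  rw [siegelTransform_mk]
  refine le_trans ?_ (ENNReal.le_tsum (Pi.single i 1))
  rw [hrow, Set.indicator_of_mem (row_mem_rowBox hV hg), Pi.one_apply]

variable (μ : Measure (XSpace n)) [SMulInvariantMeasure SL(n, ℝ) (XSpace n) μ]

lemma measure_image_bruhatBox_one_le (hV : IsOpen V) {N : ℕ} (hN : 0 < N) :
    μ (XSpace.mk '' bruhatBox i V 1) ≤
      (gridPoints i N).card * μ (XSpace.mk '' bruhatBox i V (N : ℝ)⁻¹) := by
  have hcover : XSpace.mk '' bruhatBox i V 1 ⊆ ⋃ m ∈ gridPoints i N,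
      rightTranslate n (rowUnipotent i (-scaledCast (N : ℝ)⁻¹ m)) ⁻¹'
        (XSpace.mk '' bruhatBox i V (N : ℝ)⁻¹) := by
    rintro _ ⟨g, hg, rfl⟩
    obtain ⟨m, hm, hgm⟩ := exists_gridPoints_mul_mem_bruhatBox hN hg
    exact Set.mem_iUnion₂.2 ⟨m, hm, _, hgm, rfl⟩
  have hmeas : MeasurableSet (XSpace.mk '' bruhatBox i V (N : ℝ)⁻¹) :=
    (XSpace.isOpenQuotientMap_mk.isOpenMap _ (isOpen_bruhatBox hV _)).measurableSet
  calc μ (XSpace.mk '' bruhatBox i V 1)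
      ≤ ∑ m ∈ gridPoints i N, μ (rightTranslate n (rowUnipotent i (-scaledCast (N : ℝ)⁻¹ m)) ⁻¹'
          (XSpace.mk '' bruhatBox i V (N : ℝ)⁻¹)) :=
        (measure_mono hcover).trans (measure_biUnion_finset_le _ _)
    _ = _ := by
        simp [(measurePreserving_rightTranslate μ _).measure_preimage hmeas.nullMeasurableSet]

lemma measure_image_bruhatBox_ne_zero [IsProbabilityMeasure μ] (hV : IsOpen V) (hV1 : 1 ∈ V)
    {δ : ℝ} (hδ : 0 < δ) : μ (XSpace.mk '' bruhatBox i V δ) ≠ 0 :=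
  (measure_isOpen_pos_of_smulInvariant_of_ne_zero SL(n, ℝ) (IsProbabilityMeasure.ne_zero μ)
    (XSpace.isOpenQuotientMap_mk.isOpenMap _ (isOpen_bruhatBox hV δ))
    ⟨_, 1, one_mem_bruhatBox hV1 hδ, rfl⟩).ne'

-- Shrinking `bruhatBox` in the unipotent direction loses no more mass than shrinking `rowBox`.
lemma exists_volume_rowBox_le_mul_measure [IsProbabilityMeasure μ] (hV : IsOpen V) (hV1 : 1 ∈ V) :
    ∃ C : ENNReal, C ≠ ⊤ ∧ ∀ N : ℕ, 0 < N →
      volume (rowBox i N) ≤ C * μ (XSpace.mk '' bruhatBox i V (N : ℝ)⁻¹) := by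
  have hpos : μ (XSpace.mk '' bruhatBox i V 1) ≠ 0 :=
    measure_image_bruhatBox_ne_zero μ hV hV1 one_pos
  refine ⟨(∏ l, if l = i then ENNReal.ofReal (3 / 2) else ENNReal.ofReal 8) /
    μ (XSpace.mk '' bruhatBox i V 1), ENNReal.div_ne_top ?_ hpos, fun N hN ↦ ?_⟩
  · exact ENNReal.prod_ne_top fun l _ ↦ by split_ifs <;> exact ENNReal.ofReal_ne_top
  rw [← volume_rowBox_mul_card_gridPoints hN, ← ENNReal.mul_div_right_comm,
    ENNReal.le_div_iff_mul_le (.inl hpos) (.inl (measure_ne_top _ _)), mul_assoc]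
  gcongr
  exact measure_image_bruhatBox_one_le μ hV hN

end BruhatBox

section CubeEquidistribution

open Filter

variable {n : ℕ}

/-- Bounds, valid near the identity, on the diagonal entry `(i, i)` and on the distortion caused by
conjugating `colUnipotent i` by `g`. -/
structure IsNearIdentity (i : Fin n) (g : SL(n, ℝ)) : Prop where
  diag_mem : g.1 i i ∈ Set.Icc (1 / 2) 2
  abs_det_conjMatrix_le : |(conjMatrix i g).det| ≤ 2
  norm_le_mulVec : ∀ s, ‖s‖ ≤ 2 * ‖conjMatrix i g *ᵥ s‖

lemma eventually_isNearIdentity (i : Fin n) : ∀ᶠ g in 𝓝 (1 : SL(n, ℝ)), IsNearIdentity i g := by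
  have hdiag : Tendsto (fun g : SL(n, ℝ) ↦ g.1 i i) (𝓝 1) (𝓝 1) := by
    simpa using (continuous_SL_entry i i).tendsto 1
  have hdet : Tendsto (fun g : SL(n, ℝ) ↦ |(conjMatrix i g).det|) (𝓝 1) (𝓝 1) := by
    have habs : Continuous fun A : Matrix (Fin n) (Fin n) ℝ ↦ |A.det| := by fun_prop
    simpa [Function.comp_def] using (habs.tendsto 1).comp (tendsto_conjMatrix i)
  filter_upwards [hdiag.eventually (Icc_mem_nhds one_half_lt_one one_lt_two),
    hdet.eventually (eventually_le_nhds one_lt_two),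
    (tendsto_conjMatrix i).eventually eventually_norm_le_two_mul_norm_mulVec]
    with g hg_diag hg_det hg_norm
  exact ⟨hg_diag, hg_det, hg_norm⟩

lemma exists_nat_forall_conj_rowUnipotent (i : Fin n) {P : SL(n, ℝ) → Prop}
    (hP : ∀ᶠ g in 𝓝 1, P g) :
    ∃ N : ℕ, 0 < N ∧ ∀ q : Fin n → ℝ, ‖q‖ < (N : ℝ)⁻¹ → ∀ s ∈ Metric.closedBall 0 2,
      P ((colUnipotent i s)⁻¹ * (rowUnipotent i q)⁻¹ * colUnipotent i s) := by
  have hnear : ∀ᶠ q in 𝓝 (0 : Fin n → ℝ), ∀ s ∈ Metric.closedBall (0 : Fin n → ℝ) 2,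
      P ((colUnipotent i s)⁻¹ * (rowUnipotent i q)⁻¹ * colUnipotent i s) := by
    refine (isCompact_closedBall _ _).eventually_forall_of_forall_eventually fun s _ ↦ ?_
    have hcont : Continuous fun z : (Fin n → ℝ) × (Fin n → ℝ) ↦
        (colUnipotent i z.2)⁻¹ * (rowUnipotent i z.1)⁻¹ * colUnipotent i z.2 :=
      (((continuous_colUnipotent i).comp continuous_snd).inv.mul
        ((continuous_rowUnipotent i).comp continuous_fst).inv).mul
        ((continuous_colUnipotent i).comp continuous_snd)
    have hlim := hcont.tendsto (0, s)
    simp only [rowUnipotent_zero, inv_one, mul_one, inv_mul_cancel] at hlim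
    exact hlim.eventually hP
  obtain ⟨δ, hδ, hball⟩ := Metric.eventually_nhds_iff.1 hnear
  obtain ⟨N, hN⟩ := exists_nat_one_div_lt hδ
  refine ⟨N + 1, N.succ_pos, fun q hq ↦ hball ?_⟩
  rw [dist_zero_right]
  exact hq.trans (by simpa using hN)

section Pointwise

variable {i : Fin n} {a : SL(n, ℝ)} {q e : Fin n → ℝ} {ε : NNReal} {K : ℕ}

lemma enorm_le_add_enorm_of_abs_sub_le {x y : ℝ} (h : |x - y| ≤ ε) : ‖x‖ₑ ≤ ε + ‖y‖ₑ := by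
  have hsub : ‖x - y‖ₑ ≤ ε := by
    rwa [enorm_le_coe, ← NNReal.coe_le_coe, coe_nnnorm, Real.norm_eq_abs]
  calc ‖x‖ₑ = ‖x - y + y‖ₑ := by rw [sub_add_cancel]
    _ ≤ ε + ‖y‖ₑ := (enorm_add_le _ _).trans (by gcongr)

-- Both `a` and the conjugate of `rowUnipotent i q` are close to `1`, so the orbit through `1` may
-- be compared with the one through any point of a Bruhat box, that is, of a set of positive
-- measure.
lemma enorm_integral_unitCube_le_of_isNearIdentity (ha : IsRowParabolic i a)
    (hnear : IsNearIdentity i a) {Φ : XSpace n → ℝ} (hΦ : Continuous Φ)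
    (hΦa : ∀ x, |Φ (rightTranslate n a x) - Φ x| ≤ ε) (hK : K ≠ 0)
    (havg : ∀ s ∈ Metric.closedBall (0 : Fin n → ℝ) 2, ∀ x,
      |birkhoffAverage ℝ (rightTranslate n (colUnipotent i e)) Φ K (rightTranslate n
        ((colUnipotent i s)⁻¹ * (rowUnipotent i q)⁻¹ * colUnipotent i s) x) -
        birkhoffAverage ℝ (rightTranslate n (colUnipotent i e)) Φ K x| ≤ ε) :
    ‖∫ t in unitCube n, Φ (XSpace.mk (colUnipotent i t))‖ₑ ≤
      ε + 2 * ∫⁻ s in Metric.closedBall 0 2, (ε + ‖birkhoffAverage ℝ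
        (rightTranslate n (colUnipotent i e)) Φ K
        (rightTranslate n (colUnipotent i s) (XSpace.mk (a * rowUnipotent i q)))‖ₑ) := by
  have hint (g : SL(n, ℝ)) : Integrable (fun t ↦ Φ (XSpace.mk (colUnipotent i t * g)))
      (volume.restrict (unitCube n)) :=
    integrableOn_unitCube_of_continuous (hΦ.comp (continuous_mk_colUnipotent_mul i g))
  have hshift : |(∫ t in unitCube n, Φ (XSpace.mk (colUnipotent i t))) -
      ∫ t in unitCube n, Φ (XSpace.mk (colUnipotent i t * a))| ≤ ε :=
    abs_integral_sub_integral_le (by simpa using hint 1) (hint a) fun t ↦ by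
      rw [abs_sub_comm]
      exact hΦa (XSpace.mk (colUnipotent i t))
  refine (enorm_le_add_enorm_of_abs_sub_le hshift).trans ?_
  gcongr
  refine (enorm_integral_unitCube_le ha hnear.abs_det_conjMatrix_le hnear.norm_le_mulVec hΦ e
    hK).trans ?_
  refine mul_le_mul_right ?_ _
  refine setLIntegral_mono' Metric.isClosed_closedBall.measurableSet fun s hs ↦ ?_
  have hpoint : XSpace.mk (a * colUnipotent i s) =
      rightTranslate n ((colUnipotent i s)⁻¹ * (rowUnipotent i q)⁻¹ * colUnipotent i s)
        (rightTranslate n (colUnipotent i s) (XSpace.mk (a * rowUnipotent i q))) := by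
    simp only [rightTranslate_mk]
    congr 1
    group
  rw [hpoint]
  exact enorm_le_add_enorm_of_abs_sub_le (havg s hs _)

lemma HeckeSet.enorm_integral_unitCube_kernel_le (S : HeckeSet n) (ha : IsRowParabolic i a)
    (hnear : IsNearIdentity i a) {η : XSpace n → ℝ} (hη : Continuous η)
    (hηa : ∀ x, |η (rightTranslate n a x) - η x| ≤ ε) (hK : K ≠ 0)
    (havg : ∀ s ∈ Metric.closedBall (0 : Fin n → ℝ) 2, ∀ x,
      |birkhoffAverage ℝ (rightTranslate n (colUnipotent i e)) η K (rightTranslate n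
        ((colUnipotent i s)⁻¹ * (rowUnipotent i q)⁻¹ * colUnipotent i s) x) -
        birkhoffAverage ℝ (rightTranslate n (colUnipotent i e)) η K x| ≤ ε) :
    ‖∫ t in unitCube n, ∫ y, η y ∂S.kernel (XSpace.mk (colUnipotent i t))‖ₑ ≤
      ε + 2 * ∫⁻ s in Metric.closedBall 0 2,
        (ε + ∫⁻ y, ‖birkhoffAverage ℝ (rightTranslate n (colUnipotent i e)) η K y‖ₑ ∂S.kernel
          (rightTranslate n (colUnipotent i s) (XSpace.mk (a * rowUnipotent i q)))) := by
  refine (enorm_integral_unitCube_le_of_isNearIdentity ha hnear (S.continuous_integral_kernel hη)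
    (S.abs_integral_kernel_rightTranslate_sub_le hηa) hK (e := e) (q := q) ?_).trans ?_
  · simp only [← S.integral_kernel_birkhoffAverage]
    exact fun s hs ↦ S.abs_integral_kernel_rightTranslate_sub_le (havg s hs)
  · gcongr
    rw [← S.integral_kernel_birkhoffAverage]
    exact enorm_integral_le_lintegral_enorm _

end Pointwise

section Averaging

variable (μ : Measure (XSpace n)) [SMulInvariantMeasure SL(n, ℝ) (XSpace n) μ]
  [IsProbabilityMeasure μ] {S S' : HeckeSet n} {U : Set (XSpace n)} {F H : XSpace n → ENNReal}
  {B : ENNReal}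

lemma setLIntegral_kernel_rightTranslate_le (hS' : S'.base = S.base⁻¹) (hU : MeasurableSet U)
    (hF : Measurable F) (hUF : ∀ x ∈ U, 1 ≤ F x) (hH : Measurable H) (hB : ∀ x, H x ≤ B)
    (c : ENNReal) (g : SL(n, ℝ)) :
    ∫⁻ x in U, ∫⁻ y, H y ∂S.kernel (rightTranslate n g x) ∂μ ≤
      c * ∫⁻ x, H x ∂μ + B * ∫⁻ x, (∫⁻ y, F y ∂S'.kernel x - c) ∂μ := by
  have hHg : Measurable fun x ↦ H (rightTranslate n g x) := hH.comp (measurable_rightTranslate g)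
  have hsub : Measurable fun x ↦ ∫⁻ y, F y ∂S'.kernel x - c :=
    hF.lintegral_kernel.sub measurable_const
  calc ∫⁻ x in U, ∫⁻ y, H y ∂S.kernel (rightTranslate n g x) ∂μ
      ≤ ∫⁻ x in U, F x * ∫⁻ y, H (rightTranslate n g y) ∂S.kernel x ∂μ :=
        setLIntegral_mono' hU fun x hx ↦ by
          rw [S.lintegral_kernel_rightTranslate]
          exact le_mul_of_one_le_left zero_le (hUF x hx)
    _ ≤ ∫⁻ x, F x * ∫⁻ y, H (rightTranslate n g y) ∂S.kernel x ∂μ := setLIntegral_le_lintegral _ _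
    _ = ∫⁻ x, (∫⁻ y, F y ∂S'.kernel x) * H (rightTranslate n g x) ∂μ :=
        HeckeSet.lintegral_mul_kernel μ hS' hF hHg
    _ ≤ ∫⁻ x, (c * H (rightTranslate n g x) + B * (∫⁻ y, F y ∂S'.kernel x - c)) ∂μ :=
        lintegral_mono fun x ↦ by
          grw [← hB (rightTranslate n g x), mul_comm (H _), ← add_mul, ← le_add_tsub]
    _ = _ := by
        rw [lintegral_add_left (hHg.const_mul _), lintegral_const_mul _ hHg,
          lintegral_const_mul _ hsub,
          (measurePreserving_rightTranslate μ g).lintegral_comp hH]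

lemma setLIntegral_setLIntegral_kernel_colUnipotent_le (i : Fin n) (hS' : S'.base = S.base⁻¹)
    (hU : MeasurableSet U) (hF : Measurable F) (hUF : ∀ x ∈ U, 1 ≤ F x) (hH : Measurable H)
    (hB : ∀ x, H x ≤ B) (c : ENNReal) (Z : Set (Fin n → ℝ)) :
    ∫⁻ x in U, (∫⁻ s in Z, ∫⁻ y, H y ∂S.kernel (rightTranslate n (colUnipotent i s) x)) ∂μ ≤
      volume Z * (c * ∫⁻ x, H x ∂μ + B * ∫⁻ x, (∫⁻ y, F y ∂S'.kernel x - c) ∂μ) := by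
  have hmeas : Measurable fun z : XSpace n × (Fin n → ℝ) ↦
      ∫⁻ y, H y ∂S.kernel (rightTranslate n (colUnipotent i z.2) z.1) :=
    hH.lintegral_kernel.comp (continuous_rightTranslate_uncurry.comp
      (((continuous_colUnipotent i).comp continuous_snd).prodMk continuous_fst)).measurable
  rw [lintegral_lintegral_swap hmeas.aemeasurable]
  refine (lintegral_mono fun s ↦
    setLIntegral_kernel_rightTranslate_le μ hS' hU hF hUF hH hB c _).trans_eq ?_
  rw [setLIntegral_const, mul_comm]

lemma le_of_forall_mem_le_setLIntegral_kernel (i : Fin n) (hS' : S'.base = S.base⁻¹)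
    (hU : MeasurableSet U) (hU0 : μ U ≠ 0) (hF : Measurable F) (hUF : ∀ x ∈ U, 1 ≤ F x)
    (hH : Measurable H) (hB : ∀ x, H x ≤ B) {c C : ENNReal} (hc : c ≤ C * μ U)
    {Z : Set (Fin n → ℝ)} {τ ε : ENNReal}
    (hτ : ∀ x ∈ U, τ ≤ ε + 2 * ∫⁻ s in Z,
      (ε + ∫⁻ y, H y ∂S.kernel (rightTranslate n (colUnipotent i s) x))) :
    τ ≤ (1 + 2 * volume Z) * ε + 2 * volume Z * C * ∫⁻ x, H x ∂μ +
      2 * volume Z * B / μ U * ∫⁻ x, (∫⁻ y, F y ∂S'.kernel x - c) ∂μ := by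
  have hUtop : μ U ≠ ⊤ := measure_ne_top μ U
  refine (ENNReal.mul_le_mul_iff_left hU0 hUtop).1 ?_
  calc τ * μ U = ∫⁻ _ in U, τ ∂μ := (setLIntegral_const U τ).symm
    _ ≤ ∫⁻ x in U, (ε + 2 * ∫⁻ s in Z,
          (ε + ∫⁻ y, H y ∂S.kernel (rightTranslate n (colUnipotent i s) x))) ∂μ :=
        setLIntegral_mono' hU hτ
    _ = (1 + 2 * volume Z) * ε * μ U + 2 * ∫⁻ x in U,
          (∫⁻ s in Z, ∫⁻ y, H y ∂S.kernel (rightTranslate n (colUnipotent i s) x)) ∂μ := by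
        simp only [lintegral_add_left measurable_const, setLIntegral_const,
          lintegral_const_mul' 2 _ ENNReal.ofNat_ne_top]
        ring
    _ ≤ (1 + 2 * volume Z) * ε * μ U + 2 * (volume Z *
          (C * μ U * ∫⁻ x, H x ∂μ + B * ∫⁻ x, (∫⁻ y, F y ∂S'.kernel x - c) ∂μ)) := by
        gcongr
        exact (setLIntegral_setLIntegral_kernel_colUnipotent_le μ i hS' hU hF hUF hH hB c
          Z).trans (by gcongr)
    _ = _ := by
        rw [add_mul _ (2 * volume Z * B / μ U * _), mul_right_comm (2 * volume Z * B / μ U),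
          ENNReal.div_mul_cancel hU0 hUtop]
        ring

end Averaging

section Limit

variable (μ : Measure (XSpace n)) [SMulInvariantMeasure SL(n, ℝ) (XSpace n) μ]
  [IsProbabilityMeasure μ] {i j : Fin n} {η : XSpace n → ℝ} {B : NNReal}

lemma tendsto_lintegral_enorm_birkhoffAverage_colUnipotent (hij : i ≠ j) (hη : Continuous η)
    (hB : ∀ x, |η x| ≤ B) (hmean : ∫ x, η x ∂μ = 0) :
    Tendsto (fun K ↦ ∫⁻ x, ‖birkhoffAverage ℝ
      (rightTranslate n (colUnipotent i (Pi.single j 1))) η K x‖ₑ ∂μ) atTop (𝓝 0) := by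
  have hergodic := ergodic_rightTranslate_transvection μ hij.symm
  rw [← colUnipotent_single i hij] at hergodic
  have hlim := ENNReal.tendsto_ofReal (tendsto_integral_abs_birkhoffAverage_sub_integral hergodic
    (MemLp.of_bound hη.aestronglyMeasurable B (.of_forall hB)))
  rw [ENNReal.ofReal_zero] at hlim
  refine hlim.congr fun K ↦ ?_
  have havg := continuous_birkhoffAverage
    (continuous_rightTranslate (colUnipotent i (Pi.single j 1))) hη K
  simp only [hmean, sub_zero, ← Real.norm_eq_abs]
  exact ofReal_integral_norm_eq_lintegral_enorm
    (.of_bound havg.aestronglyMeasurable B (.of_forall (norm_birkhoffAverage_le hB K)))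

lemma enorm_integral_unitCube_kernel_le_of_bruhatBox {S S' : HeckeSet n}
    (hS' : S'.base = S.base⁻¹) {V : Set SL(n, ℝ)} (hV : IsOpen V) (hV1 : 1 ∈ V) {ε : NNReal}
    (hVη : ∀ a ∈ V, (∀ x, |η (rightTranslate n a x) - η x| ≤ ε) ∧ IsNearIdentity i a)
    (hη : Continuous η) (hB : ∀ x, |η x| ≤ B) {K N : ℕ} (hK : K ≠ 0) (hN : 0 < N)
    {e : Fin n → ℝ} (hconj : ∀ q : Fin n → ℝ, ‖q‖ < (N : ℝ)⁻¹ → ∀ s ∈ Metric.closedBall 0 2, ∀ x,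
      |birkhoffAverage ℝ (rightTranslate n (colUnipotent i e)) η K (rightTranslate n
        ((colUnipotent i s)⁻¹ * (rowUnipotent i q)⁻¹ * colUnipotent i s) x) -
        birkhoffAverage ℝ (rightTranslate n (colUnipotent i e)) η K x| ≤ ε)
    {C : ENNReal} (hC : volume (rowBox i N) ≤ C * μ (XSpace.mk '' bruhatBox i V (N : ℝ)⁻¹)) :
    ‖∫ t in unitCube n, ∫ y, η y ∂S.kernel (XSpace.mk (colUnipotent i t))‖ₑ ≤
      (1 + 2 * volume (Metric.closedBall (0 : Fin n → ℝ) 2)) * ε +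
      2 * volume (Metric.closedBall (0 : Fin n → ℝ) 2) * C *
        ∫⁻ x, ‖birkhoffAverage ℝ (rightTranslate n (colUnipotent i e)) η K x‖ₑ ∂μ +
      2 * volume (Metric.closedBall (0 : Fin n → ℝ) 2) * B /
          μ (XSpace.mk '' bruhatBox i V (N : ℝ)⁻¹) *
        ∫⁻ x, (∫⁻ y, siegelTransform ((rowBox i N).indicator 1) y ∂S'.kernel x -
          ∫⁻ w, (rowBox i N).indicator 1 w) ∂μ := by
  have hmeas : MeasurableSet (XSpace.mk '' bruhatBox i V (N : ℝ)⁻¹) :=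
    (XSpace.isOpenQuotientMap_mk.isOpenMap _ (isOpen_bruhatBox hV _)).measurableSet
  have havg := continuous_birkhoffAverage (continuous_rightTranslate (colUnipotent i e)) hη K
  refine le_of_forall_mem_le_setLIntegral_kernel μ i hS' hmeas
    (measure_image_bruhatBox_ne_zero μ hV hV1 (by positivity))
    (measurable_siegelTransform (isRiemannIntegrand_indicator_rowBox N).measurable) ?_
    havg.enorm.measurable (fun x ↦ enorm_le_coe.2 (norm_birkhoffAverage_le hB K x)) ?_ ?_
  · rintro _ ⟨g, hg, rfl⟩
    exact one_le_siegelTransform_rowBox (fun a ha ↦ (hVη a ha).2.diag_mem) hg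
  · rwa [lintegral_indicator_one (s := rowBox i N) measurableSet_Icc]
  · rintro _ ⟨g, ⟨hpos, hratio, hgV⟩, rfl⟩
    rw [← parabolicPart_mul_rowUnipotent i g]
    exact S.enorm_integral_unitCube_kernel_le (isRowParabolic_parabolicPart i hpos)
      (hVη _ hgV).2 hη (hVη _ hgV).1 hK (hconj _ hratio)

lemma eventually_enorm_integral_unitCube_kernel_le (hij : i ≠ j) (hη : RightUniformContinuous η)
    (hB : ∀ x, |η x| ≤ B) (hmean : ∫ x, η x ∂μ = 0) {S : Finset (Fin n)} (hS : S.Nonempty)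
    (hSc : Sᶜ.Nonempty) {ε : NNReal} (hε : 0 < ε) :
    ∀ᶠ p : Nat.Primes in primesAtTop, ‖∫ t in unitCube n, ∫ y, η y
        ∂(primeHeckeSet (p : ℕ) S).kernel (XSpace.mk (colUnipotent i t))‖ₑ ≤
      (3 + 2 * volume (Metric.closedBall (0 : Fin n → ℝ) 2)) * ε := by
  have : Nontrivial (Fin n) := nontrivial_of_ne i j hij
  have hvol : 2 * volume (Metric.closedBall (0 : Fin n → ℝ) 2) ≠ ⊤ :=
    ENNReal.mul_ne_top ENNReal.ofNat_ne_top measure_closedBall_lt_top.ne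
  have hεpos : (0 : ENNReal) < ε := ENNReal.coe_pos.2 hε
  obtain ⟨V, hVη, hV, hV1⟩ := eventually_nhds_iff.1
    ((hη.eventually_abs_sub_le hε).and (eventually_isNearIdentity i))
  obtain ⟨C, hC, hbox⟩ := exists_volume_rowBox_le_mul_measure (i := i) μ hV hV1
  have hergodic := ENNReal.Tendsto.const_mul
    (tendsto_lintegral_enorm_birkhoffAverage_colUnipotent μ hij hη.continuous hB hmean)
    (.inr (ENNReal.mul_ne_top hvol hC))
  obtain ⟨K, hKε, hK⟩ := ((hergodic.eventually (eventually_le_nhds (by simpa))).and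
    (eventually_ne_atTop 0)).exists
  obtain ⟨N, hN, hconj⟩ := exists_nat_forall_conj_rowUnipotent i
    ((hη.birkhoffAverage (colUnipotent i (Pi.single j 1)) K).eventually_abs_sub_le hε)
  have hexcess := ENNReal.Tendsto.const_mul (tendsto_lintegral_siegelTransform_kernel_sub μ
    (isRiemannIntegrand_indicator_rowBox N)
    (Set.indicator_of_notMem (zero_notMem_rowBox (i := i) N) _) hSc (by simpa using hS))
    (.inr (ENNReal.div_ne_top (ENNReal.mul_ne_top hvol (ENNReal.coe_ne_top (r := B)))
      (measure_image_bruhatBox_ne_zero (i := i) μ hV hV1 (inv_pos.2 (Nat.cast_pos.2 hN)))))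
  filter_upwards [hexcess.eventually (eventually_le_nhds (by simpa))] with p hp
  refine (enorm_integral_unitCube_kernel_le_of_bruhatBox μ (primeHeckeSet_compl_base (p : ℕ) S)
    hV hV1 hVη hη.continuous hB hK hN hconj (hbox N hN)).trans ?_
  grw [hKε, hp]
  exact (by ring : _ = _).le

theorem tendsto_integral_unitCube_kernel_zero (hij : i ≠ j) (hη : RightUniformContinuous η)
    (hB : ∀ x, |η x| ≤ B) (hmean : ∫ x, η x ∂μ = 0) {S : Finset (Fin n)} (hS : S.Nonempty)
    (hSc : Sᶜ.Nonempty) :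
    Tendsto (fun p : Nat.Primes ↦ ∫ t in unitCube n, ∫ y, η y
      ∂(primeHeckeSet (p : ℕ) S).kernel (XSpace.mk (colUnipotent i t))) primesAtTop (𝓝 0) := by
  refine tendsto_zero_iff_enorm_tendsto_zero.2 (ENNReal.tendsto_nhds_zero.2 fun δ hδ ↦ ?_)
  have hconst : 3 + 2 * volume (Metric.closedBall (0 : Fin n → ℝ) 2) ≠ ⊤ :=
    ENNReal.add_ne_top.2 ⟨ENNReal.ofNat_ne_top,
      ENNReal.mul_ne_top ENNReal.ofNat_ne_top measure_closedBall_lt_top.ne⟩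
  obtain ⟨ε, hε, hεδ⟩ := ENNReal.exists_nnreal_pos_mul_lt hconst hδ.ne'
  filter_upwards [eventually_enorm_integral_unitCube_kernel_le μ hij hη hB hmean hS hSc hε]
    with p hp
  rw [mul_comm] at hεδ
  exact hp.trans hεδ.le

end Limit

end CubeEquidistribution

section PointEquidistribution

open Filter

variable {n : ℕ}

lemma HeckeSet.abs_integral_kernel_sub_le (S : HeckeSet n) {u : SL(n, ℝ)} {x : XSpace n}
    (hx : Function.IsFixedPt (rightTranslate n u) x) (η : XSpace n → ℝ) (m : ℝ) {K : ℕ}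
    (hK : K ≠ 0) :
    |∫ y, η y ∂S.kernel x - m| ≤
      ∫ y, |birkhoffAverage ℝ (rightTranslate n u) η K y - m| ∂S.kernel x := by
  have havg : ∫ y, birkhoffAverage ℝ (rightTranslate n u) η K y ∂S.kernel x =
      ∫ y, η y ∂S.kernel x := by
    rw [S.integral_kernel_birkhoffAverage, hx.birkhoffAverage_eq ℝ _ (Nat.cast_ne_zero.2 hK)]
  calc |∫ y, η y ∂S.kernel x - m|
      = |∫ y, (birkhoffAverage ℝ (rightTranslate n u) η K y - m) ∂S.kernel x| := by
        rw [integral_sub (S.integrable_kernel _ x) (integrable_const m), havg]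
        simp
    _ ≤ _ := abs_integral_le_integral_abs

lemma isFixedPt_rightTranslate_colUnipotent {i : Fin n} {e : Fin n → ℝ}
    (he : colUnipotent i e ∈ Gamma n) (t : Fin n → ℝ) :
    Function.IsFixedPt (rightTranslate n (colUnipotent i e)) (XSpace.mk (colUnipotent i t)) := by
  rw [Function.IsFixedPt, rightTranslate_mk, ← colUnipotent_add, add_comm, colUnipotent_add,
    XSpace.mk_mul_of_mem he]

lemma measure_restrict_unitCube_ne_zero {U : Set (Fin n → ℝ)} (hU : U ∈ 𝓝 0) :
    volume.restrict (unitCube n) U ≠ 0 := by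
  let openCube : Set (Fin n → ℝ) := Set.univ.pi fun _ ↦ Set.Ioo 0 1
  have hopen : IsOpen openCube := isOpen_set_pi Set.finite_univ fun _ _ ↦ isOpen_Ioo
  have hzero : (0 : Fin n → ℝ) ∈ closure openCube := by
    simp [openCube, closure_pi_set, Pi.le_def]
  have hpos := (isOpen_interior.inter hopen).measure_pos volume
    (mem_closure_iff.1 hzero _ isOpen_interior (mem_interior_iff_mem_nhds.2 hU))
  rw [Measure.restrict_apply' measurableSet_unitCube]
  refine (hpos.trans_le (measure_mono ?_)).ne'
  exact Set.inter_subset_inter interior_subset (Set.pi_mono fun _ _ ↦ Set.Ioo_subset_Ico_self)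

-- Every point of the cube is fixed by the same `u ∈ Γ`, so ergodic averages may be inserted before
-- comparing the value at `Γ` with the part of the cube integral near `0`.
lemma HeckeSet.abs_integral_kernel_mk_one_sub_le (S : HeckeSet n) {i : Fin n} {e : Fin n → ℝ}
    (he : colUnipotent i e ∈ Gamma n) {η : XSpace n → ℝ} (hη : Continuous η) {ε m : ℝ}
    (hε : 0 < ε) {U : Set (Fin n → ℝ)}
    (hU : ∀ t ∈ U, ∀ x, |η (rightTranslate n (colUnipotent i t) x) - η x| ≤ ε) {K : ℕ} (hK : K ≠ 0)
    (hcube : ∫ t in unitCube n, ∫ y, |birkhoffAverage ℝ (rightTranslate n (colUnipotent i e)) η K y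
      - m| ∂S.kernel (XSpace.mk (colUnipotent i t)) < ε * (volume.restrict (unitCube n)).real U) :
    |∫ y, η y ∂S.kernel (XSpace.mk 1) - m| ≤ 2 * ε := by
  set F := fun t ↦ ∫ y, |birkhoffAverage ℝ (rightTranslate n (colUnipotent i e)) η K y - m|
    ∂S.kernel (XSpace.mk (colUnipotent i t))
  have hcont : Continuous F :=
    (S.continuous_integral_kernel ((continuous_birkhoffAverage
      (continuous_rightTranslate (colUnipotent i e)) hη K).sub continuous_const).abs).comp
      (XSpace.continuous_mk.comp (continuous_colUnipotent i))
  by_contra! hlarge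
  have hsub : U ⊆ {t | ε ≤ F t} := fun t ht ↦ by
    have hnear := S.abs_integral_kernel_rightTranslate_sub_le (hU t ht) (XSpace.mk 1)
    rw [rightTranslate_mk, one_mul] at hnear
    have hfix : |∫ y, η y ∂S.kernel (XSpace.mk (colUnipotent i t)) - m| ≤ F t :=
      S.abs_integral_kernel_sub_le (isFixedPt_rightTranslate_colUnipotent he t) η m hK
    rw [Set.mem_ofPred_eq]
    grind
  have hmarkov := mul_meas_ge_le_integral_of_nonneg
    (.of_forall fun t ↦ integral_nonneg fun y ↦ abs_nonneg _)
    (integrableOn_unitCube_of_continuous hcont) ε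
  exact hmarkov.not_gt
    (hcube.trans_le (mul_le_mul_of_nonneg_left (measureReal_mono hsub) hε.le))

variable (μ : Measure (XSpace n)) [SMulInvariantMeasure SL(n, ℝ) (XSpace n) μ]
  [IsProbabilityMeasure μ] {η : XSpace n → ℝ} {B : ℝ} {S : Finset (Fin n)}

lemma tendsto_integral_unitCube_kernel [Nontrivial (Fin n)] (i : Fin n)
    (hη : RightUniformContinuous η) (hB : ∀ x, |η x| ≤ B) (hS : S.Nonempty) (hSc : Sᶜ.Nonempty) :
    Tendsto (fun p : Nat.Primes ↦ ∫ t in unitCube n, ∫ y, η y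
        ∂(primeHeckeSet (p : ℕ) S).kernel (XSpace.mk (colUnipotent i t)))
      primesAtTop (𝓝 (∫ x, η x ∂μ)) := by
  obtain ⟨j, hji⟩ := exists_ne i
  set m := ∫ x, η x ∂μ
  have hint : Integrable η μ := .of_bound hη.continuous.aestronglyMeasurable B (.of_forall hB)
  have hbound (x : XSpace n) : |η x - m| ≤ (B + |m|).toNNReal :=
    ((abs_sub _ _).trans (by grw [hB x])).trans (Real.le_coe_toNNReal _)
  have hmean : ∫ x, (η x - m) ∂μ = 0 := by
    rw [integral_sub hint (integrable_const m)]
    simp [m]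
  have hcentered := (tendsto_integral_unitCube_kernel_zero μ hji.symm
    (hη.comp_uniformContinuous (uniformContinuous_id.sub uniformContinuous_const)) hbound hmean
    hS hSc).add_const m
  rw [zero_add] at hcentered
  refine hcentered.congr fun p ↦ ?_
  have hcont : Continuous fun t ↦ ∫ y, η y
      ∂(primeHeckeSet (p : ℕ) S).kernel (XSpace.mk (colUnipotent i t)) :=
    ((primeHeckeSet (p : ℕ) S).continuous_integral_kernel hη.continuous).comp
      (XSpace.continuous_mk.comp (continuous_colUnipotent i))
  simp only [id, integral_sub (HeckeSet.integrable_kernel _ _ _) (integrable_const m)]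
  rw [integral_sub (integrableOn_unitCube_of_continuous hcont) (by simp)]
  simp

lemma eventually_abs_integral_kernel_sub_le [Nontrivial (Fin n)] (hη : RightUniformContinuous η)
    (hB : ∀ x, |η x| ≤ B) (hS : S.Nonempty) (hSc : Sᶜ.Nonempty) {ε : ℝ} (hε : 0 < ε) :
    ∀ᶠ p : Nat.Primes in primesAtTop,
      |∫ y, η y ∂(primeHeckeSet (p : ℕ) S).kernel (XSpace.mk 1) - ∫ x, η x ∂μ| ≤ 2 * ε := by
  obtain ⟨i, j, hij⟩ := exists_pair_ne (Fin n)
  set m := ∫ x, η x ∂μ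
  set u := colUnipotent i (Pi.single j 1)
  have hcol : Tendsto (colUnipotent i) (𝓝 0) (𝓝 1) :=
    (continuous_colUnipotent i).tendsto' 0 1 (colUnipotent_zero i)
  obtain ⟨U, hU, hclose⟩ := (hcol.eventually (hη.eventually_abs_sub_le hε)).exists_mem
  set c := (volume.restrict (unitCube n)).real U
  have hc : 0 < c :=
    ENNReal.toReal_pos (measure_restrict_unitCube_ne_zero hU) (measure_ne_top _ _)
  have hergodic := ergodic_rightTranslate_transvection μ hij.symm
  rw [← colUnipotent_single i hij] at hergodic
  obtain ⟨K, hKε, hK⟩ := (((tendsto_integral_abs_birkhoffAverage_sub_integral hergodic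
    (MemLp.of_bound hη.continuous.aestronglyMeasurable B (.of_forall hB))).eventually_lt_const
    (mul_pos hε hc)).and (eventually_ne_atTop 0)).exists
  have hdev : RightUniformContinuous
      fun x ↦ |birkhoffAverage ℝ (rightTranslate n u) η K x - m| :=
    (hη.birkhoffAverage u K).comp_uniformContinuous
      (Real.uniformContinuous_abs.comp (uniformContinuous_id.sub uniformContinuous_const))
  have hdevB (x) : |(|birkhoffAverage ℝ (rightTranslate n u) η K x - m|)| ≤ B + |m| := by
    rw [abs_abs]
    grw [abs_sub, ← Real.norm_eq_abs, norm_birkhoffAverage_le hB K x]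
  filter_upwards [(tendsto_integral_unitCube_kernel μ i hdev hdevB hS hSc).eventually_lt_const hKε]
    with p hp
  exact (primeHeckeSet (p : ℕ) S).abs_integral_kernel_mk_one_sub_le
    (colUnipotent_single_mem_Gamma i j) hη.continuous hε hclose hK hp

theorem tendsto_integral_kernel_mk_one [Nontrivial (Fin n)] (hη : RightUniformContinuous η)
    (hB : ∀ x, |η x| ≤ B) (hS : S.Nonempty) (hSc : Sᶜ.Nonempty) :
    Tendsto (fun p : Nat.Primes ↦ ∫ y, η y ∂(primeHeckeSet (p : ℕ) S).kernel (XSpace.mk 1))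
      primesAtTop (𝓝 (∫ x, η x ∂μ)) := by
  refine Metric.tendsto_nhds.2 fun ε hε ↦ ?_
  filter_upwards [eventually_abs_integral_kernel_sub_le μ hη hB hS hSc
    (show 0 < ε / 3 by positivity)] with p hp
  rw [Real.dist_eq]
  linarith

end PointEquidistribution

section SuccessiveNorms

open Filter

variable {E F : Type*} [NormedAddCommGroup E] [NormedAddCommGroup F] {L : Set E} {L' : Set F}
  {r : ℕ} {s : ℝ}

/-- The elements of `L` of norm at most `s`. -/
def shortVectors (L : Set E) (s : ℝ) : Set E := {w ∈ L | ‖w‖ ≤ s}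

/-- The `r`-th smallest norm of an element of `L`, counted with multiplicity and starting from
`r = 1`. It is meaningful when `L` is infinite and has finitely many elements in each ball. -/
def successiveNorm (r : ℕ) (L : Set E) : ℝ := sInf {s | 0 ≤ s ∧ r ≤ (shortVectors L s).ncard}

lemma successiveNorm_nonneg : 0 ≤ successiveNorm r L := Real.sInf_nonneg fun _ hs ↦ hs.1

lemma successiveNorm_le (hs : 0 ≤ s) (hr : r ≤ (shortVectors L s).ncard) :
    successiveNorm r L ≤ s :=
  csInf_le ⟨0, fun _ ht ↦ ht.1⟩ ⟨hs, hr⟩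

lemma eventually_shortVectors_subset (hfin : ∀ s, (shortVectors L s).Finite) (s : ℝ) :
    ∀ᶠ t in 𝓝[>] s, shortVectors L t ⊆ shortVectors L s := by
  have hnorm : ∀ᶠ t in 𝓝[>] s, ∀ w ∈ shortVectors L (s + 1), ‖w‖ ≤ t → ‖w‖ ≤ s := by
    refine (eventually_all_finite (hfin _)).2 fun w _ ↦ ?_
    rcases le_or_gt ‖w‖ s with hw | hw
    · exact .of_forall fun _ _ ↦ hw
    · filter_upwards [nhdsWithin_le_nhds (gt_mem_nhds hw)] with t ht htw
      exact absurd htw ht.not_ge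
  filter_upwards [hnorm, nhdsWithin_le_nhds (gt_mem_nhds (lt_add_one s))]
    with t ht hts w hw
  exact ⟨hw.1, ht w ⟨hw.1, hw.2.trans hts.le⟩ hw.2⟩

lemma exists_le_ncard_shortVectors (hfin : ∀ s, (shortVectors L s).Finite) (hL : L.Infinite)
    (r : ℕ) : ∃ s, 0 ≤ s ∧ r ≤ (shortVectors L s).ncard := by
  obtain ⟨t, htL, rfl⟩ := hL.exists_subset_card_eq r
  refine ⟨∑ w ∈ t, ‖w‖, by positivity, ?_⟩
  rw [← Set.ncard_coe_finset]
  exact Set.ncard_le_ncard (fun w hw ↦ ⟨htL hw,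
    Finset.single_le_sum (f := fun w ↦ ‖w‖) (fun _ _ ↦ norm_nonneg _) hw⟩) (hfin _)

lemma successiveNorm_le_iff (hfin : ∀ s, (shortVectors L s).Finite) (hL : L.Infinite)
    (hs : 0 ≤ s) : successiveNorm r L ≤ s ↔ r ≤ (shortVectors L s).ncard := by
  refine ⟨fun h ↦ ?_, successiveNorm_le hs⟩
  obtain ⟨t, hts, hst⟩ := ((eventually_shortVectors_subset hfin s).and self_mem_nhdsWithin).exists
  obtain ⟨u, ⟨-, hru⟩, hut⟩ :=
    exists_lt_of_csInf_lt (exists_le_ncard_shortVectors hfin hL r) (h.trans_lt hst)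
  have hus : shortVectors L u ⊆ shortVectors L s :=
    fun w hw ↦ hts ⟨hw.1, hw.2.trans hut.le⟩
  exact hru.trans (Set.ncard_le_ncard hus (hfin s))

lemma exists_norm_eq_successiveNorm (hfin : ∀ s, (shortVectors L s).Finite) (hL : L.Infinite)
    (hpos : 0 < successiveNorm r L) : ∃ w ∈ L, ‖w‖ = successiveNorm r L := by
  set D := successiveNorm r L with hD
  by_contra! hne
  have hlt : ∀ᶠ t in 𝓝[<] D, ∀ w ∈ shortVectors L D, ‖w‖ ≤ t :=
    (eventually_all_finite (hfin D)).2 fun w hw ↦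
      nhdsWithin_le_nhds (le_mem_nhds (hw.2.lt_of_ne (hne w hw.1)))
  have hpos' : ∀ᶠ t in 𝓝[<] D, 0 < t := nhdsWithin_le_nhds (lt_mem_nhds hpos)
  obtain ⟨t, ⟨ht, ht0⟩, htD⟩ := ((hlt.and hpos').and self_mem_nhdsWithin).exists
  refine (Set.mem_Iio.1 htD).not_ge (successiveNorm_le ht0.le ?_)
  exact ((successiveNorm_le_iff hfin hL hpos.le).1 hD.ge).trans
    (Set.ncard_le_ncard (fun w hw ↦ ⟨hw.1, ht w hw⟩) (hfin t))

lemma successiveNorm_le_mul (hfin : ∀ s, (shortVectors L s).Finite) (hL : L.Infinite)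
    (hfin' : ∀ s, (shortVectors L' s).Finite) {f : E → F} (hf : Set.InjOn f L)
    (hmaps : Set.MapsTo f L L') {c : ℝ} (hc : 0 ≤ c) (hnorm : ∀ w, ‖f w‖ ≤ c * ‖w‖) :
    successiveNorm r L' ≤ c * successiveNorm r L := by
  refine successiveNorm_le (mul_nonneg hc successiveNorm_nonneg) ?_
  refine ((successiveNorm_le_iff hfin hL successiveNorm_nonneg).1 le_rfl).trans
    (Set.ncard_le_ncard_of_injOn f (fun w hw ↦ ⟨hmaps hw.1, ?_⟩) (hf.mono fun w hw ↦ hw.1)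
      (hfin' _))
  exact (hnorm w).trans (by gcongr; exact hw.2)

end SuccessiveNorms

section LatticeSuccessiveNorms

open Filter

variable {n r : ℕ}

lemma norm_intCast_pi (v : Fin n → ℤ) : ‖fun i ↦ (v i : ℝ)‖ = ‖v‖ := rfl

open scoped Matrix.Norms.Operator in
lemma norm_vecMul_le (w : Fin n → ℝ) (A : Matrix (Fin n) (Fin n) ℝ) :
    ‖w ᵥ* A‖ ≤ ‖Aᵀ‖ * ‖w‖ := by
  rw [← mulVec_transpose]
  exact linfty_opNorm_mulVec _ _

open scoped Matrix.Norms.Operator in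
lemma eventually_norm_vecMul_le [Nonempty (Fin n)] {c : ℝ} (hc : 1 < c) :
    ∀ᶠ g in 𝓝 (1 : SL(n, ℝ)), ∀ w : Fin n → ℝ, ‖w ᵥ* g.1‖ ≤ c * ‖w‖ := by
  have hcont : Continuous fun g : SL(n, ℝ) ↦ ‖g.1ᵀ‖ :=
    (continuous_induced_dom.matrix_transpose).norm
  have hlim : Tendsto (fun g : SL(n, ℝ) ↦ ‖g.1ᵀ‖) (𝓝 1) (𝓝 1) := hcont.tendsto' 1 1 (by simp)
  filter_upwards [hlim.eventually_le_const hc] with g hg w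
  exact (norm_vecMul_le w g.1).trans (by gcongr)

namespace XSpace

lemma shortVectors_lattice_mk (g : SL(n, ℝ)) (s : ℝ) :
    shortVectors ((mk g).lattice : Set (Fin n → ℝ)) s =
      intVecMul g '' {v | ‖intVecMul g v‖ ≤ s} := by
  ext w
  constructor
  · rintro ⟨⟨v, rfl⟩, hv⟩
    exact ⟨v, hv, rfl⟩
  · rintro ⟨v, hv, rfl⟩
    exact ⟨⟨v, rfl⟩, hv⟩

open scoped Matrix.Norms.Operator in
lemma finite_shortVectors_lattice (x : XSpace n) (s : ℝ) :
    (shortVectors (x.lattice : Set (Fin n → ℝ)) s).Finite := by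
  obtain ⟨g, rfl⟩ := mk_surjective x
  rw [shortVectors_lattice_mk]
  refine Set.Finite.image _ ((isCompact_closedBall (0 : Fin n → ℤ)
    (‖((g⁻¹).1)ᵀ‖ * s)).finite_of_discrete.subset fun v hv ↦ ?_)
  rw [mem_closedBall_zero_iff, ← norm_intCast_pi,
    vecMul_eq_iff_eq_vecMul_inv.1 (intVecMul_apply g v).symm]
  exact (norm_vecMul_le _ _).trans (by gcongr; exact hv)

lemma infinite_lattice [Nonempty (Fin n)] (x : XSpace n) :
    (x.lattice : Set (Fin n → ℝ)).Infinite := by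
  obtain ⟨g, rfl⟩ := mk_surjective x
  exact Set.infinite_range_of_injective (intVecMul_injective g)

end XSpace

lemma mem_OmegaTilde_iff {D : ℝ} {x : XSpace n} : x ∈ OmegaTilde n D r ↔
    (shortVectors (x.lattice : Set (Fin n → ℝ)) D).ncard = r := by
  have hncard (g : SL(n, ℝ)) :
      (shortVectors ((XSpace.mk g).lattice : Set (Fin n → ℝ)) D).ncard =
        {v | ‖intVecMul g v‖ ≤ D}.ncard := by
    rw [XSpace.shortVectors_lattice_mk, Set.ncard_image_of_injective _ (intVecMul_injective g)]
  constructor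
  · rintro ⟨g, rfl, hg⟩
    exact (hncard g).trans hg
  · obtain ⟨g, rfl⟩ := XSpace.mk_surjective x
    exact fun h ↦ ⟨g, rfl, (hncard g).symm.trans h⟩

variable [Nonempty (Fin n)]

lemma successiveNorm_lattice_rightTranslate_le {g : SL(n, ℝ)} {c : ℝ} (hc : 0 ≤ c)
    (hg : ∀ w : Fin n → ℝ, ‖w ᵥ* g.1‖ ≤ c * ‖w‖) (x : XSpace n) :
    successiveNorm r ((rightTranslate n g x).lattice : Set (Fin n → ℝ)) ≤
      c * successiveNorm r (x.lattice : Set (Fin n → ℝ)) :=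
  successiveNorm_le_mul x.finite_shortVectors_lattice x.infinite_lattice
    (rightTranslate n g x).finite_shortVectors_lattice (vecMul_SL_injective g).injOn
    (fun _ ↦ XSpace.vecMul_mem_lattice_rightTranslate.2) hc hg

lemma min_sub_min_le_mul {s t b δ : ℝ} (hb : 0 ≤ b) (hδ : 0 ≤ δ) (h : s ≤ (1 + δ) * t) :
    min s b - min t b ≤ δ * b := by
  have hscale : min s b ≤ (1 + δ) * min t b := by
    rw [mul_min_of_nonneg _ _ (by positivity)]
    exact min_le_min h (le_mul_of_one_le_left hb (by linarith))
  nlinarith [mul_le_mul_of_nonneg_left (min_le_right t b) hδ]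

lemma rightUniformContinuous_min_successiveNorm (r : ℕ) {b : ℝ} (hb : 0 < b) :
    RightUniformContinuous fun x : XSpace n ↦
      min (successiveNorm r (x.lattice : Set (Fin n → ℝ))) b := by
  refine Metric.tendstoUniformly_iff.2 fun ε hε ↦ ?_
  set δ := ε / (2 * b)
  have hδ : 0 < δ := by positivity
  have hδb : δ * b < ε := by simp only [δ]; field_simp; linarith
  have hnear := eventually_norm_vecMul_le (n := n) (lt_add_of_pos_right 1 hδ)
  have hinv : Tendsto (fun g : SL(n, ℝ) ↦ g⁻¹) (𝓝 1) (𝓝 1) := continuous_inv.tendsto' 1 1 inv_one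
  filter_upwards [hnear, hinv.eventually hnear] with g hg hg' x
  have hle := successiveNorm_lattice_rightTranslate_le (r := r) (by positivity) hg x
  have hge := successiveNorm_lattice_rightTranslate_le (r := r) (by positivity) hg'
    (rightTranslate n g x)
  rw [← rightTranslate_mul, mul_inv_cancel, rightTranslate_one] at hge
  rw [Real.dist_eq, abs_lt]
  constructor <;>
    linarith [min_sub_min_le_mul hb.le hδ.le hle, min_sub_min_le_mul hb.le hδ.le hge]

end LatticeSuccessiveNorms

section ShortVectorDistribution

open Filter

variable {n r : ℕ} {D : ℝ} {S : Finset (Fin n)}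

/-- The lattices with at least `r` vectors of norm at most `D`. -/
def shortVectorsAtLeast (n : ℕ) (D : ℝ) (r : ℕ) : Set (XSpace n) :=
  {x | r ≤ (shortVectors (x.lattice : Set (Fin n → ℝ)) D).ncard}

lemma OmegaTilde_eq_diff (n : ℕ) (D : ℝ) (r : ℕ) :
    OmegaTilde n D r = shortVectorsAtLeast n D r \ shortVectorsAtLeast n D (r + 1) := by
  ext x
  simp only [mem_OmegaTilde_iff, shortVectorsAtLeast, Set.mem_sdiff, Set.mem_ofPred_eq]
  omega

lemma shortVectorsAtLeast_eq_preimage [Nonempty (Fin n)] (hD : 0 ≤ D) (r : ℕ) :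
    shortVectorsAtLeast n D r =
      (fun x ↦ min (successiveNorm r (x.lattice : Set (Fin n → ℝ))) (D + 1)) ⁻¹' Set.Iic D := by
  ext x
  simp [shortVectorsAtLeast,
    ← successiveNorm_le_iff x.finite_shortVectors_lattice x.infinite_lattice hD]

lemma measurableSet_shortVectorsAtLeast [Nonempty (Fin n)] (hD : 0 ≤ D) (r : ℕ) :
    MeasurableSet (shortVectorsAtLeast n D r) := by
  rw [shortVectorsAtLeast_eq_preimage hD]
  exact (rightUniformContinuous_min_successiveNorm r (by positivity)).continuous.measurable
    measurableSet_Iic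

lemma measureReal_OmegaTilde [Nonempty (Fin n)] (hD : 0 ≤ D) (r : ℕ) (ν : Measure (XSpace n))
    [IsFiniteMeasure ν] :
    ν.real (OmegaTilde n D r) =
      ν.real (shortVectorsAtLeast n D r) - ν.real (shortVectorsAtLeast n D (r + 1)) := by
  have hsub : shortVectorsAtLeast n D (r + 1) ⊆ shortVectorsAtLeast n D r :=
    fun x hx ↦ (Nat.le_succ r).trans hx
  rw [OmegaTilde_eq_diff, measureReal_sdiff hsub (measurableSet_shortVectorsAtLeast hD _)]

variable [Nontrivial (Fin n)] (μ : Measure (XSpace n)) [IsProbabilityMeasure μ]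
  [SMulInvariantMeasure SL(n, ℝ) (XSpace n) μ]

lemma measure_setOf_exists_norm_eq (hD : 0 < D) :
    μ {x : XSpace n | ∃ w ∈ x.lattice, ‖w‖ = D} = 0 := by
  set f : (Fin n → ℝ) → ENNReal := (Metric.sphere 0 D).indicator 1
  have hsphere : volume (Metric.sphere (0 : Fin n → ℝ) D) = 0 := Measure.addHaar_sphere _ _ _
  have hf : IsRiemannIntegrand f := isRiemannIntegrand_indicator_one
    Metric.isClosed_sphere.measurableSet Metric.isBounded_sphere
    (measure_mono_null Metric.isClosed_sphere.frontier_subset hsphere)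
  have hf0 : f 0 = 0 := by simp [f, hD.ne]
  have hsub : {x : XSpace n | ∃ w ∈ x.lattice, ‖w‖ = D} ⊆ {x | 1 ≤ siegelTransform f x} := by
    rintro x ⟨w, hw, hwD⟩
    refine le_trans ?_ (ENNReal.le_tsum (⟨w, hw⟩ : x.lattice))
    simp [f, hwD]
  refine measure_mono_null hsub (nonpos_iff_eq_zero.1 ?_)
  calc μ {x | 1 ≤ siegelTransform f x}
      ≤ ∫⁻ x, siegelTransform f x ∂μ := by
        simpa using mul_meas_ge_le_lintegral (μ := μ) (measurable_siegelTransform hf.measurable) 1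
    _ ≤ ∫⁻ w, f w := lintegral_siegelTransform_le μ hf hf0
    _ = 0 := by rw [lintegral_indicator_one Metric.isClosed_sphere.measurableSet, hsphere]

variable {η : XSpace n → ℝ}

lemma tendsto_kernel_mk_one_preimage (hη : RightUniformContinuous η) (hS : S.Nonempty)
    (hSc : Sᶜ.Nonempty) {E : Set ℝ} (hE : MeasurableSet E) (hfrontier : μ (η ⁻¹' frontier E) = 0) :
    Tendsto (fun p : Nat.Primes ↦ (primeHeckeSet (p : ℕ) S).kernel (XSpace.mk 1) (η ⁻¹' E))
      primesAtTop (𝓝 (μ (η ⁻¹' E))) := by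
  have hmeas : Measurable η := hη.continuous.measurable
  let law (ν : Measure (XSpace n)) [IsProbabilityMeasure ν] : ProbabilityMeasure ℝ :=
    ⟨ν.map η, Measure.isProbabilityMeasure_map hmeas.aemeasurable⟩
  have hlaw : Tendsto (fun p : Nat.Primes ↦ law ((primeHeckeSet (p : ℕ) S).kernel (XSpace.mk 1)))
      primesAtTop (𝓝 (law μ)) := by
    refine tendsto_iff_forall_lipschitz_integral_tendsto.2 fun f ⟨C, hC⟩ ⟨K, hK⟩ ↦ ?_
    have hbound (x : XSpace n) : |f (η x)| ≤ C + |f 0| := by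
      have := hC (η x) 0
      rw [Real.dist_eq] at this
      linarith [abs_sub_abs_le_abs_sub (f (η x)) (f 0)]
    have hint (ν : Measure (XSpace n)) [IsProbabilityMeasure ν] :
        ∫ t, f t ∂(law ν : Measure ℝ) = ∫ x, f (η x) ∂ν :=
      integral_map hmeas.aemeasurable hK.continuous.aestronglyMeasurable
    simp only [hint]
    exact tendsto_integral_kernel_mk_one μ (hη.comp_uniformContinuous hK.uniformContinuous) hbound
      hS hSc
  have happly (ν : Measure (XSpace n)) [IsProbabilityMeasure ν] {A : Set ℝ}
      (hA : MeasurableSet A) : (law ν : Measure ℝ) A = ν (η ⁻¹' A) := Measure.map_apply hmeas hA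
  simpa only [happly _ hE] using ProbabilityMeasure.tendsto_measure_of_null_frontier_of_tendsto'
    hlaw ((happly μ isClosed_frontier.measurableSet).trans hfrontier)

lemma tendsto_kernel_mk_one_shortVectorsAtLeast (hD : 0 < D) (hS : S.Nonempty) (hSc : Sᶜ.Nonempty)
    (r : ℕ) :
    Tendsto (fun p : Nat.Primes ↦
        ((primeHeckeSet (p : ℕ) S).kernel (XSpace.mk 1)).real (shortVectorsAtLeast n D r))
      primesAtTop (𝓝 (μ.real (shortVectorsAtLeast n D r))) := by
  rw [shortVectorsAtLeast_eq_preimage hD.le]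
  refine (ENNReal.tendsto_toReal (measure_ne_top _ _)).comp (tendsto_kernel_mk_one_preimage μ
    (rightUniformContinuous_min_successiveNorm r (by positivity)) hS hSc measurableSet_Iic
    (measure_mono_null (fun x hx ↦ ?_) (measure_setOf_exists_norm_eq μ hD)))
  have hx' : successiveNorm r (x.lattice : Set (Fin n → ℝ)) = D := by
    have hmin : min (successiveNorm r (x.lattice : Set (Fin n → ℝ))) (D + 1) = D := by
      simpa using hx
    rcases min_choice (successiveNorm r (x.lattice : Set (Fin n → ℝ))) (D + 1) with h | h <;>
      linarith
  rw [← hx'] at hD ⊢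
  exact exists_norm_eq_successiveNorm x.finite_shortVectors_lattice x.infinite_lattice hD

theorem tendsto_kernel_mk_one_OmegaTilde (hD : 0 < D) (hS : S.Nonempty) (hSc : Sᶜ.Nonempty)
    (r : ℕ) :
    Tendsto (fun p : Nat.Primes ↦
        ((primeHeckeSet (p : ℕ) S).kernel (XSpace.mk 1)).real (OmegaTilde n D r))
      primesAtTop (𝓝 (μ.real (OmegaTilde n D r))) := by
  simp only [measureReal_OmegaTilde hD.le]
  exact (tendsto_kernel_mk_one_shortVectorsAtLeast μ hD hS hSc r).sub
    (tendsto_kernel_mk_one_shortVectorsAtLeast μ hD hS hSc (r + 1))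

end ShortVectorDistribution

section ShortSolutions

variable {n : ℕ} {D : ℝ}

/-- The integer vectors of sup-norm at most `D * p ^ (j / n)` whose reduction mod `p` lies
in `H`. -/
def shortSolutions (D : ℝ) (p j : ℕ) (H : AddSubgroup (Fin n → ZMod p)) : Set (Fin n → ℤ) :=
  {a | ‖fun i ↦ (a i : ℝ)‖ ≤ D * (p : ℝ) ^ ((j : ℝ) / n) ∧ intReduction p a ∈ H}

variable {p : ℕ} [Fact p.Prime] {S : Finset (Fin n)}

lemma norm_scaledCast_heckeScale_le_iff {a : Fin n → ℤ} :
    ‖scaledCast (heckeScale p S) a‖ ≤ D ↔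
      ‖fun i ↦ (a i : ℝ)‖ ≤ D * (p : ℝ) ^ ((S.card : ℝ) / n) := by
  have hpos := heckeScale_pos p S
  rw [scaledCast_apply, norm_smul, Real.norm_of_nonneg hpos.le, mul_comm, ← le_div_iff₀ hpos,
    heckeScale, Real.rpow_neg (Nat.cast_nonneg p), div_inv_eq_mul]

lemma ncard_shortSolutions_congruenceSubgroup {x : XSpace n}
    (hx : x ∈ (primeHeckeSet p S).points) :
    (shortSolutions D p S.card (congruenceSubgroup p S x)).ncard =
      (shortVectors (x.lattice : Set (Fin n → ℝ)) D).ncard := by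
  have hscale := (heckeScale_pos p S).ne'
  rw [← Set.ncard_image_of_injective _ (scaledCast_injective hscale)]
  congr 1
  ext w
  rw [lattice_eq_constructionA hx]
  constructor
  · rintro ⟨a, ⟨hnorm, hmem⟩, rfl⟩
    exact ⟨(scaledCast_mem_constructionA_iff hscale).2 hmem,
      norm_scaledCast_heckeScale_le_iff.2 hnorm⟩
  · rintro ⟨⟨a, hmem, rfl⟩, hnorm⟩
    exact ⟨a, ⟨norm_scaledCast_heckeScale_le_iff.1 hnorm, hmem⟩, rfl⟩

lemma bijOn_congruenceSubgroup_OmegaTilde [Nontrivial (Fin n)] (hSc : Sᶜ.Nonempty) (r : ℕ) :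
    Set.BijOn (congruenceSubgroup p S)
      {x ∈ ((primeHeckeSet p S).points : Set (XSpace n)) | x ∈ OmegaTilde n D r}
      {H ∈ congruenceSet p n S.card | (shortSolutions D p S.card H).ncard = r} := by
  have hbij := bijOn_congruenceSubgroup (p := p) hSc
  have hiff {x : XSpace n} (hx : x ∈ (primeHeckeSet p S).points) :
      (shortSolutions D p S.card (congruenceSubgroup p S x)).ncard = r ↔ x ∈ OmegaTilde n D r := by
    rw [ncard_shortSolutions_congruenceSubgroup hx, mem_OmegaTilde_iff]
  refine ⟨fun x hx ↦ ⟨hbij.mapsTo hx.1, (hiff hx.1).2 hx.2⟩, hbij.injOn.mono fun x hx ↦ hx.1, ?_⟩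
  rintro H ⟨hH, hHr⟩
  obtain ⟨x, hx, rfl⟩ := hbij.surjOn hH
  exact ⟨x, ⟨hx, (hiff hx).1 hHr⟩, rfl⟩

lemma proportion_shortSolutions_eq_measureReal_kernel [Nontrivial (Fin n)] (hD : 0 ≤ D)
    (hSc : Sᶜ.Nonempty) (r : ℕ) :
    ({H ∈ congruenceSet p n S.card | (shortSolutions D p S.card H).ncard = r}.ncard : ℝ) /
        (congruenceSet p n S.card).ncard =
      ((primeHeckeSet p S).kernel (XSpace.mk 1)).real (OmegaTilde n D r) := by
  have hbij := bijOn_congruenceSubgroup_OmegaTilde (p := p) (D := D) hSc r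
  have hmeas : MeasurableSet (OmegaTilde n D r) := by
    rw [OmegaTilde_eq_diff]
    exact (measurableSet_shortVectorsAtLeast hD r).diff (measurableSet_shortVectorsAtLeast hD _)
  rw [HeckeSet.measureReal_kernel_mk_one _ hmeas, ← hbij.image_eq,
    ← (bijOn_congruenceSubgroup hSc).image_eq, hbij.injOn.ncard_image,
    (bijOn_congruenceSubgroup hSc).injOn.ncard_image]

end ShortSolutions

section Main

open Filter

lemma map_natCast_primesAtTop :
    map (fun p : Nat.Primes ↦ (p : ℕ)) primesAtTop = atTop ⊓ 𝓟 {p : ℕ | p.Prime} := by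
  rw [primesAtTop, map_comap]
  congr 2
  exact Subtype.range_coe

lemma smulInvariantMeasure_of_map_rightTranslate {n : ℕ} {μ : Measure (XSpace n)}
    (hinv : ∀ g, Measure.map (rightTranslate n g) μ = μ) :
    SMulInvariantMeasure SL(n, ℝ) (XSpace n) μ where
  measure_preimage_smul g A hA := by
    conv_rhs => rw [← hinv g⁻¹, Measure.map_apply (measurable_rightTranslate _) hA]
    rfl

theorem prob_system_has_r_short_solutions_prime_general (n j r : ℕ) (hj1 : 1 ≤ j) (hj : j < n)
    (D : ℝ) (hD : 0 < D) (μ : Measure (XSpace n)) [IsProbabilityMeasure μ]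
    (hinv : ∀ g, Measure.map (rightTranslate n g) μ = μ) :
    Tendsto (fun p : ℕ ↦
      ({H ∈ congruenceSet p n j |
          {x : Fin n → ℤ | ‖fun i ↦ (x i : ℝ)‖ ≤ D * (p : ℝ) ^ ((j : ℝ) / n) ∧
            (fun i ↦ (x i : ZMod p)) ∈ H}.ncard = r}.ncard : ℝ) / (congruenceSet p n j).ncard)
      (atTop ⊓ 𝓟 {p : ℕ | p.Prime}) (𝓝 (μ (OmegaTilde n D r)).toReal) := by
  have := smulInvariantMeasure_of_map_rightTranslate hinv
  have : Nontrivial (Fin n) := Fin.nontrivial_iff_two_le.2 (by omega)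
  obtain ⟨S, -, rfl⟩ := Finset.exists_subset_card_eq
    (s := (Finset.univ : Finset (Fin n))) (n := j) (by simpa using hj.le)
  have hS : S.Nonempty := Finset.card_pos.1 hj1
  have hSc : Sᶜ.Nonempty := Finset.card_pos.1 (by rw [Finset.card_compl, Fintype.card_fin]; omega)
  rw [← map_natCast_primesAtTop, tendsto_map'_iff]
  exact (tendsto_kernel_mk_one_OmegaTilde μ hD hS hSc r).congr fun p ↦
    (proportion_shortSolutions_eq_measureReal_kernel hD.le hSc r).symm

end Main

open Filter in
/-- Let `n ≥ 2`, `1 ≤ j ≤ n−1`, `0 < D < 1`, `r ≥ 1`, and let `μ` be the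
right-invariant Borel probability measure on `X = SL_n(ℤ)\SL_n(ℝ)`. As `p → ∞` along
primes, the proportion of `H ∈ H_{p,j}(n)` such that
`#{x ∈ ℤⁿ : ‖x‖∞ ≤ D·p^{j/n}, (x mod p) ∈ H} = r` tends to `c_{n,r} = μ(Ω̃_{n,r})`. -/
theorem prob_system_has_r_short_solutions_prime (n j r : ℕ)
    (hn : 2 ≤ n) (hj1 : 1 ≤ j) (hj : j ≤ n - 1) (hr : 1 ≤ r)
    (D : ℝ) (hD0 : 0 < D) (hD1 : D < 1)
    (μ : Measure (XSpace n)) (hprob : IsProbabilityMeasure μ)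
    (hinv : ∀ g, Measure.map (rightTranslate n g) μ = μ) :
    Tendsto (fun p : ℕ =>
      (Set.ncard {H ∈ congruenceSet p n j |
          Set.ncard {x : Fin n → ℤ |
            ‖(fun i => (x i : ℝ))‖ ≤ D * (p : ℝ) ^ ((j : ℝ) / (n : ℝ)) ∧
            (fun i => ((x i : ZMod p))) ∈ H} = r} : ℝ) /
        (Set.ncard (congruenceSet p n j) : ℝ))
      (atTop ⊓ Filter.principal {p : ℕ | p.Prime})
      (nhds ((μ (OmegaTilde n D r)).toReal)) := by
  exact prob_system_has_r_short_solutions_prime_general n j r hj1 (by omega) D hD0 μ hinv
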